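/- arXiv:2504.13430 — 10 statements merged into one kernel-verified Lean document; each statement's English description precedes it below -/
import Mathlib

section
/- (Fundamental Lemma of Nashian Allocation.) Suppose the feasible allocation x satisfies the Nashian Greedy condition and the valuations have unit monopolist utilities. Let x̃ be any feasible allocation and let Ũ a t = ∫_0^t v a s · x̃ a s ds. Then for every t ∈ [0,T], (1/n) ∑_a Ũ a t / U a t ≤ log(n+1). -/
/-!
Write `p s = max_b v b s / U b s`.  The greedy condition says that `v a s / U a s = p s` for every
agent `a` who receives something at time `s`, so the allocation `x` maximises
`∑ a, v a s * y a / U a s` over all feasible instantaneous allocations `y`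
(`sum_greedy_le`).  As `U a` is nondecreasing,

  `∑ a, Ut a t / U a t ≤ ∫₀ᵗ ∑ a, v a s * xt a s / U a s ds ≤ ∫₀ᵗ ∑ a, v a s * x a s / U a s ds`.

Since `v a * x a` is the a.e. derivative of the absolutely continuous function `U a`, the last
integral is `∑ a, (log (U a t) - log (1 / n)) = ∑ a, log (n * U a t)` (`integral_div_primitive`).
Finally `U a t ≤ 1 / n + 1` by the unit monopolist utilities, so each of the `n` summands is at
most `log (n + 1)`.
-/

open MeasureTheory Real

lemma log_sub_log_le {c p q : ℝ} (hc : 0 < c) (hp : c ≤ p) (hq : c ≤ q) :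
    log p - log q ≤ c⁻¹ * |p - q| := by
  have hp0 : 0 < p := hc.trans_le hp
  have hq0 : 0 < q := hc.trans_le hq
  rw [← log_div hp0.ne' hq0.ne']
  calc log (p / q) ≤ p / q - 1 := log_le_sub_one_of_pos (by positivity)
    _ = q⁻¹ * (p - q) := by field_simp
    _ ≤ q⁻¹ * |p - q| := by gcongr; exact le_abs_self _
    _ ≤ c⁻¹ * |p - q| := by gcongr

lemma dist_log_le {c p q : ℝ} (hc : 0 < c) (hp : c ≤ p) (hq : c ≤ q) :
    dist (log p) (log q) ≤ c⁻¹ * dist p q := by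
  rw [Real.dist_eq, Real.dist_eq, abs_le]
  have h1 := log_sub_log_le hc hp hq
  have h2 := log_sub_log_le hc hq hp
  rw [abs_sub_comm] at h2
  constructor <;> linarith

/-- The logarithm is Lipschitz on `[c, ∞)`, so it preserves absolute continuity there. -/
lemma absolutelyContinuousOnInterval_log {F : ℝ → ℝ} {a b c : ℝ} (hc : 0 < c)
    (hF : AbsolutelyContinuousOnInterval F a b) (hFc : ∀ s ∈ Set.uIcc a b, c ≤ F s) :
    AbsolutelyContinuousOnInterval (fun s => log (F s)) a b := by
  rw [absolutelyContinuousOnInterval_iff] at hF ⊢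
  intro ε hε
  obtain ⟨δ, hδ, h⟩ := hF (c * ε) (by positivity)
  refine ⟨δ, hδ, fun E hE hEδ => ?_⟩
  have hmem := hE.1
  calc ∑ i ∈ Finset.range E.1, dist (log (F (E.2 i).1)) (log (F (E.2 i).2))
      ≤ ∑ i ∈ Finset.range E.1, c⁻¹ * dist (F (E.2 i).1) (F (E.2 i).2) :=
        Finset.sum_le_sum fun i hi =>
          dist_log_le hc (hFc _ (hmem i hi).1) (hFc _ (hmem i hi).2)
    _ = c⁻¹ * ∑ i ∈ Finset.range E.1, dist (F (E.2 i).1) (F (E.2 i).2) := by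
        rw [Finset.mul_sum]
    _ < c⁻¹ * (c * ε) := by
        have := h E hE hEδ
        gcongr
    _ = ε := by field_simp

/-- The logarithmic derivative of a primitive integrates to a difference of logarithms; `f` is
merely integrable, so the derivative exists only almost everywhere. -/
lemma integral_div_primitive {f F : ℝ → ℝ} {c t : ℝ} (hc : 0 < c)
    (hf : IntervalIntegrable f volume 0 t)
    (hF : ∀ s, F s = c + ∫ r in (0:ℝ)..s, f r) (hFc : ∀ s ∈ Set.uIcc 0 t, c ≤ F s) :
    ∫ s in (0:ℝ)..t, f s / F s = log (F t) - log c := by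
  have hFeq : F = fun s => c + ∫ r in (0:ℝ)..s, f r := funext hF
  have hac : AbsolutelyContinuousOnInterval F 0 t := by
    have h1 : AbsolutelyContinuousOnInterval (fun _ : ℝ => c) 0 t :=
      (contDiff_const.contDiffOn).absolutelyContinuousOnInterval
    rw [hFeq]
    exact h1.add (hf.absolutelyContinuousOnInterval_intervalIntegral (by simp))
  have h := (absolutelyContinuousOnInterval_log hc hac hFc).integral_deriv_eq_sub
  have hF0 : F 0 = c := by simp [hF]
  rw [hF0] at h
  rw [← h]
  apply intervalIntegral.integral_congr_ae
  filter_upwards [hf.ae_hasDerivAt_integral] with s hs hmem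
  have hs' := Set.uIoc_subset_uIcc hmem
  have hd : HasDerivAt F (f s) s := by
    rw [hFeq]
    exact (hs hs' 0 (by simp)).const_add c
  exact (hd.log (hc.trans_le (hFc s hs')).ne').deriv.symm

/-- At a fixed time, an allocation `x` supported on the agents with maximal ratio `v / U` beats
every feasible allocation `y` for the weights `v / U`. -/
lemma sum_greedy_le {n : ℕ} {v U x y : Fin n → ℝ} (hv : ∀ a, 0 ≤ v a) (hU : ∀ a, 0 < U a)
    (hx : ∀ a, 0 ≤ x a) (hx1 : ∑ a, x a = 1)
    (hg : ∀ a b, 0 < x a → v a * U b ≥ v b * U a)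
    (hy : ∀ a, 0 ≤ y a) (hy1 : ∑ a, y a ≤ 1) :
    ∑ a, v a * y a / U a ≤ ∑ a, v a * x a / U a := by
  have key : ∀ b, v b / U b ≤ ∑ a, v a * x a / U a := fun b =>
    calc v b / U b = ∑ a, x a * (v b / U b) := by rw [← Finset.sum_mul, hx1, one_mul]
      _ ≤ ∑ a, v a * x a / U a := by
        refine Finset.sum_le_sum fun a _ => ?_
        rcases (hx a).eq_or_lt with h0 | h0
        · simp [← h0]
        · have : v b / U b ≤ v a / U a := by
            rw [div_le_div_iff₀ (hU b) (hU a)]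
            exact hg a b h0
          calc x a * (v b / U b) ≤ x a * (v a / U a) := by gcongr
            _ = v a * x a / U a := by ring
  have hS : 0 ≤ ∑ a, v a * x a / U a :=
    Finset.sum_nonneg fun a _ => div_nonneg (mul_nonneg (hv a) (hx a)) (hU a).le
  calc ∑ a, v a * y a / U a = ∑ b, y b * (v b / U b) :=
        Finset.sum_congr rfl fun a _ => by ring
    _ ≤ ∑ b, y b * ∑ a, v a * x a / U a :=
        Finset.sum_le_sum fun b _ => mul_le_mul_of_nonneg_left (key b) (hy b)
    _ = (∑ b, y b) * ∑ a, v a * x a / U a := by rw [Finset.sum_mul]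
    _ ≤ 1 * ∑ a, v a * x a / U a := by gcongr
    _ = _ := one_mul _

lemma le_one_of_feasible {n : ℕ} {y : Fin n → ℝ} (hy : ∀ a, 0 ≤ y a) (hy1 : ∑ a, y a ≤ 1)
    (a : Fin n) : y a ≤ 1 :=
  (Finset.single_le_sum (fun b _ => hy b) (Finset.mem_univ a)).trans hy1

lemma integrableOn_mul_of_feasible {n : ℕ} {T : ℝ} {v y : Fin n → ℝ → ℝ}
    (hv_int : ∀ a, IntegrableOn (v a) (Set.Icc (0:ℝ) T))
    (hy_meas : ∀ a, Measurable (y a))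
    (hy : ∀ᵐ s ∂(volume.restrict (Set.Icc (0:ℝ) T)), (∀ a, 0 ≤ y a s) ∧ ∑ a, y a s ≤ 1)
    (a : Fin n) : IntegrableOn (fun s => v a s * y a s) (Set.Icc (0:ℝ) T) := by
  refine Integrable.mono (hv_int a)
    ((hv_int a).aestronglyMeasurable.mul (hy_meas a).aestronglyMeasurable) ?_
  filter_upwards [hy] with s hs
  rw [norm_mul]
  refine mul_le_of_le_one_right (norm_nonneg _) ?_
  rw [Real.norm_of_nonneg (hs.1 a)]
  exact le_one_of_feasible hs.1 hs.2 a

theorem stmt_1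
    (n : ℕ) (hn : 1 ≤ n) (T : ℝ) (hT : 0 < T)
    (v : Fin n → ℝ → ℝ)
    (hv_meas : ∀ a, Measurable (v a))
    (hv_nonneg : ∀ a, ∀ᵐ s ∂(volume.restrict (Set.Icc (0:ℝ) T)), 0 ≤ v a s)
    (hv_int : ∀ a, IntegrableOn (v a) (Set.Icc (0:ℝ) T))
    (hv_unit : ∀ a, ∫ s in (0:ℝ)..T, v a s = 1)
    (x : Fin n → ℝ → ℝ)
    (hx_meas : ∀ a, Measurable (x a))
    (hx_feas : ∀ᵐ s ∂(volume.restrict (Set.Icc (0:ℝ) T)),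
      (∀ a, 0 ≤ x a s) ∧ ∑ a, x a s ≤ 1)
    (U : Fin n → ℝ → ℝ)
    (hU : ∀ a t, U a t = 1 / (n : ℝ) + ∫ s in (0:ℝ)..t, v a s * x a s)
    (hgreedy : ∀ᵐ s ∂(volume.restrict (Set.Icc (0:ℝ) T)),
      (∑ a, x a s = 1) ∧
      ∀ a b, 0 < x a s → v a s * U b s ≥ v b s * U a s)
    (xt : Fin n → ℝ → ℝ)
    (hxt_meas : ∀ a, Measurable (xt a))
    (hxt_feas : ∀ᵐ s ∂(volume.restrict (Set.Icc (0:ℝ) T)),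
      (∀ a, 0 ≤ xt a s) ∧ ∑ a, xt a s ≤ 1)
    (Ut : Fin n → ℝ → ℝ)
    (hUt : ∀ a t, Ut a t = ∫ s in (0:ℝ)..t, v a s * xt a s) :
    ∀ t ∈ Set.Icc (0:ℝ) T,
      (1 / (n : ℝ)) * ∑ a, Ut a t / U a t ≤ Real.log ((n : ℝ) + 1) := by
  intro t ht
  have hn0 : (0:ℝ) < n := by exact_mod_cast hn
  have hc : (0:ℝ) < 1 / (n:ℝ) := by positivity
  have hvn : ∀ᵐ s ∂(volume.restrict (Set.Icc (0:ℝ) T)), ∀ a, 0 ≤ v a s := ae_all_iff.2 hv_nonneg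
  have hii : ∀ {f : ℝ → ℝ}, IntegrableOn f (Set.Icc 0 T) → ∀ {r s : ℝ}, 0 ≤ r → r ≤ s → s ≤ T →
      IntervalIntegrable f volume r s := fun hf r s hr hrs hs =>
    (intervalIntegrable_iff_integrableOn_Icc_of_le hrs).2
      (hf.mono_set (Set.Icc_subset_Icc hr hs))
  have hvx := integrableOn_mul_of_feasible hv_int hx_meas hx_feas
  have hvxt := integrableOn_mul_of_feasible hv_int hxt_meas hxt_feas
  have hres : ∀ {r s : ℝ}, 0 ≤ r → s ≤ T →
      ae (volume.restrict (Set.Icc r s)) ≤ ae (volume.restrict (Set.Icc (0:ℝ) T)) :=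
    fun hr hs => ae_mono (Measure.restrict_mono (Set.Icc_subset_Icc hr hs) le_rfl)
  have hmono : ∀ a {r s : ℝ}, 0 ≤ r → r ≤ s → s ≤ T → U a r ≤ U a s := by
    intro a r s hr hrs hs
    rw [hU, hU, ← intervalIntegral.integral_add_adjacent_intervals
      (hii (hvx a) le_rfl hr (hrs.trans hs)) (hii (hvx a) hr hrs hs)]
    have : 0 ≤ ∫ q in r..s, v a q * x a q := by
      refine intervalIntegral.integral_nonneg_of_ae_restrict hrs ?_
      filter_upwards [hres hr hs hvn, hres hr hs hx_feas] with q h1 h2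
      exact mul_nonneg (h1 a) (h2.1 a)
    linarith
  have hUc : ∀ a, ∀ s ∈ Set.Icc 0 T, 1 / (n:ℝ) ≤ U a s := by
    intro a s hs
    have h := hmono a le_rfl hs.1 hs.2
    rwa [hU a 0, intervalIntegral.integral_same, add_zero] at h
  have hUle : ∀ a, U a t ≤ 1 / (n:ℝ) + 1 := by
    intro a
    refine (hmono a ht.1 ht.2 le_rfl).trans ?_
    rw [hU, ← hv_unit a]
    gcongr
    refine intervalIntegral.integral_mono_ae_restrict hT.le (hii (hvx a) le_rfl hT.le le_rfl)
      (hii (hv_int a) le_rfl hT.le le_rfl) ?_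
    filter_upwards [hvn, hx_feas] with s h1 h2
    exact mul_le_of_le_one_right (h1 a) (le_one_of_feasible h2.1 h2.2 a)
  have hsub : Set.uIcc 0 t ⊆ Set.Icc 0 T := by
    rw [Set.uIcc_of_le ht.1]
    exact Set.Icc_subset_Icc le_rfl ht.2
  have hinv : ∀ a, ContinuousOn (fun s => (U a s)⁻¹) (Set.uIcc 0 t) := by
    intro a
    refine ContinuousOn.inv₀ ?_ fun s hs => (hc.trans_le (hUc a s (hsub hs))).ne'
    rw [funext (hU a)]
    exact continuousOn_const.add (intervalIntegral.continuousOn_primitive_interval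
      ((hvx a).mono_set hsub))
  have hdiv : ∀ a {f : ℝ → ℝ}, IntegrableOn f (Set.Icc 0 T) →
      IntervalIntegrable (fun s => f s / U a s) volume 0 t := by
    intro a f hf
    simp only [div_eq_mul_inv]
    exact (hii hf le_rfl ht.1 ht.2).mul_continuousOn (hinv a)
  have h0 := hres (le_refl 0) ht.2
  have step1 : ∀ a, Ut a t / U a t ≤ ∫ s in (0:ℝ)..t, v a s * xt a s / U a s := by
    intro a
    rw [hUt, ← intervalIntegral.integral_div]
    refine intervalIntegral.integral_mono_ae_restrict ht.1
      ((hii (hvxt a) le_rfl ht.1 ht.2).div_const _) (hdiv a (hvxt a)) ?_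
    filter_upwards [h0 hvn, h0 hxt_feas, ae_restrict_mem measurableSet_Icc] with s h1 h2 hs
    have hs0 := hc.trans_le (hUc a s ⟨hs.1, hs.2.trans ht.2⟩)
    exact div_le_div_of_nonneg_left (mul_nonneg (h1 a) (h2.1 a)) hs0 (hmono a hs.1 hs.2 ht.2)
  have step2 : ∑ a, ∫ s in (0:ℝ)..t, v a s * xt a s / U a s
      ≤ ∑ a, ∫ s in (0:ℝ)..t, v a s * x a s / U a s := by
    rw [← intervalIntegral.integral_finsetSum fun a _ => hdiv a (hvxt a),
      ← intervalIntegral.integral_finsetSum fun a _ => hdiv a (hvx a)]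
    refine intervalIntegral.integral_mono_ae_restrict ht.1
      (by simpa only [Finset.sum_fn] using
        IntervalIntegrable.sum Finset.univ fun a _ => hdiv a (hvxt a))
      (by simpa only [Finset.sum_fn] using
        IntervalIntegrable.sum Finset.univ fun a _ => hdiv a (hvx a)) ?_
    filter_upwards [h0 hvn, h0 hx_feas, h0 hxt_feas, h0 hgreedy,
      ae_restrict_mem measurableSet_Icc] with s h1 h2 h3 h4 hs
    exact sum_greedy_le h1 (fun a => hc.trans_le (hUc a s ⟨hs.1, hs.2.trans ht.2⟩)) h2.1 h4.1 h4.2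
      h3.1 h3.2
  have step3 : ∀ a, ∫ s in (0:ℝ)..t, v a s * x a s / U a s ≤ log ((n:ℝ) + 1) := by
    intro a
    have hpos : 0 < U a t := hc.trans_le (hUc a t ht)
    rw [integral_div_primitive hc (hii (hvx a) le_rfl ht.1 ht.2) (hU a)
      (fun s hs => hUc a s (hsub hs)), ← log_div hpos.ne' hc.ne']
    refine log_le_log (by positivity) ?_
    rw [div_le_iff₀ hc]
    refine (hUle a).trans (le_of_eq ?_)
    field_simp
    ring
  calc (1 / (n : ℝ)) * ∑ a, Ut a t / U a t
      ≤ (1 / (n : ℝ)) * ∑ _a : Fin n, log ((n:ℝ) + 1) := by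
        refine mul_le_mul_of_nonneg_left ?_ hc.le
        exact (Finset.sum_le_sum fun a _ => step1 a).trans
          (step2.trans (Finset.sum_le_sum fun a _ => step3 a))
    _ = log ((n:ℝ) + 1) := by
        simp only [Finset.sum_const, Finset.card_univ, Fintype.card_fin, nsmul_eq_mul]
        field_simp
end

section
/- Suppose the feasible allocation x satisfies the Nashian Greedy condition and the valuations have unit monopolist utilities. Let p ∈ [−1, 1] with p ≠ 0, and let x* be any feasible allocation with U*_a = ∫_0^T v a s · x*_a s ds > 0 for every agent a. Then ((1/n) ∑_a (U a T)^p)^{1/p} ≥ ((1/n) ∑_a (U*_a)^p)^{1/p} / (2 · (n+1)^{|p|} · log(n+1)). -/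
open MeasureTheory Real

/-!
At almost every time the greedy rule gives the good to agents maximizing `v a s / U a s`, so the
integrand `λ(s) = ∑ a, v a s * x a s / U a s` of the growth of `∑ a, log (U a)` equals that maximum.
For every feasible `x*`, since `U a` is nondecreasing,
`∑ a, v a s * x* a s / U a T ≤ ∑ a, x* a s * (v a s / U a s) ≤ λ(s)`.
Integrating over `[0, T]`, with `U a 0 = 1 / n` and `U a T ≤ 1 + 1 / n`,
`∑ a, U* a / U a T ≤ ∑ a, log (n * U a T) ≤ n * log (n + 1)`
(`sum_ratio_le`; the logarithmic integral is bounded in `integral_div_le_log`).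

For the passage to `p`-means, write `r a = U* a / U a T` and `w a = (U a T) ^ p / ∑ b, (U b T) ^ p`.
The quotient of the two `p`-means is the `w`-weighted `p`-mean of `r`, which is at most the weighted
arithmetic mean because `p ≤ 1` (`rpow_mean_le_arith_mean`). All `U a T` lie in `[1 / n, 1 + 1 / n]`,
so `w a ≤ (n + 1) ^ |p| / n`, and the quotient is at most `(n + 1) ^ |p| * log (n + 1)`
(`pmean_mul_le`).
-/

/-- Weighted power mean inequality between the exponents `p ≤ 1`, `p ≠ 0`, and `1`. -/
lemma rpow_mean_le_arith_mean {ι : Type*} (s : Finset ι) (w z : ι → ℝ)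
    (hw : ∀ i ∈ s, 0 < w i) (hw' : ∑ i ∈ s, w i = 1) (hz : ∀ i ∈ s, 0 < z i)
    {p : ℝ} (hp0 : p ≠ 0) (hp1 : p ≤ 1) :
    (∑ i ∈ s, w i * z i ^ p) ^ (1 / p) ≤ ∑ i ∈ s, w i * z i := by
  rcases lt_or_gt_of_ne hp0 with hneg | hpos
  -- For `p < 0` the weighted geometric mean separates the two sides.
  · have h1 := Real.geom_mean_le_arith_mean_weighted s w z (fun i hi => (hw i hi).le) hw'
      (fun i hi => (hz i hi).le)
    have h2 := Real.geom_mean_le_arith_mean_weighted s w (fun i => z i ^ p)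
      (fun i hi => (hw i hi).le) hw' (fun i hi => (rpow_pos_of_pos (hz i hi) _).le)
    have h3 : ∏ i ∈ s, (z i ^ p) ^ w i = (∏ i ∈ s, z i ^ w i) ^ p := by
      rw [← Real.finsetProd_rpow _ _ (fun i hi => (rpow_pos_of_pos (hz i hi) _).le)]
      refine Finset.prod_congr rfl fun i hi => ?_
      rw [← rpow_mul (hz i hi).le, ← rpow_mul (hz i hi).le, mul_comm]
    have hG : 0 < ∏ i ∈ s, z i ^ w i := Finset.prod_pos fun i hi => rpow_pos_of_pos (hz i hi) _
    refine le_trans ?_ h1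
    rw [h3] at h2
    calc (∑ i ∈ s, w i * z i ^ p) ^ (1 / p)
        ≤ ((∏ i ∈ s, z i ^ w i) ^ p) ^ (1 / p) :=
          rpow_le_rpow_of_nonpos (rpow_pos_of_pos hG _) h2 (one_div_neg.2 hneg).le
      _ = ∏ i ∈ s, z i ^ w i := by
          rw [← rpow_mul hG.le, mul_one_div_cancel hp0, rpow_one]
  · have h := Real.rpow_arith_mean_le_arith_mean_rpow s w (fun i => z i ^ p)
      (fun i hi => (hw i hi).le) hw' (fun i hi => (rpow_pos_of_pos (hz i hi) _).le)
      (p := 1 / p) ((one_le_div hpos).2 hp1)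
    refine h.trans (le_of_eq (Finset.sum_congr rfl fun i hi => ?_))
    rw [← rpow_mul (hz i hi).le, mul_one_div_cancel hp0, rpow_one]

/-- If the powers `u a ^ p` differ by a factor of at most `M` and the average of `r` is at most `L`,
then multiplying `u` pointwise by `r` increases its `p`-mean by a factor of at most `M * L`. -/
lemma pmean_mul_le {n : ℕ} (hn : 1 ≤ n) (u r : Fin n → ℝ) (hu : ∀ a, 0 < u a)
    (hr : ∀ a, 0 < r a) {p M L : ℝ} (hp0 : p ≠ 0) (hp1 : p ≤ 1)
    (hM : ∀ a b, u a ^ p ≤ M * u b ^ p) (hL : ∑ a, r a ≤ n * L) :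
    ((1 / (n : ℝ)) * ∑ a, (u a * r a) ^ p) ^ (1 / p) ≤
      M * L * ((1 / (n : ℝ)) * ∑ a, u a ^ p) ^ (1 / p) := by
  have hn' : (0 : ℝ) < n := by exact_mod_cast hn
  have : Nonempty (Fin n) := ⟨⟨0, hn⟩⟩
  have hup : ∀ a, 0 < u a ^ p := fun a => rpow_pos_of_pos (hu a) _
  have hS : 0 < ∑ a, u a ^ p := Finset.sum_pos (fun a _ => hup a) Finset.univ_nonempty
  set S := ∑ a, u a ^ p with hSdef
  have hwle : ∀ a, u a ^ p / S ≤ M / n := by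
    intro a
    rw [div_le_div_iff₀ hS hn', hSdef, Finset.mul_sum]
    have := Finset.sum_le_sum (fun b (_ : b ∈ Finset.univ) => hM a b)
    simpa [mul_comm] using this
  have hM0 : 0 ≤ M / n := le_trans (div_pos (hup ⟨0, hn⟩) hS).le (hwle ⟨0, hn⟩)
  have hmean := rpow_mean_le_arith_mean Finset.univ (fun a => u a ^ p / S) r
    (fun a _ => div_pos (hup a) hS) (by rw [← Finset.sum_div]; exact div_self hS.ne')
    (fun a _ => hr a) hp0 hp1
  have hbound : ∑ a, u a ^ p / S * r a ≤ M * L := by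
    calc ∑ a, u a ^ p / S * r a ≤ ∑ a, M / n * r a :=
          Finset.sum_le_sum fun a _ => mul_le_mul_of_nonneg_right (hwle a) (hr a).le
      _ = M / n * ∑ a, r a := by rw [Finset.mul_sum]
      _ ≤ M / n * (n * L) := mul_le_mul_of_nonneg_left hL hM0
      _ = M * L := by field_simp
  have hsplit : (1 / (n : ℝ)) * ∑ a, (u a * r a) ^ p
      = (∑ a, u a ^ p / S * r a ^ p) * ((1 / (n : ℝ)) * S) := by
    rw [mul_left_comm, Finset.sum_mul]
    congr 1
    refine Finset.sum_congr rfl fun a _ => ?_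
    rw [mul_rpow (hu a).le (hr a).le]
    field_simp
  rw [hsplit, mul_rpow (Finset.sum_nonneg fun a _ => mul_nonneg (div_pos (hup a) hS).le
    (rpow_pos_of_pos (hr a) _).le) (by positivity)]
  exact mul_le_mul_of_nonneg_right (hmean.trans hbound) (by positivity)

/-- Logarithmic integration of a primitive `F` of a nonnegative function `f`. Only the inequality is
needed, and it follows from Lebesgue's theorem for the monotone function `log ∘ F`. -/
lemma integral_div_le_log {f F : ℝ → ℝ} {T c : ℝ} (hT : 0 < T) (hc : 0 < c)
    (hf : IntervalIntegrable f volume 0 T)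
    (hf0 : ∀ᵐ s ∂(volume.restrict (Set.Icc (0:ℝ) T)), 0 ≤ f s)
    (hF : ∀ t, F t = c + ∫ s in (0:ℝ)..t, f s) :
    MonotoneOn F (Set.Icc 0 T) ∧ (∀ t ∈ Set.Icc 0 T, c ≤ F t) ∧
      IntervalIntegrable (fun s => f s / F s) volume 0 T ∧
      ∫ s in (0:ℝ)..T, f s / F s ≤ log (F T) - log c := by
  have huIcc : Set.uIcc 0 T = Set.Icc 0 T := Set.uIcc_of_le hT.le
  have hmono : MonotoneOn F (Set.Icc 0 T) := by
    intro a ha b hb hab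
    have hsub : ∀ y ∈ Set.Icc 0 T, IntervalIntegrable f volume 0 y := fun y hy =>
      hf.mono_set (by rw [huIcc, Set.uIcc_of_le hy.1]; exact Set.Icc_subset_Icc_right hy.2)
    have h := intervalIntegral.integral_interval_sub_left (hsub b hb) (hsub a ha)
    have h0 : 0 ≤ ∫ s in a..b, f s :=
      intervalIntegral.integral_nonneg_of_ae_restrict hab
        (ae_restrict_of_ae_restrict_of_subset (Set.Icc_subset_Icc ha.1 hb.2) hf0)
    rw [hF, hF]
    linarith
  have hF0 : F 0 = c := by simp [hF]
  have hge : ∀ t ∈ Set.Icc 0 T, c ≤ F t := fun t ht =>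
    hF0 ▸ hmono (Set.left_mem_Icc.2 hT.le) ht ht.1
  have hlog : MonotoneOn (fun t => log (F t)) (Set.uIcc 0 T) := by
    rw [huIcc]
    intro a ha b hb hab
    exact log_le_log (hc.trans_le (hge a ha)) (hmono ha hb hab)
  have hderiv : ∀ᵐ s, s ∈ Set.uIcc 0 T → deriv (fun t => log (F t)) s = f s / F s := by
    filter_upwards [hf.ae_hasDerivAt_integral] with s hs hmem
    have h1 := (hs hmem 0 Set.left_mem_uIcc).const_add c
    have h2 : HasDerivAt F (f s) s := by
      have : F = fun t => c + ∫ s in (0:ℝ)..t, f s := funext hF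
      rw [this]; exact h1
    exact (h2.log (hc.trans_le (hge s (huIcc ▸ hmem))).ne').deriv
  have hderiv' : ∀ᵐ s, s ∈ Set.uIoc 0 T → deriv (fun t => log (F t)) s = f s / F s := by
    filter_upwards [hderiv] with s hs hmem using hs (Set.uIoc_subset_uIcc hmem)
  refine ⟨hmono, hge, ?_, ?_⟩
  · refine hlog.intervalIntegrable_deriv.congr_ae ?_
    exact (ae_restrict_iff' measurableSet_uIoc).2 hderiv'
  · rw [← intervalIntegral.integral_congr_ae hderiv', ← hF0]
    have h := hlog.intervalIntegral_deriv_mem_uIcc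
    have h0T := hlog (by simp) (by simp) hT.le
    simp only at h0T
    rw [Set.uIcc_of_le (by linarith)] at h
    exact h.2

/-- For a feasible allocation `y`, the utility rate `v a * y a` is integrable and lies between `0` and
`v a` almost everywhere. -/
lemma feasible_mul {n : ℕ} {T : ℝ} (v : Fin n → ℝ → ℝ)
    (hv_nonneg : ∀ a, ∀ᵐ s ∂(volume.restrict (Set.Icc (0:ℝ) T)), 0 ≤ v a s)
    (hv_int : ∀ a, IntegrableOn (v a) (Set.Icc (0:ℝ) T))
    (y : Fin n → ℝ → ℝ) (hy_meas : ∀ a, Measurable (y a))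
    (hy_feas : ∀ᵐ s ∂(volume.restrict (Set.Icc (0:ℝ) T)),
      (∀ a, 0 ≤ y a s) ∧ ∑ a, y a s ≤ 1) (a : Fin n) :
    IntegrableOn (fun s => v a s * y a s) (Set.Icc (0:ℝ) T) ∧
      ∀ᵐ s ∂(volume.restrict (Set.Icc (0:ℝ) T)),
        0 ≤ v a s * y a s ∧ v a s * y a s ≤ v a s := by
  have hae : ∀ᵐ s ∂(volume.restrict (Set.Icc (0:ℝ) T)),
      0 ≤ v a s * y a s ∧ v a s * y a s ≤ v a s := by
    filter_upwards [hv_nonneg a, hy_feas] with s hv hy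
    have h1 : y a s ≤ 1 :=
      (Finset.single_le_sum (fun b _ => hy.1 b) (Finset.mem_univ a)).trans hy.2
    exact ⟨mul_nonneg hv (hy.1 a), mul_le_of_le_one_right hv h1⟩
  refine ⟨?_, hae⟩
  refine Integrable.mono (hv_int a)
    ((hv_int a).aestronglyMeasurable.mul (hy_meas a).aestronglyMeasurable) ?_
  filter_upwards [hae] with s hs
  rw [Real.norm_of_nonneg hs.1, Real.norm_of_nonneg (hs.1.trans hs.2)]
  exact hs.2

/-- At a single time: if `y` is a probability vector supported on the maximizers of `w a / u a`,
then `∑ a, w a * y a / u a` is an upper bound for all these ratios. -/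
lemma ratio_le_of_greedy {n : ℕ} (w u y : Fin n → ℝ) (hu : ∀ a, 0 < u a) (hy : ∀ a, 0 ≤ y a)
    (hsum : ∑ a, y a = 1) (hg : ∀ a b, 0 < y a → w a * u b ≥ w b * u a) (b : Fin n) :
    w b / u b ≤ ∑ a, w a * y a / u a := by
  calc w b / u b = ∑ a, y a * (w b / u b) := by rw [← Finset.sum_mul, hsum, one_mul]
    _ ≤ ∑ a, w a * y a / u a := by
      refine Finset.sum_le_sum fun a _ => ?_
      rcases (hy a).eq_or_lt with h | h
      · simp [← h]
      · have h1 : w b / u b ≤ w a / u a := (div_le_div_iff₀ (hu b) (hu a)).2 (hg a b h)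
        calc y a * (w b / u b) ≤ y a * (w a / u a) := mul_le_mul_of_nonneg_left h1 h.le
          _ = w a * y a / u a := by ring

/-- The greedy allocation competes with every feasible allocation: the utilities of
`xstar`, measured relative to the final greedy utilities, are on average at most `log (n + 1)`. -/
lemma sum_ratio_le
    (n : ℕ) (hn : 1 ≤ n) (T : ℝ) (hT : 0 < T)
    (v : Fin n → ℝ → ℝ)
    (hv_nonneg : ∀ a, ∀ᵐ s ∂(volume.restrict (Set.Icc (0:ℝ) T)), 0 ≤ v a s)
    (hv_int : ∀ a, IntegrableOn (v a) (Set.Icc (0:ℝ) T))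
    (hv_unit : ∀ a, ∫ s in (0:ℝ)..T, v a s = 1)
    (x : Fin n → ℝ → ℝ)
    (hx_meas : ∀ a, Measurable (x a))
    (hx_feas : ∀ᵐ s ∂(volume.restrict (Set.Icc (0:ℝ) T)),
      (∀ a, 0 ≤ x a s) ∧ ∑ a, x a s ≤ 1)
    (U : Fin n → ℝ → ℝ)
    (hU : ∀ a t, U a t = 1 / (n : ℝ) + ∫ s in (0:ℝ)..t, v a s * x a s)
    (hgreedy : ∀ᵐ s ∂(volume.restrict (Set.Icc (0:ℝ) T)),
      (∑ a, x a s = 1) ∧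
      ∀ a b, 0 < x a s → v a s * U b s ≥ v b s * U a s)
    (xstar : Fin n → ℝ → ℝ)
    (hxstar_meas : ∀ a, Measurable (xstar a))
    (hxstar_feas : ∀ᵐ s ∂(volume.restrict (Set.Icc (0:ℝ) T)),
      (∀ a, 0 ≤ xstar a s) ∧ ∑ a, xstar a s ≤ 1) :
    (∀ a, 1 / (n : ℝ) ≤ U a T ∧ U a T ≤ 1 / (n : ℝ) + 1) ∧
      ∑ a, (∫ s in (0:ℝ)..T, v a s * xstar a s) / U a T ≤ n * log ((n : ℝ) + 1) := by
  have hn' : (0 : ℝ) < n := by exact_mod_cast hn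
  have hc : 0 < 1 / (n : ℝ) := by positivity
  have ii : ∀ {f : ℝ → ℝ}, IntegrableOn f (Set.Icc (0:ℝ) T) → IntervalIntegrable f volume 0 T :=
    fun h => (intervalIntegrable_iff_integrableOn_Icc_of_le hT.le).2 h
  have hx := feasible_mul v hv_nonneg hv_int x hx_meas hx_feas
  have hxs := feasible_mul v hv_nonneg hv_int xstar hxstar_meas hxstar_feas
  have key := fun a => integral_div_le_log hT hc (ii (hx a).1) ((hx a).2.mono fun s hs => hs.1)
    (hU a)
  have hTm : T ∈ Set.Icc 0 T := Set.right_mem_Icc.2 hT.le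
  have hlow : ∀ a, 1 / (n : ℝ) ≤ U a T := fun a => (key a).2.1 T hTm
  have hup : ∀ a, U a T ≤ 1 / (n : ℝ) + 1 := by
    intro a
    rw [hU, ← hv_unit a]
    gcongr
    exact intervalIntegral.integral_mono_ae_restrict hT.le (ii (hx a).1) (ii (hv_int a))
      ((hx a).2.mono fun s hs => hs.2)
  refine ⟨fun a => ⟨hlow a, hup a⟩, ?_⟩
  have hpos : ∀ a, ∀ s ∈ Set.Icc 0 T, 0 < U a s := fun a s hs => hc.trans_le ((key a).2.1 s hs)
  have hpt : ∀ᵐ s ∂(volume.restrict (Set.Icc (0:ℝ) T)),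
      ∑ a, v a s * xstar a s / U a T ≤ ∑ a, v a s * x a s / U a s := by
    filter_upwards [hgreedy, hx_feas, hxstar_feas, ae_all_iff.2 hv_nonneg,
      ae_restrict_mem measurableSet_Icc] with s hg hxf hxsf hv hs
    have hmax := ratio_le_of_greedy (fun a => v a s) (fun a => U a s) (fun a => x a s)
      (fun a => hpos a s hs) hxf.1 hg.1 hg.2
    have hlam : 0 ≤ ∑ a, v a s * x a s / U a s := Finset.sum_nonneg fun a _ =>
      div_nonneg (mul_nonneg (hv a) (hxf.1 a)) (hpos a s hs).le
    calc ∑ a, v a s * xstar a s / U a T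
        ≤ ∑ a, xstar a s * ∑ b, v b s * x b s / U b s := by
          refine Finset.sum_le_sum fun a _ => ?_
          have h1 : v a s / U a T ≤ v a s / U a s :=
            div_le_div_of_nonneg_left (hv a) (hpos a s hs) ((key a).1 hs hTm hs.2)
          calc v a s * xstar a s / U a T = xstar a s * (v a s / U a T) := by ring
            _ ≤ _ := mul_le_mul_of_nonneg_left (h1.trans (hmax a)) (hxsf.1 a)
      _ = (∑ a, xstar a s) * ∑ b, v b s * x b s / U b s := by rw [Finset.sum_mul]
      _ ≤ ∑ b, v b s * x b s / U b s := mul_le_of_le_one_left hlam hxsf.2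
  have hi1 : ∀ a ∈ Finset.univ,
      IntervalIntegrable (fun s => v a s * xstar a s / U a T) volume 0 T :=
    fun a _ => (ii (hxs a).1).div_const _
  have hi2 : ∀ a ∈ Finset.univ,
      IntervalIntegrable (fun s => v a s * x a s / U a s) volume 0 T :=
    fun a _ => (key a).2.2.1
  calc ∑ a, (∫ s in (0:ℝ)..T, v a s * xstar a s) / U a T
      = ∫ s in (0:ℝ)..T, ∑ a, v a s * xstar a s / U a T := by
        rw [intervalIntegral.integral_finsetSum hi1]
        simp_rw [intervalIntegral.integral_div]
    _ ≤ ∫ s in (0:ℝ)..T, ∑ a, v a s * x a s / U a s := by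
        refine intervalIntegral.integral_mono_ae_restrict hT.le ?_ ?_ hpt
        · simpa only [Finset.sum_fn] using IntervalIntegrable.sum Finset.univ hi1
        · simpa only [Finset.sum_fn] using IntervalIntegrable.sum Finset.univ hi2
    _ = ∑ a, ∫ s in (0:ℝ)..T, v a s * x a s / U a s :=
        intervalIntegral.integral_finsetSum hi2
    _ ≤ ∑ a : Fin n, log ((n : ℝ) + 1) := by
        refine Finset.sum_le_sum fun a _ => (key a).2.2.2.trans ?_
        rw [← log_div (hpos a T hTm).ne' hc.ne']
        refine log_le_log (div_pos (hpos a T hTm) hc) ?_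
        rw [div_le_iff₀ hc]
        refine (hup a).trans (le_of_eq ?_)
        field_simp
        ring
    _ = n * log ((n : ℝ) + 1) := by simp

theorem stmt_2
    (n : ℕ) (hn : 1 ≤ n) (T : ℝ) (hT : 0 < T)
    (v : Fin n → ℝ → ℝ)
    (hv_meas : ∀ a, Measurable (v a))
    (hv_nonneg : ∀ a, ∀ᵐ s ∂(volume.restrict (Set.Icc (0:ℝ) T)), 0 ≤ v a s)
    (hv_int : ∀ a, IntegrableOn (v a) (Set.Icc (0:ℝ) T))
    (hv_unit : ∀ a, ∫ s in (0:ℝ)..T, v a s = 1)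
    (x : Fin n → ℝ → ℝ)
    (hx_meas : ∀ a, Measurable (x a))
    (hx_feas : ∀ᵐ s ∂(volume.restrict (Set.Icc (0:ℝ) T)),
      (∀ a, 0 ≤ x a s) ∧ ∑ a, x a s ≤ 1)
    (U : Fin n → ℝ → ℝ)
    (hU : ∀ a t, U a t = 1 / (n : ℝ) + ∫ s in (0:ℝ)..t, v a s * x a s)
    (hgreedy : ∀ᵐ s ∂(volume.restrict (Set.Icc (0:ℝ) T)),
      (∑ a, x a s = 1) ∧
      ∀ a b, 0 < x a s → v a s * U b s ≥ v b s * U a s)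
    (p : ℝ) (hp_lb : -1 ≤ p) (hp_ub : p ≤ 1) (hp0 : p ≠ 0)
    (xstar : Fin n → ℝ → ℝ)
    (hxstar_meas : ∀ a, Measurable (xstar a))
    (hxstar_feas : ∀ᵐ s ∂(volume.restrict (Set.Icc (0:ℝ) T)),
      (∀ a, 0 ≤ xstar a s) ∧ ∑ a, xstar a s ≤ 1)
    (Ustar : Fin n → ℝ)
    (hUstar : ∀ a, Ustar a = ∫ s in (0:ℝ)..T, v a s * xstar a s)
    (hUstar_pos : ∀ a, 0 < Ustar a) :
    ((1 / (n : ℝ)) * ∑ a, (U a T) ^ p) ^ (1 / p) ≥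
      ((1 / (n : ℝ)) * ∑ a, (Ustar a) ^ p) ^ (1 / p) /
        (2 * ((n : ℝ) + 1) ^ |p| * Real.log ((n : ℝ) + 1)) := by
  have hn' : (0 : ℝ) < n := by exact_mod_cast hn
  obtain ⟨hbd, hsum⟩ := sum_ratio_le n hn T hT v hv_nonneg hv_int hv_unit x hx_meas hx_feas U hU
    hgreedy xstar hxstar_meas hxstar_feas
  have hc : 0 < 1 / (n : ℝ) := by positivity
  have hu : ∀ a, 0 < U a T := fun a => hc.trans_le (hbd a).1
  have hquot : ∀ a b, U a T ≤ ((n : ℝ) + 1) * U b T := by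
    intro a b
    calc U a T ≤ 1 / (n : ℝ) + 1 := (hbd a).2
      _ = ((n : ℝ) + 1) * (1 / (n : ℝ)) := by field_simp; ring
      _ ≤ ((n : ℝ) + 1) * U b T := mul_le_mul_of_nonneg_left (hbd b).1 (by positivity)
  have hM : ∀ a b, U a T ^ p ≤ ((n : ℝ) + 1) ^ |p| * U b T ^ p := by
    intro a b
    rcases lt_or_gt_of_ne hp0 with hneg | hpos
    · have h := rpow_le_rpow_of_nonpos (hu b) (hquot b a) hneg.le
      rw [mul_rpow (by positivity) (hu a).le] at h
      have h' := mul_le_mul_of_nonneg_left h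
        (rpow_pos_of_pos (by positivity : (0:ℝ) < (n : ℝ) + 1) (-p)).le
      rw [← mul_assoc, ← rpow_add (by positivity), neg_add_cancel, rpow_zero, one_mul] at h'
      rwa [abs_of_neg hneg]
    · rw [abs_of_pos hpos, ← mul_rpow (by positivity) (hu b).le]
      exact rpow_le_rpow (hu a).le (hquot a b) hpos.le
  have hmain := pmean_mul_le hn (fun a => U a T) (fun a => Ustar a / U a T) hu
    (fun a => div_pos (hUstar_pos a) (hu a)) hp0 hp_ub hM
    (L := log ((n : ℝ) + 1)) (by simpa only [hUstar] using hsum)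
  have hcancel : ∀ a, U a T * (Ustar a / U a T) = Ustar a := fun a =>
    mul_div_cancel₀ _ (hu a).ne'
  simp only [hcancel] at hmain
  have hL : 0 < log ((n : ℝ) + 1) := log_pos (by linarith)
  have hA : 0 < ((n : ℝ) + 1) ^ |p| := rpow_pos_of_pos (by positivity) _
  have hP : 0 ≤ ((1 / (n : ℝ)) * ∑ a, (U a T) ^ p) ^ (1 / p) :=
    rpow_nonneg (mul_nonneg hc.le (Finset.sum_nonneg fun a _ => (rpow_pos_of_pos (hu a) _).le)) _
  rw [ge_iff_le, div_le_iff₀ (by positivity)]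
  have h0 := mul_nonneg (mul_pos hA hL).le hP
  linarith
end

section
/- (Nash welfare case, p = 0.) Suppose the feasible allocation x satisfies the Nashian Greedy condition and the valuations have unit monopolist utilities. Let x* be any feasible allocation with U*_a = ∫_0^T v a s · x*_a s ds. Then the geometric means satisfy (∏_a U*_a)^{1/n} ≤ log(n+1) · (∏_a U a T)^{1/n}. -/
open MeasureTheory Real

/-!
By AM-GM it suffices to bound `∑ a, Ustar a / U a T` by `n * log (n + 1)`.

The greedy rule only serves agents that maximise `v a s / U a s`, so at almost every time `s`
the allocation `x` maximises `∑ a, v a s * y a / U a s` among feasible `y`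
(`sum_le_sum_of_greedy`). As each `U a` is nondecreasing, this gives
`∑ a, v a s * xstar a s / U a T ≤ ∑ a, v a s * x a s / U a s`. The right-hand side is the
derivative of `∑ a, log (U a s)`, so after integration
`∑ a, Ustar a / U a T ≤ ∑ a, (log (U a T) - log (1 / n))` (`integral_div_primitive_le`).
Finally `U a T ≤ 1 / n + 1` by unit monopolist utilities, so each summand is at most `log (n + 1)`.
-/

lemma monotoneOn_primitive {g F : ℝ → ℝ} {c T : ℝ}
    (hg : IntegrableOn g (Set.Icc 0 T))
    (hg0 : ∀ᵐ s ∂(volume.restrict (Set.Icc (0:ℝ) T)), 0 ≤ g s)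
    (hF : ∀ t, F t = c + ∫ s in (0:ℝ)..t, g s) : MonotoneOn F (Set.Icc 0 T) := by
  intro s hs t ht hst
  have hint : ∀ p q, p ∈ Set.Icc 0 T → q ∈ Set.Icc 0 T → p ≤ q →
      IntervalIntegrable g volume p q := fun p q hp hq hpq =>
    (intervalIntegrable_iff_integrableOn_Icc_of_le hpq).2
      (hg.mono_set (Set.Icc_subset_Icc hp.1 hq.2))
  have h0 : (0:ℝ) ∈ Set.Icc 0 T := ⟨le_rfl, hs.1.trans hs.2⟩
  have hsplit := intervalIntegral.integral_add_adjacent_intervals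
    (hint 0 s h0 hs hs.1) (hint s t hs ht hst)
  have hpos : 0 ≤ ∫ r in s..t, g r :=
    intervalIntegral.integral_nonneg_of_ae_restrict hst
      (ae_restrict_of_ae_restrict_of_subset (Set.Icc_subset_Icc hs.1 ht.2) hg0)
  rw [hF, hF]
  linarith

/-- One half of the fundamental theorem of calculus for `log ∘ F`, where `F` is a primitive of a
nonnegative integrable function. The inequality suffices, and it needs only that `log ∘ F` is
monotone with the expected derivative almost everywhere. -/
lemma integral_div_primitive_le {g F : ℝ → ℝ} {c T : ℝ} (hT : 0 ≤ T) (hc : 0 < c)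
    (hg : IntegrableOn g (Set.Icc 0 T))
    (hg0 : ∀ᵐ s ∂(volume.restrict (Set.Icc (0:ℝ) T)), 0 ≤ g s)
    (hF : ∀ t, F t = c + ∫ s in (0:ℝ)..t, g s) :
    IntervalIntegrable (fun s => g s / F s) volume 0 T ∧
      ∫ s in (0:ℝ)..T, g s / F s ≤ log (F T) - log c := by
  have hmono := monotoneOn_primitive hg hg0 hF
  have hF0 : F 0 = c := by simp [hF]
  have hFpos : ∀ t ∈ Set.Icc 0 T, 0 < F t := fun t ht =>
    hc.trans_le (hF0 ▸ hmono ⟨le_rfl, hT⟩ ht ht.1)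
  have hlog : MonotoneOn (fun t => log (F t)) (Set.uIcc 0 T) := by
    rw [Set.uIcc_of_le hT]
    exact fun s hs t ht hst => log_le_log (hFpos s hs) (hmono hs ht hst)
  have hderiv : ∀ᵐ s, s ∈ Set.uIoc 0 T → deriv (fun t => log (F t)) s = g s / F s := by
    filter_upwards [((intervalIntegrable_iff_integrableOn_Icc_of_le hT).2 hg).ae_hasDerivAt_integral]
      with s hs hsI
    have hsI' : s ∈ Set.uIcc 0 T := Set.uIoc_subset_uIcc hsI
    have h1 : HasDerivAt F (g s) s := by
      rw [funext hF]
      exact (hs hsI' 0 Set.left_mem_uIcc).const_add c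
    exact (h1.log (hFpos s (Set.uIcc_of_le hT ▸ hsI')).ne').deriv
  refine ⟨hlog.intervalIntegrable_deriv.congr_ae ?_, ?_⟩
  · exact (ae_restrict_iff' measurableSet_uIoc).2 hderiv
  · rw [← intervalIntegral.integral_congr_ae hderiv]
    have hmem := hlog.intervalIntegral_deriv_mem_uIcc
    have hle : log c ≤ log (F T) := by
      have := hlog Set.left_mem_uIcc Set.right_mem_uIcc hT
      simpa [hF0] using this
    rw [hF0, Set.uIcc_of_le (sub_nonneg.2 hle)] at hmem
    exact hmem.2

/-- A probability vector `p` supported on maximisers of the weights `w ≥ 0` maximises `∑ w * q`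
among nonnegative `q` of total mass at most one. -/
lemma sum_le_sum_of_greedy {ι : Type*} [Fintype ι] {w p q : ι → ℝ} (hw : ∀ i, 0 ≤ w i)
    (hp : ∀ i, 0 ≤ p i) (hp1 : ∑ i, p i = 1) (hq : ∀ i, 0 ≤ q i) (hq1 : ∑ i, q i ≤ 1)
    (hmax : ∀ i j, 0 < p i → w j ≤ w i) : ∑ i, w i * q i ≤ ∑ i, w i * p i := by
  have hle : ∀ j, w j ≤ ∑ i, w i * p i := fun j => by
    calc w j = ∑ i, w j * p i := by rw [← Finset.mul_sum, hp1, mul_one]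
      _ ≤ ∑ i, w i * p i := Finset.sum_le_sum fun i _ => by
        rcases (hp i).eq_or_lt with h | h
        · simp [← h]
        · exact mul_le_mul_of_nonneg_right (hmax i j h) h.le
  calc ∑ j, w j * q j ≤ ∑ j, (∑ i, w i * p i) * q j :=
        Finset.sum_le_sum fun j _ => mul_le_mul_of_nonneg_right (hle j) (hq j)
    _ = (∑ i, w i * p i) * ∑ j, q j := by rw [Finset.mul_sum]
    _ ≤ ∑ i, w i * p i := mul_le_of_le_one_right
        (Finset.sum_nonneg fun i _ => mul_nonneg (hw i) (hp i)) hq1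

theorem stmt_3
    (n : ℕ) (hn : 1 ≤ n) (T : ℝ) (hT : 0 < T)
    (v : Fin n → ℝ → ℝ)
    (hv_meas : ∀ a, Measurable (v a))
    (hv_nonneg : ∀ a, ∀ᵐ s ∂(volume.restrict (Set.Icc (0:ℝ) T)), 0 ≤ v a s)
    (hv_int : ∀ a, IntegrableOn (v a) (Set.Icc (0:ℝ) T))
    (hv_unit : ∀ a, ∫ s in (0:ℝ)..T, v a s = 1)
    (x : Fin n → ℝ → ℝ)
    (hx_meas : ∀ a, Measurable (x a))
    (hx_feas : ∀ᵐ s ∂(volume.restrict (Set.Icc (0:ℝ) T)),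
      (∀ a, 0 ≤ x a s) ∧ ∑ a, x a s ≤ 1)
    (U : Fin n → ℝ → ℝ)
    (hU : ∀ a t, U a t = 1 / (n : ℝ) + ∫ s in (0:ℝ)..t, v a s * x a s)
    (hgreedy : ∀ᵐ s ∂(volume.restrict (Set.Icc (0:ℝ) T)),
      (∑ a, x a s = 1) ∧
      ∀ a b, 0 < x a s → v a s * U b s ≥ v b s * U a s)
    (xstar : Fin n → ℝ → ℝ)
    (hxstar_meas : ∀ a, Measurable (xstar a))
    (hxstar_feas : ∀ᵐ s ∂(volume.restrict (Set.Icc (0:ℝ) T)),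
      (∀ a, 0 ≤ xstar a s) ∧ ∑ a, xstar a s ≤ 1)
    (Ustar : Fin n → ℝ)
    (hUstar : ∀ a, Ustar a = ∫ s in (0:ℝ)..T, v a s * xstar a s) :
    (∏ a, Ustar a) ^ (1 / (n : ℝ)) ≤
      Real.log ((n : ℝ) + 1) * (∏ a, U a T) ^ (1 / (n : ℝ)) := by
  have hn0 : (0:ℝ) < n := by exact_mod_cast hn
  have hc : (0:ℝ) < 1 / n := by positivity
  have hv_all : ∀ᵐ s ∂(volume.restrict (Set.Icc (0:ℝ) T)), ∀ a, 0 ≤ v a s :=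
    ae_all_iff.2 hv_nonneg
  have hg_int := integrableOn_mul_of_feasible hv_int hx_meas hx_feas
  have hstar_int := integrableOn_mul_of_feasible hv_int hxstar_meas hxstar_feas
  have hg0 : ∀ a, ∀ᵐ s ∂(volume.restrict (Set.Icc (0:ℝ) T)), 0 ≤ v a s * x a s := fun a => by
    filter_upwards [hv_nonneg a, hx_feas] with s h1 h2 using mul_nonneg h1 (h2.1 a)
  have hmono := fun a => monotoneOn_primitive (hg_int a) (hg0 a) (hU a)
  have hTmem : T ∈ Set.Icc 0 T := ⟨hT.le, le_rfl⟩
  have hUpos : ∀ a, ∀ s ∈ Set.Icc 0 T, 0 < U a s := fun a s hs => by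
    have h := hmono a ⟨le_rfl, hT.le⟩ hs hs.1
    have h0 : U a 0 = 1 / n := by simp [hU]
    exact hc.trans_le (h0 ▸ h)
  have hUT : ∀ a, 0 < U a T := fun a => hUpos a T hTmem
  have hUle : ∀ a, U a T ≤ 1 / n + 1 := fun a => by
    rw [hU, ← hv_unit a]
    gcongr
    refine intervalIntegral.integral_mono_ae_restrict hT.le
      ((intervalIntegrable_iff_integrableOn_Icc_of_le hT.le).2 (hg_int a))
      ((intervalIntegrable_iff_integrableOn_Icc_of_le hT.le).2 (hv_int a)) ?_
    filter_upwards [hv_nonneg a, hx_feas] with s h1 h2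
    exact mul_le_of_le_one_right h1
      ((Finset.single_le_sum (fun b _ => h2.1 b) (Finset.mem_univ a)).trans h2.2)
  have hstar0 : ∀ a, 0 ≤ Ustar a := fun a => by
    rw [hUstar]
    refine intervalIntegral.integral_nonneg_of_ae_restrict hT.le ?_
    filter_upwards [hv_nonneg a, hxstar_feas] with s h1 h2 using mul_nonneg h1 (h2.1 a)
  have hkey := fun a => integral_div_primitive_le hT.le hc (hg_int a) (hg0 a) (hU a)
  have hstar_ii : ∀ a ∈ Finset.univ,
      IntervalIntegrable (fun s => v a s * xstar a s / U a T) volume 0 T := fun a _ =>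
    ((intervalIntegrable_iff_integrableOn_Icc_of_le hT.le).2 (hstar_int a)).div_const _
  have hpt : ∀ᵐ s ∂(volume.restrict (Set.Icc (0:ℝ) T)),
      ∑ a, v a s * xstar a s / U a T ≤ ∑ a, v a s * x a s / U a s := by
    filter_upwards [hv_all, hx_feas, hxstar_feas, hgreedy, ae_restrict_mem measurableSet_Icc]
      with s h1 h2 h3 h4 hs
    calc ∑ a, v a s * xstar a s / U a T ≤ ∑ a, v a s / U a s * xstar a s :=
          Finset.sum_le_sum fun a _ => by
            rw [div_mul_eq_mul_div]
            exact div_le_div_of_nonneg_left (mul_nonneg (h1 a) (h3.1 a)) (hUpos a s hs)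
              (hmono a hs hTmem hs.2)
      _ ≤ ∑ a, v a s / U a s * x a s :=
          sum_le_sum_of_greedy (fun a => div_nonneg (h1 a) (hUpos a s hs).le) h2.1 h4.1 h3.1 h3.2
            fun a b hab => (div_le_div_iff₀ (hUpos b s hs) (hUpos a s hs)).2 (h4.2 a b hab)
      _ = ∑ a, v a s * x a s / U a s := by simp only [div_mul_eq_mul_div]
  have hsum : ∑ a, Ustar a / U a T ≤ n * log (n + 1) := by
    calc ∑ a, Ustar a / U a T = ∫ s in (0:ℝ)..T, ∑ a, v a s * xstar a s / U a T := by
          rw [intervalIntegral.integral_finsetSum hstar_ii]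
          simp only [hUstar, intervalIntegral.integral_div]
      _ ≤ ∫ s in (0:ℝ)..T, ∑ a, v a s * x a s / U a s := by
          refine intervalIntegral.integral_mono_ae_restrict hT.le ?_ ?_ hpt
          · simpa only [Finset.sum_fn] using IntervalIntegrable.sum Finset.univ hstar_ii
          · simpa only [Finset.sum_fn] using IntervalIntegrable.sum Finset.univ fun a _ => (hkey a).1
      _ = ∑ a, ∫ s in (0:ℝ)..T, v a s * x a s / U a s :=
          intervalIntegral.integral_finsetSum fun a _ => (hkey a).1
      _ ≤ ∑ _a : Fin n, log ((n:ℝ) + 1) := Finset.sum_le_sum fun a _ => by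
          refine (hkey a).2.trans ?_
          rw [← log_div (hUT a).ne' hc.ne']
          refine log_le_log (div_pos (hUT a) hc) ?_
          rw [div_le_iff₀ hc]
          refine (hUle a).trans (le_of_eq ?_)
          field_simp
          ring
      _ = n * log (n + 1) := by simp
  have hP : 0 < ∏ a, U a T := Finset.prod_pos fun a _ => hUT a
  have hamgm := geom_mean_le_arith_mean_weighted Finset.univ (fun _ : Fin n => 1 / (n:ℝ))
    (fun a => Ustar a / U a T) (fun _ _ => hc.le) (by simp [hn0.ne'])
    (fun a _ => div_nonneg (hstar0 a) (hUT a).le)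
  rw [finsetProd_rpow _ _ fun a _ => div_nonneg (hstar0 a) (hUT a).le, Finset.prod_div_distrib,
    div_rpow (Finset.prod_nonneg fun a _ => hstar0 a) hP.le, ← Finset.mul_sum,
    div_le_iff₀ (rpow_pos_of_pos hP _)] at hamgm
  refine hamgm.trans (mul_le_mul_of_nonneg_right ?_ (rpow_nonneg hP.le _))
  rw [one_div, inv_mul_le_iff₀ hn0]
  exact hsum
end

section
/- Suppose n ≥ 3, the feasible allocation x satisfies the Nashian Greedy condition, and the valuations have unit monopolist utilities. Let p ≠ 0 with |p| ≤ 1/log n, and let x* be any feasible allocation with U*_a = ∫_0^T v a s · x*_a s ds > 0 for every agent a. Then ((1/n) ∑_a (U a T)^p)^{1/p} ≥ ((1/n) ∑_a (U*_a)^p)^{1/p} / (2 e^2 · log(n+1)). -/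
/-!
Greediness makes the rate `∑ a, x a s * v a s / U a s` dominate `v b s / U b s` for every agent `b`,
hence also `∑ a, xstar a s * v a s / U a s` for every feasible `xstar`. The former is the
derivative of `∑ a, log (U a s)`, whose total increase is at most `n * log (n + 1)` because
`1 / n ≤ U a ≤ 1 + 1 / n`; as `U a` is nondecreasing, the ratios `r a = Ustar a / U a T` therefore
satisfy `∑ a, r a ≤ n * log (n + 1)` (`log_growth`, `greedy_rate_dominates`).

The quotient of the `p`-means of `Ustar` and `U` is the `p`-mean of `r` with weights proportional
to `(U a T) ^ p`, and is at most the corresponding weighted arithmetic mean since `p ≤ 1`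
(`weighted_pmean_le_mean`). For `|p| ≤ 1 / log n` all `(U a T) ^ p` agree up to a factor
`(n ^ 2) ^ |p| ≤ exp 2` (`rpow_le_exp_two_mul`), so the weights are uniform up to `exp 2` and the
quotient is at most `exp 2 * log (n + 1)` (`pmean_le_of_sum_ratio_le`).
-/

open MeasureTheory Real

/-- Logarithmic growth of `g t = c + ∫ s in 0..t, f s`. Only the inequality is needed, so
monotonicity of `log ∘ g` replaces absolute continuity. -/
lemma log_growth {T c : ℝ} (hT : 0 ≤ T) (hc : 0 < c) {f g : ℝ → ℝ}
    (hf : IntervalIntegrable f volume 0 T)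
    (hf0 : ∀ᵐ s ∂(volume.restrict (Set.Icc (0:ℝ) T)), 0 ≤ f s)
    (hg : ∀ t, g t = c + ∫ s in (0:ℝ)..t, f s) :
    MonotoneOn g (Set.Icc 0 T) ∧ (∀ t ∈ Set.Icc 0 T, c ≤ g t) ∧
    IntervalIntegrable (fun s => f s / g s) volume 0 T ∧
    ∫ s in (0:ℝ)..T, f s / g s ≤ Real.log (g T) - Real.log c := by
  have hmono : MonotoneOn g (Set.Icc 0 T) := by
    intro a ha b hb hab
    rw [hg, hg]
    have h1 : IntervalIntegrable f volume 0 a :=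
      hf.mono_set (by rw [Set.uIcc_of_le ha.1, Set.uIcc_of_le hT]; exact Set.Icc_subset_Icc_right ha.2)
    have h2 : IntervalIntegrable f volume a b :=
      hf.mono_set (by rw [Set.uIcc_of_le hab, Set.uIcc_of_le hT]; exact Set.Icc_subset_Icc ha.1 hb.2)
    have h3 := intervalIntegral.integral_add_adjacent_intervals h1 h2
    have h4 : 0 ≤ ∫ s in a..b, f s := by
      apply intervalIntegral.integral_nonneg_of_ae_restrict hab
      exact ae_restrict_of_ae_restrict_of_subset (Set.Icc_subset_Icc ha.1 hb.2) hf0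
    linarith
  have hg0 : g 0 = c := by simp [hg]
  have hlow : ∀ t ∈ Set.Icc 0 T, c ≤ g t := by
    intro t ht
    rw [← hg0]
    exact hmono ⟨le_rfl, hT⟩ ht ht.1
  have hlogmono : MonotoneOn (fun t => Real.log (g t)) (Set.uIcc 0 T) := by
    rw [Set.uIcc_of_le hT]
    intro a ha b hb hab
    exact Real.log_le_log (hc.trans_le (hlow a ha)) (hmono ha hb hab)
  have hderiv : ∀ᵐ s, s ∈ Set.uIoc 0 T → deriv (fun t => Real.log (g t)) s = f s / g s := by
    filter_upwards [hf.ae_hasDerivAt_integral] with s hs hsT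
    have hsI : s ∈ Set.Icc 0 T := by
      rw [Set.uIoc_of_le hT] at hsT
      exact ⟨hsT.1.le, hsT.2⟩
    have h1 := (hs (by rwa [Set.uIcc_of_le hT]) 0 (by simp)).const_add c
    have h2 : HasDerivAt g (f s) s := by
      have : g = fun t => c + ∫ s in (0:ℝ)..t, f s := funext hg
      rw [this]
      exact h1
    exact (h2.log (hc.trans_le (hlow s hsI)).ne').deriv
  refine ⟨hmono, hlow, ?_, ?_⟩
  · exact hlogmono.intervalIntegrable_deriv.congr_ae ((ae_restrict_iff' measurableSet_uIoc).2 hderiv)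
  · rw [← intervalIntegral.integral_congr_ae hderiv]
    have h := hlogmono.intervalIntegral_deriv_mem_uIcc
    have h0 : Real.log c ≤ Real.log (g T) := Real.log_le_log hc (hlow T ⟨hT, le_rfl⟩)
    simp only [hg0] at h
    rw [Set.uIcc_of_le (by linarith)] at h
    exact h.2

/-- Pointwise effect of greediness: any feasible split `y` collects weighted value at most that
of the greedy split `x`. -/
lemma greedy_rate_dominates {n : ℕ} {v x y u : Fin n → ℝ} (hv : ∀ a, 0 ≤ v a) (hu : ∀ a, 0 < u a)
    (hx : ∀ a, 0 ≤ x a) (hxs : ∑ a, x a = 1) (hy : ∀ a, 0 ≤ y a) (hys : ∑ a, y a ≤ 1)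
    (hgr : ∀ a b, 0 < x a → v b * u a ≤ v a * u b) :
    ∑ a, v a * y a / u a ≤ ∑ a, v a * x a / u a := by
  have key : ∀ b, v b / u b ≤ ∑ a, v a * x a / u a := by
    intro b
    calc v b / u b = ∑ a, v b / u b * x a := by rw [← Finset.mul_sum, hxs, mul_one]
      _ ≤ ∑ a, v a * x a / u a := by
        apply Finset.sum_le_sum
        intro a _
        rcases (hx a).eq_or_lt with h | h
        · simp [← h]
        · rw [mul_div_right_comm]
          apply mul_le_mul_of_nonneg_right _ h.le
          rw [div_le_div_iff₀ (hu b) (hu a)]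
          exact hgr a b h
  have hM : 0 ≤ ∑ a, v a * x a / u a :=
    Finset.sum_nonneg fun a _ => div_nonneg (mul_nonneg (hv a) (hx a)) (hu a).le
  calc ∑ a, v a * y a / u a = ∑ b, v b / u b * y b :=
        Finset.sum_congr rfl fun a _ => by rw [mul_div_right_comm]
    _ ≤ ∑ b, (∑ a, v a * x a / u a) * y b :=
        Finset.sum_le_sum fun b _ => mul_le_mul_of_nonneg_right (key b) (hy b)
    _ = (∑ a, v a * x a / u a) * ∑ b, y b := by rw [Finset.mul_sum]
    _ ≤ (∑ a, v a * x a / u a) * 1 := mul_le_mul_of_nonneg_left hys hM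
    _ = _ := mul_one _

/-- Weighted power mean inequality for exponents `p ≤ 1`, `p ≠ 0`, from the tangent line of
`t ↦ t ^ p` at the arithmetic mean. -/
lemma weighted_pmean_le_mean {n : ℕ} {w r : Fin n → ℝ} {p : ℝ} (hp0 : p ≠ 0) (hp1 : p ≤ 1)
    (hw : ∀ a, 0 < w a) (hws : ∑ a, w a = 1) (hr : ∀ a, 0 < r a) :
    (∑ a, w a * r a ^ p) ^ (1 / p) ≤ ∑ a, w a * r a := by
  have hne : (Finset.univ : Finset (Fin n)).Nonempty := by
    by_contra h
    rw [Finset.not_nonempty_iff_eq_empty] at h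
    simp [h] at hws
  set m := ∑ a, w a * r a with hm
  have hmpos : 0 < m := Finset.sum_pos (fun a _ => mul_pos (hw a) (hr a)) hne
  have hSpos : 0 < ∑ a, w a * r a ^ p :=
    Finset.sum_pos (fun a _ => mul_pos (hw a) (rpow_pos_of_pos (hr a) p)) hne
  have hrm : ∀ a, r a ^ p = m ^ p * (r a / m) ^ p := by
    intro a
    rw [← mul_rpow hmpos.le (div_pos (hr a) hmpos).le, mul_div_cancel₀ _ hmpos.ne']
  have hlin : ∑ a, w a * (m ^ p * (1 + p * (r a / m - 1))) = m ^ p := by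
    have : ∀ a, w a * (m ^ p * (1 + p * (r a / m - 1))) =
        m ^ p * (1 - p) * w a + m ^ p * p / m * (w a * r a) := by
      intro a
      field_simp
      ring
    simp_rw [this]
    rw [Finset.sum_add_distrib, ← Finset.mul_sum, ← Finset.mul_sum, hws, ← hm]
    field_simp
    ring
  have hmp : 0 < m ^ p := rpow_pos_of_pos hmpos p
  have hmm : (m ^ p) ^ (1 / p) = m := by
    rw [one_div, rpow_rpow_inv hmpos.le hp0]
  rcases lt_or_gt_of_ne hp0 with hneg | hpos
  · have h : m ^ p ≤ ∑ a, w a * r a ^ p := by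
      rw [← hlin]
      refine Finset.sum_le_sum fun a _ => mul_le_mul_of_nonneg_left ?_ (hw a).le
      rw [hrm]
      refine mul_le_mul_of_nonneg_left ?_ hmp.le
      have ht := div_pos (hr a) hmpos
      rw [rpow_def_of_pos ht]
      have h1 := Real.add_one_le_exp (Real.log (r a / m) * p)
      have h2 := Real.log_le_sub_one_of_pos ht
      nlinarith
    calc _ ≤ (m ^ p) ^ (1 / p) :=
          rpow_le_rpow_of_nonpos hmp h (by rw [one_div]; exact inv_nonpos.2 hneg.le)
      _ = m := hmm
  · have h : ∑ a, w a * r a ^ p ≤ m ^ p := by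
      rw [← hlin]
      refine Finset.sum_le_sum fun a _ => mul_le_mul_of_nonneg_left ?_ (hw a).le
      rw [hrm]
      refine mul_le_mul_of_nonneg_left ?_ hmp.le
      have ht := div_pos (hr a) hmpos
      have h1 := rpow_one_add_le_one_add_mul_self (s := r a / m - 1) (by linarith) hpos.le hp1
      rwa [add_sub_cancel] at h1
    calc _ ≤ (m ^ p) ^ (1 / p) := rpow_le_rpow hSpos.le h (by positivity)
      _ = m := hmm

/-- If the values `u a ^ p` agree up to a factor `K`, an average bound on the ratios `s a / u a`
transfers to the `p`-means of `s` and `u` at the cost of `K`. -/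
lemma pmean_le_of_sum_ratio_le {n : ℕ} (hn : 0 < n) {s u : Fin n → ℝ} {p K L : ℝ}
    (hp0 : p ≠ 0) (hp1 : p ≤ 1) (hs : ∀ a, 0 < s a) (hu : ∀ a, 0 < u a) (hK : 0 ≤ K)
    (hr : ∑ a, s a / u a ≤ n * L) (hKu : ∀ a b, u a ^ p ≤ K * u b ^ p) :
    ((1 / (n : ℝ)) * ∑ a, s a ^ p) ^ (1 / p) ≤
      K * L * ((1 / (n : ℝ)) * ∑ a, u a ^ p) ^ (1 / p) := by
  have hn' : (0:ℝ) < n := by exact_mod_cast hn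
  have : NeZero n := ⟨hn.ne'⟩
  have hup : ∀ a, 0 < u a ^ p := fun a => rpow_pos_of_pos (hu a) p
  set S := ∑ a, u a ^ p with hS
  have hSpos : 0 < S := Finset.sum_pos (fun a _ => hup a) Finset.univ_nonempty
  have hpm := weighted_pmean_le_mean (w := fun a => u a ^ p / S) (r := fun a => s a / u a) hp0 hp1
    (fun a => div_pos (hup a) hSpos) (by rw [← Finset.sum_div, div_self hSpos.ne'])
    (fun a => div_pos (hs a) (hu a))
  have hmean : ∑ a, u a ^ p / S * (s a / u a) ≤ K * L := by
    have hw : ∀ a, u a ^ p / S ≤ K / n := by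
      intro a
      rw [div_le_div_iff₀ hSpos hn', hS, Finset.mul_sum]
      calc u a ^ p * n = ∑ _b : Fin n, u a ^ p := by simp [mul_comm]
        _ ≤ _ := Finset.sum_le_sum fun b _ => hKu a b
    calc _ ≤ ∑ a, K / n * (s a / u a) := Finset.sum_le_sum fun a _ =>
          mul_le_mul_of_nonneg_right (hw a) (div_pos (hs a) (hu a)).le
      _ = K / n * ∑ a, s a / u a := by rw [Finset.mul_sum]
      _ ≤ K / n * (n * L) := mul_le_mul_of_nonneg_left hr (by positivity)
      _ = K * L := by field_simp
  have hfac : (1 / (n : ℝ)) * ∑ a, s a ^ p =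
      (∑ a, u a ^ p / S * (s a / u a) ^ p) * ((1 / (n : ℝ)) * S) := by
    have : ∀ a, u a ^ p / S * (s a / u a) ^ p = s a ^ p / S := by
      intro a
      rw [div_rpow (hs a).le (hu a).le]
      have := (hup a).ne'
      field_simp
    simp_rw [this]
    rw [← Finset.sum_div]
    field_simp
  have hnonneg : 0 ≤ ∑ a, u a ^ p / S * (s a / u a) ^ p :=
    Finset.sum_nonneg fun a _ => mul_nonneg (div_pos (hup a) hSpos).le
      (rpow_nonneg (div_pos (hs a) (hu a)).le p)
  rw [hfac, mul_rpow hnonneg (by positivity)]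
  exact mul_le_mul_of_nonneg_right (hpm.trans hmean) (by positivity)

/-- Two numbers in `[1 / n, 1 + 1 / n]` have ratio between `n ^ (-2)` and `n ^ 2`, and raising to a power of size
`|p| ≤ 1 / log n` leaves at most `exp 2`. -/
lemma rpow_le_exp_two_mul {n : ℕ} (hn : 3 ≤ n) {p y z : ℝ} (hp : |p| ≤ 1 / Real.log n)
    (hy : 1 / (n : ℝ) ≤ y) (hy' : y ≤ 1 / (n : ℝ) + 1)
    (hz : 1 / (n : ℝ) ≤ z) (hz' : z ≤ 1 / (n : ℝ) + 1) :
    y ^ p ≤ Real.exp 2 * z ^ p := by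
  have hn3 : (3:ℝ) ≤ n := by exact_mod_cast hn
  have hn0 : (0:ℝ) < n := by linarith
  have hlogn : 0 < Real.log n := Real.log_pos (by linarith)
  have hinv : 0 < 1 / (n:ℝ) := by positivity
  have hlow : ∀ t, 1 / (n:ℝ) ≤ t → -Real.log n ≤ Real.log t := by
    intro t ht
    have := Real.log_le_log hinv ht
    rwa [one_div, Real.log_inv] at this
  have hhigh : ∀ t, 1 / (n:ℝ) ≤ t → t ≤ 1 / (n:ℝ) + 1 → Real.log t ≤ Real.log n := by
    intro t ht ht'
    apply Real.log_le_log (by linarith)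
    have : 1 / (n:ℝ) ≤ 1 := by rw [div_le_one hn0]; linarith
    linarith
  have hy0 : 0 < y := by linarith
  have hz0 : 0 < z := by linarith
  rw [rpow_def_of_pos hy0, rpow_def_of_pos hz0, ← Real.exp_add, Real.exp_le_exp]
  have habs : |Real.log y - Real.log z| ≤ 2 * Real.log n := by
    rw [abs_le]
    constructor <;> linarith [hlow y hy, hlow z hz, hhigh y hy hy', hhigh z hz hz']
  have h1 : (Real.log y - Real.log z) * p ≤ 2 := by
    calc _ ≤ |(Real.log y - Real.log z) * p| := le_abs_self _
      _ = |Real.log y - Real.log z| * |p| := abs_mul _ _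
      _ ≤ 2 * Real.log n * (1 / Real.log n) := by gcongr
      _ = 2 := by field_simp
  linarith

theorem stmt_4
    (n : ℕ) (hn : 3 ≤ n) (T : ℝ) (hT : 0 < T)
    (v : Fin n → ℝ → ℝ)
    (hv_meas : ∀ a, Measurable (v a))
    (hv_nonneg : ∀ a, ∀ᵐ s ∂(volume.restrict (Set.Icc (0:ℝ) T)), 0 ≤ v a s)
    (hv_int : ∀ a, IntegrableOn (v a) (Set.Icc (0:ℝ) T))
    (hv_unit : ∀ a, ∫ s in (0:ℝ)..T, v a s = 1)
    (x : Fin n → ℝ → ℝ)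
    (hx_meas : ∀ a, Measurable (x a))
    (hx_feas : ∀ᵐ s ∂(volume.restrict (Set.Icc (0:ℝ) T)),
      (∀ a, 0 ≤ x a s) ∧ ∑ a, x a s ≤ 1)
    (U : Fin n → ℝ → ℝ)
    (hU : ∀ a t, U a t = 1 / (n : ℝ) + ∫ s in (0:ℝ)..t, v a s * x a s)
    (hgreedy : ∀ᵐ s ∂(volume.restrict (Set.Icc (0:ℝ) T)),
      (∑ a, x a s = 1) ∧
      ∀ a b, 0 < x a s → v a s * U b s ≥ v b s * U a s)
    (p : ℝ) (hp0 : p ≠ 0) (hp : |p| ≤ 1 / Real.log n)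
    (xstar : Fin n → ℝ → ℝ)
    (hxstar_meas : ∀ a, Measurable (xstar a))
    (hxstar_feas : ∀ᵐ s ∂(volume.restrict (Set.Icc (0:ℝ) T)),
      (∀ a, 0 ≤ xstar a s) ∧ ∑ a, xstar a s ≤ 1)
    (Ustar : Fin n → ℝ)
    (hUstar : ∀ a, Ustar a = ∫ s in (0:ℝ)..T, v a s * xstar a s)
    (hUstar_pos : ∀ a, 0 < Ustar a) :
    ((1 / (n : ℝ)) * ∑ a, (U a T) ^ p) ^ (1 / p) ≥
      ((1 / (n : ℝ)) * ∑ a, (Ustar a) ^ p) ^ (1 / p) /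
        (2 * Real.exp 2 * Real.log ((n : ℝ) + 1)) := by
  have hn3 : (3:ℝ) ≤ n := by exact_mod_cast hn
  have hn0 : (0:ℝ) < n := by linarith
  have hinv : 0 < 1 / (n:ℝ) := by positivity
  -- `exp 1 < 3 ≤ n`, hence `1 ≤ log n` and `p ≤ 1`
  have hlogn : 1 ≤ Real.log n := by
    rw [Real.le_log_iff_exp_le hn0]
    linarith [Real.exp_one_lt_d9]
  have hp1 : p ≤ 1 := by
    have : 1 / Real.log n ≤ 1 := by rw [div_le_one (by linarith)]; exact hlogn
    linarith [le_abs_self p]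
  have hL : 0 < Real.log ((n:ℝ) + 1) := Real.log_pos (by linarith)
  have hle1 : ∀ (y : Fin n → ℝ), (∀ a, 0 ≤ y a) → ∑ a, y a ≤ 1 → ∀ a, y a ≤ 1 := by
    intro y h0 h1 a
    exact (Finset.single_le_sum (fun b _ => h0 b) (Finset.mem_univ a)).trans h1
  have hvall : ∀ᵐ s ∂(volume.restrict (Set.Icc (0:ℝ) T)), ∀ a, 0 ≤ v a s :=
    ae_all_iff.2 hv_nonneg
  have hint : ∀ y : Fin n → ℝ → ℝ, (∀ a, Measurable (y a)) →
      (∀ᵐ s ∂(volume.restrict (Set.Icc (0:ℝ) T)), (∀ a, 0 ≤ y a s) ∧ ∑ a, y a s ≤ 1) →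
      ∀ a, IntervalIntegrable (fun s => v a s * y a s) volume 0 T := by
    intro y hm hf a
    rw [intervalIntegrable_iff_integrableOn_Icc_of_le hT.le]
    refine Integrable.mono (hv_int a) ((hv_meas a).mul (hm a)).aestronglyMeasurable ?_
    filter_upwards [hf] with s hs
    have h1 := hle1 (fun b => y b s) hs.1 hs.2 a
    rw [norm_mul, Real.norm_of_nonneg (hs.1 a)]
    exact mul_le_of_le_one_right (norm_nonneg _) h1
  have hvint : ∀ a, IntervalIntegrable (v a) volume 0 T := fun a => by
    rw [intervalIntegrable_iff_integrableOn_Icc_of_le hT.le]; exact hv_int a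
  have hxint := hint x hx_meas hx_feas
  have hsint := hint xstar hxstar_meas hxstar_feas
  have hvx0 : ∀ a, ∀ᵐ s ∂(volume.restrict (Set.Icc (0:ℝ) T)), 0 ≤ v a s * x a s := by
    intro a
    filter_upwards [hvall, hx_feas] with s h1 h2
    exact mul_nonneg (h1 a) (h2.1 a)
  have hgrow := fun a => log_growth hT.le hinv (hxint a) (hvx0 a) (hU a)
  have hTmem : T ∈ Set.Icc 0 T := ⟨hT.le, le_rfl⟩
  have hUlow : ∀ a, 1 / (n:ℝ) ≤ U a T := fun a => (hgrow a).2.1 T hTmem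
  have hUpos : ∀ a, 0 < U a T := fun a => hinv.trans_le (hUlow a)
  have hUhigh : ∀ a, U a T ≤ 1 / (n:ℝ) + 1 := by
    intro a
    rw [hU a T, ← hv_unit a]
    gcongr
    refine intervalIntegral.integral_mono_ae_restrict hT.le (hxint a) (hvint a) ?_
    filter_upwards [hvall, hx_feas] with s h1 h2
    exact mul_le_of_le_one_right (h1 a) (hle1 (fun b => x b s) h2.1 h2.2 a)
  have hratio : ∑ a, Ustar a / U a T ≤ n * Real.log ((n:ℝ) + 1) := by
    calc ∑ a, Ustar a / U a T
        = ∫ s in (0:ℝ)..T, ∑ a, v a s * xstar a s / U a T := by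
          rw [intervalIntegral.integral_finsetSum (fun a _ => (hsint a).div_const _)]
          simp_rw [intervalIntegral.integral_div, hUstar]
      _ ≤ ∫ s in (0:ℝ)..T, ∑ a, v a s * x a s / U a s := by
          refine intervalIntegral.integral_mono_ae_restrict hT.le
            (by simpa only [Finset.sum_fn] using
              IntervalIntegrable.sum Finset.univ fun a _ => (hsint a).div_const (U a T))
            (by simpa only [Finset.sum_fn] using
              IntervalIntegrable.sum Finset.univ fun a _ => (hgrow a).2.2.1) ?_
          filter_upwards [hvall, hx_feas, hxstar_feas, hgreedy,
            ae_restrict_mem measurableSet_Icc] with s h1 h2 h3 h4 hs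
          have hupos : ∀ a, 0 < U a s := fun a => hinv.trans_le ((hgrow a).2.1 s hs)
          refine le_trans (Finset.sum_le_sum fun a _ => ?_)
            (greedy_rate_dominates (u := fun a => U a s) h1 hupos h2.1 h4.1 h3.1 h3.2 h4.2)
          exact div_le_div_of_nonneg_left (mul_nonneg (h1 a) (h3.1 a)) (hupos a)
            ((hgrow a).1 hs hTmem hs.2)
      _ = ∑ a, ∫ s in (0:ℝ)..T, v a s * x a s / U a s :=
          intervalIntegral.integral_finsetSum fun a _ => (hgrow a).2.2.1
      _ ≤ ∑ _a : Fin n, Real.log ((n:ℝ) + 1) := by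
          refine Finset.sum_le_sum fun a _ => (hgrow a).2.2.2.trans ?_
          rw [← Real.log_div (hUpos a).ne' hinv.ne']
          apply Real.log_le_log (div_pos (hUpos a) hinv)
          rw [div_le_iff₀ hinv]
          refine (hUhigh a).trans_eq ?_
          field_simp
          ring
      _ = n * Real.log ((n:ℝ) + 1) := by simp
  have hmain := pmean_le_of_sum_ratio_le (by omega) hp0 hp1 hUstar_pos hUpos
    (Real.exp_pos 2).le hratio
    (fun a b => rpow_le_exp_two_mul hn hp (hUlow a) (hUhigh a) (hUlow b) (hUhigh b))
  have hpm0 : 0 ≤ ((1 / (n : ℝ)) * ∑ a, (U a T) ^ p) ^ (1 / p) :=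
    rpow_nonneg (mul_nonneg hinv.le
      (Finset.sum_nonneg fun a _ => rpow_nonneg (hUpos a).le p)) _
  rw [ge_iff_le, div_le_iff₀ (by positivity)]
  have := mul_nonneg (mul_nonneg (Real.exp_pos 2).le hL.le) hpm0
  linarith
end

section
/- Suppose the feasible allocation x satisfies the Nashian Greedy condition and the valuations have unit monopolist utilities. Let x* be any feasible allocation and U*_a = ∫_0^T v a s · x*_a s ds. Then for every t ∈ [0,T], every W > 0, every β > 0, and every subset S ⊆ {a : U a t ≤ β·W}: (1/n) ∑_{a∈S} U*_a ≤ β · log(n+1) · W + (1/n) ∑_{a∈S} (1 − ∫_0^t v a s ds). -/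
open MeasureTheory Real

/-!
Write `m s = ∑ b, v b s * x b s / U b s`. Since the greedy allocation only serves agents maximising
`v b s / U b s` and distributes the whole unit, `v a s ≤ U a s * m s` for every agent `a`
(`greedy_le`). For `a ∈ S` and `s ≤ t`, monotonicity of `U a` gives `U a s ≤ β W`, so any feasible
`xstar` satisfies `∑ a ∈ S, v a s * xstar a s ≤ β W * m s`.

On `[0, t]`, the function `m` is a.e. the derivative of `∑ b, log (U b s)`, whose increment is at
most `n * log (n + 1)` because each `U b` rises from `1 / n` to at most `1 / n + 1`. As `log (U b)`
is monotone, the integral of its derivative is at most its increment (`log_primitive`), so absolute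
continuity is not needed. On `[t, T]`, the bound `xstar a s ≤ 1` gives a contribution of at most
`1 - ∫ s in 0..t, v a s` per agent.
-/

/-- A valuation weighted by a share in `[0, 1]` is integrable. -/
lemma integrableOn_mul_share {T : ℝ} {v x : ℝ → ℝ} (hv_meas : Measurable v)
    (hx_meas : Measurable x) (hv_int : IntegrableOn v (Set.Icc (0:ℝ) T))
    (h : ∀ᵐ s ∂(volume.restrict (Set.Icc (0:ℝ) T)), 0 ≤ v s ∧ 0 ≤ x s ∧ x s ≤ 1) :
    IntegrableOn (fun s => v s * x s) (Set.Icc (0:ℝ) T) := by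
  refine Integrable.mono' hv_int (hv_meas.mul hx_meas).aestronglyMeasurable ?_
  filter_upwards [h] with s hs
  rw [Real.norm_of_nonneg (mul_nonneg hs.1 hs.2.1)]
  exact mul_le_of_le_one_right hs.1 hs.2.2

/-- For the primitive `F s = c + ∫ r in 0..s, u r` of a nonnegative integrable `u`, with `c > 0`:
`F` is monotone, `log ∘ F` has a.e. derivative `u / F`, and that derivative is integrable with
integral at most the increment of `log ∘ F`. -/
lemma log_primitive {t c : ℝ} (ht : 0 ≤ t) (hc : 0 < c) {u F : ℝ → ℝ}
    (hu : IntegrableOn u (Set.Icc (0:ℝ) t))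
    (hu0 : ∀ᵐ s ∂(volume.restrict (Set.Icc (0:ℝ) t)), 0 ≤ u s)
    (hF : ∀ s, F s = c + ∫ r in (0:ℝ)..s, u r) :
    MonotoneOn F (Set.Icc 0 t) ∧ (∀ s ∈ Set.Icc 0 t, 0 < F s) ∧
    IntervalIntegrable (deriv fun s => log (F s)) volume 0 t ∧
    (∫ s in (0:ℝ)..t, deriv (fun s => log (F s)) s) ≤ log (F t) - log c ∧
    ∀ᵐ s ∂(volume.restrict (Set.Icc (0:ℝ) t)), deriv (fun s => log (F s)) s = u s / F s := by
  have hint : IntervalIntegrable u volume 0 t :=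
    (intervalIntegrable_iff_integrableOn_Icc_of_le ht).mpr hu
  have hF0 : F 0 = c := by simp [hF]
  have hmono : MonotoneOn F (Set.Icc 0 t) := by
    intro p hp q hq hpq
    have h1 : IntervalIntegrable u volume 0 p := hint.mono_set (by
      rw [Set.uIcc_of_le hp.1, Set.uIcc_of_le ht]; exact Set.Icc_subset_Icc le_rfl hp.2)
    have h2 : IntervalIntegrable u volume p q := hint.mono_set (by
      rw [Set.uIcc_of_le hpq, Set.uIcc_of_le ht]; exact Set.Icc_subset_Icc hp.1 hq.2)
    have h3 : 0 ≤ ∫ r in p..q, u r :=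
      intervalIntegral.integral_nonneg_of_ae_restrict hpq
        (ae_restrict_of_ae_restrict_of_subset (Set.Icc_subset_Icc hp.1 hq.2) hu0)
    rw [hF, hF, ← intervalIntegral.integral_add_adjacent_intervals h1 h2]
    linarith
  have hpos : ∀ s ∈ Set.Icc 0 t, 0 < F s := fun s hs => by
    have := hmono (Set.left_mem_Icc.mpr ht) hs hs.1
    linarith
  have hlog : MonotoneOn (fun s => log (F s)) (Set.uIcc 0 t) := by
    rw [Set.uIcc_of_le ht]
    intro p hp q hq hpq
    exact Real.log_le_log (hpos p hp) (hmono hp hq hpq)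
  refine ⟨hmono, hpos, hlog.intervalIntegrable_deriv, ?_, ?_⟩
  · have h := hlog.intervalIntegral_deriv_mem_uIcc
    have h' : log (F 0) ≤ log (F t) := hlog (by simp) (by simp) ht
    rw [Set.uIcc_of_le (by linarith)] at h
    simpa [hF0] using h.2
  · rw [ae_restrict_iff' measurableSet_Icc]
    filter_upwards [hint.ae_hasDerivAt_integral] with s hs hst
    have hd := hs (by rwa [Set.uIcc_of_le ht]) 0 (by simp)
    have hd' : HasDerivAt F (u s) s := by
      have : F = fun s => c + ∫ r in (0:ℝ)..s, u r := funext hF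
      rw [this]
      exact hd.const_add c
    exact (hd'.log (hpos s hst).ne').deriv

/-- At a time where the whole unit `∑ a, x a = 1` goes to agents maximising `v b / U b`, the
weighted average `∑ b, v b * x b / U b` dominates every ratio `v a / U a`. -/
lemma greedy_le {n : ℕ} {v x U : Fin n → ℝ} (hx0 : ∀ a, 0 ≤ x a) (hU : ∀ a, 0 < U a)
    (hsum : ∑ a, x a = 1) (hg : ∀ a b, 0 < x a → v a * U b ≥ v b * U a) (a : Fin n) :
    v a ≤ U a * ∑ b, v b * x b / U b := by
  have h : ∀ b, x b * v a ≤ U a * (v b * x b / U b) := by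
    intro b
    rcases (hx0 b).eq_or_lt with h0 | h0
    · simp [← h0]
    · have h1 := hg b a h0
      rw [← mul_div_assoc, le_div_iff₀ (hU b)]
      nlinarith
  calc v a = ∑ b, x b * v a := by rw [← Finset.sum_mul, hsum, one_mul]
    _ ≤ ∑ b, U a * (v b * x b / U b) := Finset.sum_le_sum fun b _ => h b
    _ = _ := by rw [Finset.mul_sum]

lemma share_le_one {n : ℕ} {x : Fin n → ℝ} (hx0 : ∀ a, 0 ≤ x a) (hsum : ∑ a, x a ≤ 1)
    (a : Fin n) : x a ≤ 1 :=
  (Finset.single_le_sum (fun b _ => hx0 b) (Finset.mem_univ a)).trans hsum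

theorem stmt_5
    (n : ℕ) (hn : 1 ≤ n) (T : ℝ) (hT : 0 < T)
    (v : Fin n → ℝ → ℝ)
    (hv_meas : ∀ a, Measurable (v a))
    (hv_nonneg : ∀ a, ∀ᵐ s ∂(volume.restrict (Set.Icc (0:ℝ) T)), 0 ≤ v a s)
    (hv_int : ∀ a, IntegrableOn (v a) (Set.Icc (0:ℝ) T))
    (hv_unit : ∀ a, ∫ s in (0:ℝ)..T, v a s = 1)
    (x : Fin n → ℝ → ℝ)
    (hx_meas : ∀ a, Measurable (x a))
    (hx_feas : ∀ᵐ s ∂(volume.restrict (Set.Icc (0:ℝ) T)),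
      (∀ a, 0 ≤ x a s) ∧ ∑ a, x a s ≤ 1)
    (U : Fin n → ℝ → ℝ)
    (hU : ∀ a t, U a t = 1 / (n : ℝ) + ∫ s in (0:ℝ)..t, v a s * x a s)
    (hgreedy : ∀ᵐ s ∂(volume.restrict (Set.Icc (0:ℝ) T)),
      (∑ a, x a s = 1) ∧
      ∀ a b, 0 < x a s → v a s * U b s ≥ v b s * U a s)
    (xstar : Fin n → ℝ → ℝ)
    (hxstar_meas : ∀ a, Measurable (xstar a))
    (hxstar_feas : ∀ᵐ s ∂(volume.restrict (Set.Icc (0:ℝ) T)),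
      (∀ a, 0 ≤ xstar a s) ∧ ∑ a, xstar a s ≤ 1)
    (Ustar : Fin n → ℝ)
    (hUstar : ∀ a, Ustar a = ∫ s in (0:ℝ)..T, v a s * xstar a s) :
    ∀ t ∈ Set.Icc (0:ℝ) T, ∀ W : ℝ, 0 < W → ∀ β : ℝ, 0 < β →
      ∀ S : Finset (Fin n), (∀ a ∈ S, U a t ≤ β * W) →
        (1 / (n : ℝ)) * ∑ a ∈ S, Ustar a ≤
          β * Real.log ((n : ℝ) + 1) * W +
            (1 / (n : ℝ)) * ∑ a ∈ S, (1 - ∫ s in (0:ℝ)..t, v a s) := by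
  intro t ht W hW β hβ S hS
  have hn0 : (0:ℝ) < n := by exact_mod_cast hn
  have hsub : Set.Icc (0:ℝ) t ⊆ Set.Icc 0 T := Set.Icc_subset_Icc le_rfl ht.2
  have hsub' : Set.Icc t T ⊆ Set.Icc 0 T := Set.Icc_subset_Icc ht.1 le_rfl
  have hx : ∀ a, ∀ᵐ s ∂(volume.restrict (Set.Icc (0:ℝ) T)), 0 ≤ v a s ∧ 0 ≤ x a s ∧ x a s ≤ 1 := by
    intro a
    filter_upwards [hv_nonneg a, hx_feas] with s h1 h2
    exact ⟨h1, h2.1 a, share_le_one h2.1 h2.2 a⟩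
  have hxs : ∀ a, ∀ᵐ s ∂(volume.restrict (Set.Icc (0:ℝ) T)),
      0 ≤ v a s ∧ 0 ≤ xstar a s ∧ xstar a s ≤ 1 := by
    intro a
    filter_upwards [hv_nonneg a, hxstar_feas] with s h1 h2
    exact ⟨h1, h2.1 a, share_le_one h2.1 h2.2 a⟩
  have hvx := fun a => integrableOn_mul_share (hv_meas a) (hx_meas a) (hv_int a) (hx a)
  have hvxs := fun a => integrableOn_mul_share (hv_meas a) (hxstar_meas a) (hv_int a) (hxs a)
  have hvx0 : ∀ a, ∀ᵐ s ∂(volume.restrict (Set.Icc (0:ℝ) T)), 0 ≤ v a s * x a s := fun a => by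
    filter_upwards [hx a] with s h using mul_nonneg h.1 h.2.1
  have hL := fun a => log_primitive ht.1 (one_div_pos.mpr hn0) ((hvx a).mono_set hsub)
    (ae_restrict_of_ae_restrict_of_subset hsub (hvx0 a)) (hU a)
  have toI : ∀ f : ℝ → ℝ, IntegrableOn f (Set.Icc 0 T) →
      IntervalIntegrable f volume 0 t ∧ IntervalIntegrable f volume t T := fun f hf =>
    ⟨(intervalIntegrable_iff_integrableOn_Icc_of_le ht.1).mpr (hf.mono_set hsub),
      (intervalIntegrable_iff_integrableOn_Icc_of_le ht.2).mpr (hf.mono_set hsub')⟩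
  have hUt : ∀ a, U a t ≤ 1 / (n:ℝ) + 1 := by
    intro a
    have h1 : ∫ s in (0:ℝ)..t, v a s * x a s ≤ ∫ s in (0:ℝ)..t, v a s := by
      refine intervalIntegral.integral_mono_ae_restrict ht.1 (toI _ (hvx a)).1
        (toI _ (hv_int a)).1 ?_
      filter_upwards [ae_restrict_of_ae_restrict_of_subset hsub (hx a)] with s h
      exact mul_le_of_le_one_right h.1 h.2.2
    have h2 : 0 ≤ ∫ s in t..T, v a s :=
      intervalIntegral.integral_nonneg_of_ae_restrict ht.2
        (ae_restrict_of_ae_restrict_of_subset hsub' (hv_nonneg a))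
    have h3 := intervalIntegral.integral_add_adjacent_intervals (toI _ (hv_int a)).1
      (toI _ (hv_int a)).2
    rw [hv_unit a] at h3
    rw [hU]
    linarith
  have hlog : ∀ a, log (U a t) - log (1 / (n:ℝ)) ≤ log ((n:ℝ) + 1) := by
    intro a
    have h0 := (hL a).2.1 t ⟨ht.1, le_rfl⟩
    rw [← Real.log_div h0.ne' (one_div_pos.mpr hn0).ne']
    refine Real.log_le_log (div_pos h0 (one_div_pos.mpr hn0)) ?_
    rw [div_le_iff₀ (one_div_pos.mpr hn0)]
    refine (hUt a).trans (le_of_eq ?_)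
    field_simp
    ring
  have hfirst : ∑ a ∈ S, ∫ s in (0:ℝ)..t, v a s * xstar a s ≤
      β * W * (n * log ((n:ℝ) + 1)) := by
    rw [← intervalIntegral.integral_finsetSum fun a _ => (toI _ (hvxs a)).1]
    have hI : IntervalIntegrable (fun s => ∑ b, deriv (fun s => log (U b s)) s) volume 0 t := by
      have := IntervalIntegrable.sum Finset.univ fun b (_ : b ∈ Finset.univ) => (hL b).2.2.1
      rw [Finset.sum_fn] at this
      exact this
    calc ∫ s in (0:ℝ)..t, ∑ a ∈ S, v a s * xstar a s
        ≤ ∫ s in (0:ℝ)..t, β * W * ∑ b, deriv (fun s => log (U b s)) s := by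
          refine intervalIntegral.integral_mono_ae_restrict ht.1 ?_ (hI.const_mul _) ?_
          · have := IntervalIntegrable.sum S fun b (_ : b ∈ S) => (toI _ (hvxs b)).1
            rw [Finset.sum_fn] at this
            exact this
          · filter_upwards [ae_restrict_of_ae_restrict_of_subset hsub hx_feas,
              ae_restrict_of_ae_restrict_of_subset hsub hxstar_feas,
              ae_restrict_of_ae_restrict_of_subset hsub hgreedy,
              ae_restrict_of_ae_restrict_of_subset hsub (ae_all_iff.mpr hvx0),
              ae_all_iff.mpr fun b => (hL b).2.2.2.2,
              ae_restrict_mem measurableSet_Icc] with s h1 h2 h3 h4 h5 hs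
            simp only [h5]
            have hm : 0 ≤ ∑ b, v b s * x b s / U b s :=
              Finset.sum_nonneg fun b _ => div_nonneg (h4 b) ((hL b).2.1 s hs).le
            calc ∑ a ∈ S, v a s * xstar a s
                ≤ ∑ a ∈ S, (β * W * ∑ b, v b s * x b s / U b s) * xstar a s := by
                  refine Finset.sum_le_sum fun a ha => mul_le_mul_of_nonneg_right ?_ (h2.1 a)
                  refine (greedy_le (v := fun b => v b s) (x := fun b => x b s)
                    (U := fun b => U b s) h1.1 (fun b => (hL b).2.1 s hs) h3.1 h3.2 a).trans ?_
                  refine mul_le_mul_of_nonneg_right ?_ hm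
                  exact ((hL a).1 hs ⟨ht.1, le_rfl⟩ hs.2).trans (hS a ha)
              _ = (β * W * ∑ b, v b s * x b s / U b s) * ∑ a ∈ S, xstar a s := by
                  rw [← Finset.mul_sum]
              _ ≤ β * W * ∑ b, v b s * x b s / U b s := by
                  refine mul_le_of_le_one_right (by positivity) ?_
                  exact (Finset.sum_le_sum_of_subset_of_nonneg (Finset.subset_univ S)
                    fun b _ _ => h2.1 b).trans h2.2
      _ = β * W * ∑ b, ∫ s in (0:ℝ)..t, deriv (fun s => log (U b s)) s := by
          rw [intervalIntegral.integral_const_mul,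
            intervalIntegral.integral_finsetSum fun b _ => (hL b).2.2.1]
      _ ≤ β * W * ∑ _b : Fin n, log ((n:ℝ) + 1) := by
          refine mul_le_mul_of_nonneg_left ?_ (by positivity)
          exact Finset.sum_le_sum fun b _ => (hL b).2.2.2.1.trans (hlog b)
      _ = _ := by simp
  have hsecond : ∀ a, ∫ s in t..T, v a s * xstar a s ≤ 1 - ∫ s in (0:ℝ)..t, v a s := by
    intro a
    have h3 := intervalIntegral.integral_add_adjacent_intervals (toI _ (hv_int a)).1
      (toI _ (hv_int a)).2
    rw [hv_unit a] at h3
    rw [← h3, add_sub_cancel_left]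
    refine intervalIntegral.integral_mono_ae_restrict ht.2 (toI _ (hvxs a)).2
      (toI _ (hv_int a)).2 ?_
    filter_upwards [ae_restrict_of_ae_restrict_of_subset hsub' (hxs a)] with s h
    exact mul_le_of_le_one_right h.1 h.2.2
  have hsplit : ∑ a ∈ S, Ustar a = (∑ a ∈ S, ∫ s in (0:ℝ)..t, v a s * xstar a s) +
      ∑ a ∈ S, ∫ s in t..T, v a s * xstar a s := by
    rw [← Finset.sum_add_distrib]
    refine Finset.sum_congr rfl fun a _ => ?_
    rw [hUstar, intervalIntegral.integral_add_adjacent_intervals (toI _ (hvxs a)).1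
      (toI _ (hvxs a)).2]
  have htot : ∑ a ∈ S, Ustar a ≤ β * W * (n * log ((n:ℝ) + 1)) +
      ∑ a ∈ S, (1 - ∫ s in (0:ℝ)..t, v a s) := by
    rw [hsplit]
    exact add_le_add hfirst (Finset.sum_le_sum fun a _ => hsecond a)
  calc (1 / (n : ℝ)) * ∑ a ∈ S, Ustar a
      ≤ (1 / (n : ℝ)) * (β * W * (n * log ((n:ℝ) + 1)) +
          ∑ a ∈ S, (1 - ∫ s in (0:ℝ)..t, v a s)) :=
        mul_le_mul_of_nonneg_left htot (by positivity)
    _ = _ := by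
        field_simp
end

section
/- Suppose the feasible allocation x satisfies the Nashian Greedy condition and the valuations have unit monopolist utilities. Let −1 ≤ p < 0, let x* be a feasible allocation with U*_a = ∫_0^T v a s · x*_a s ds > 0 for every agent a, and let W = ((1/n) ∑_a (U*_a)^p)^{1/p}. Then ((1/n) ∑_a (U a T)^p)^{1/p} ≥ (|p|/(|p|+1))^{1/|p|} · n^{−|p|/(|p|+1)} · (log(n+1))^{−1/(|p|+1)} · W. -/
/-!
Write `q = |p| ∈ (0, 1]`, `L = log (n + 1)`, `u a = U a T`, `w a = Ustar a`.

The greedy rule maximises the growth rate of `∑ a, log (U a)`: whenever `∑ a, x a s = 1` and the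
rule holds at `s`, the rate `lam s = ∑ a, v a s * x a s / U a s` dominates `v b s / U b s` for every
agent `b`.  Since `U b` is nondecreasing, `v b s * xstar b s / u b ≤ xstar b s * lam s`; summing over
`b` (with `∑ b, xstar b s ≤ 1`) and integrating gives
`∑ b, w b / u b ≤ ∫ lam ≤ ∑ a, log (n * u a) ≤ n * L`, because `u a ≤ 1 + 1 / n`.
The bound `∫ v a * x a / U a ≤ log (n * u a)` is `integral_div_primitive_le_log`.

Let `t = (n ^ q * L) ^ (1 / (q + 1))`.  An agent with `w a / u a ≤ t` has
`u a ^ (-q) ≤ t ^ q * w a ^ (-q)`; any other agent has, by `u a ≥ 1 / n`,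
`u a ^ (-q) ≤ n ^ q ≤ n ^ q * (w a / u a) / t`.  Summing,
`∑ u ^ (-q) ≤ t ^ q * ∑ w ^ (-q) + n ^ (q + 1) * L / t = t ^ q * (∑ w ^ (-q) + n)`, and since `w ≤ 1`
this is at most `2 * t ^ q * ∑ w ^ (-q)`.  As `q ≤ 1`, `2 ≤ (q + 1) / q`, and raising to the power
`-1 / q` is the claim (`pmean_bound`).
-/

open MeasureTheory Real

/-- The `≤` half of `∫ F' / F = log F T - log F 0` for the primitive `F` of a nonnegative integrable
function, together with the monotonicity of `F` and the integrability of `F' / F`.  The inequality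
only needs that `log F` is monotone with derivative `f / F` almost everywhere. -/
lemma integral_div_primitive_le_log {T c : ℝ} (hT : 0 < T) (hc : 0 < c) {f F : ℝ → ℝ}
    (hf : IntervalIntegrable f volume 0 T)
    (hf0 : ∀ᵐ s ∂(volume.restrict (Set.Icc (0:ℝ) T)), 0 ≤ f s)
    (hF : ∀ t, F t = c + ∫ s in (0:ℝ)..t, f s) :
    MonotoneOn F (Set.Icc 0 T) ∧
    IntervalIntegrable (fun s => f s / F s) volume 0 T ∧
    ∫ s in (0:ℝ)..T, f s / F s ≤ log (F T) - log c := by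
  have hF0 : F 0 = c := by simp [hF]
  have hsub : ∀ a ∈ Set.Icc 0 T, ∀ b ∈ Set.Icc 0 T, IntervalIntegrable f volume a b := by
    intro a ha b hb
    apply hf.mono_set
    rw [Set.uIcc_of_le hT.le]
    exact Set.uIcc_subset_Icc ha hb
  have h0 : (0:ℝ) ∈ Set.Icc 0 T := ⟨le_rfl, hT.le⟩
  have hmono : MonotoneOn F (Set.Icc 0 T) := by
    intro a ha b hb hab
    have h1 := intervalIntegral.integral_add_adjacent_intervals (hsub 0 h0 a ha) (hsub a ha b hb)
    have h2 : 0 ≤ ∫ s in a..b, f s := by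
      apply intervalIntegral.integral_nonneg_of_ae_restrict hab
      exact ae_mono (Measure.restrict_mono (Set.Icc_subset_Icc ha.1 hb.2) le_rfl) hf0
    rw [hF a, hF b]
    linarith
  have hge : ∀ s ∈ Set.Icc 0 T, c ≤ F s := fun s hs => hF0 ▸ hmono h0 hs hs.1
  have hcont : ContinuousOn F (Set.uIcc 0 T) := by
    have : F = fun t => c + ∫ s in (0:ℝ)..t, f s := funext hF
    rw [this]
    apply continuousOn_const.add
    exact intervalIntegral.continuousOn_primitive_interval' hf (by simp)
  have hint : IntervalIntegrable (fun s => f s / F s) volume 0 T := by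
    simp only [div_eq_mul_inv]
    apply hf.mul_continuousOn
    apply hcont.inv₀
    intro s hs
    rw [Set.uIcc_of_le hT.le] at hs
    exact (hc.trans_le (hge s hs)).ne'
  refine ⟨hmono, hint, ?_⟩
  have hlog : MonotoneOn (fun t => log (F t)) (Set.uIcc 0 T) := by
    rw [Set.uIcc_of_le hT.le]
    intro a ha b hb hab
    exact log_le_log (hc.trans_le (hge a ha)) (hmono ha hb hab)
  have hmem := hlog.intervalIntegral_deriv_mem_uIcc
  have hle : log c ≤ log (F T) := log_le_log hc (hge T ⟨hT.le, le_rfl⟩)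
  rw [hF0, Set.uIcc_of_le (by linarith)] at hmem
  have heq : ∫ s in (0:ℝ)..T, f s / F s = ∫ s in (0:ℝ)..T, deriv (fun t => log (F t)) s := by
    apply intervalIntegral.integral_congr_ae
    filter_upwards [hf.ae_hasDerivAt_integral] with s hs hsm
    have hsm' : s ∈ Set.uIcc 0 T := Set.uIoc_subset_uIcc hsm
    have hd := hs hsm' 0 (by simp)
    have hdF : HasDerivAt F (f s) s := by
      have : F = fun t => c + ∫ s in (0:ℝ)..t, f s := funext hF
      rw [this]
      exact hd.const_add c
    rw [Set.uIcc_of_le hT.le] at hsm'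
    exact ((hdF.log (hc.trans_le (hge s hsm')).ne').deriv).symm
  rw [heq]
  exact hmem.2

/-- The split of one agent's contribution according to whether `w / u ≤ t`. -/
lemma rpow_neg_split {q N u w t : ℝ} (hq : 0 < q) (hN : 0 < N) (hu : 1 / N ≤ u) (hw : 0 < w)
    (ht : 0 < t) : u ^ (-q) ≤ t ^ q * w ^ (-q) + N ^ q * (w / u) / t := by
  have hu0 : 0 < u := lt_of_lt_of_le (by positivity) hu
  rcases le_total (w / u) t with h | h
  · have h1 : (w / t) ≤ u := by
      rw [div_le_iff₀ hu0] at h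
      rw [div_le_iff₀ ht]; linarith
    have h2 : u ^ (-q) ≤ (w / t) ^ (-q) :=
      rpow_le_rpow_of_nonpos (by positivity) h1 (by linarith)
    have h3 : (w / t) ^ (-q) = t ^ q * w ^ (-q) := by
      rw [div_rpow hw.le ht.le, rpow_neg ht.le, div_inv_eq_mul, mul_comm]
    have : 0 ≤ N ^ q * (w / u) / t := by positivity
    linarith
  · have h2 : u ^ (-q) ≤ (1 / N) ^ (-q) :=
      rpow_le_rpow_of_nonpos (by positivity) hu (by linarith)
    have h3 : (1 / N) ^ (-q) = N ^ q := by
      rw [one_div, inv_rpow hN.le, rpow_neg hN.le, inv_inv]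
    have h4 : N ^ q ≤ N ^ q * (w / u) / t := by
      rw [le_div_iff₀ ht]
      gcongr
    have : 0 ≤ t ^ q * w ^ (-q) := by positivity
    linarith

/-- The comparison of `p`-means, deduced from the harmonic-type bound `∑ w / u ≤ n * L`. -/
lemma pmean_bound {n : ℕ} (hn : 1 ≤ n) {L p : ℝ} (hL : 0 < L) (hp_lb : -1 ≤ p) (hp : p < 0)
    {u w : Fin n → ℝ} (hu : ∀ a, 1 / (n : ℝ) ≤ u a) (hw : ∀ a, 0 < w a) (hw1 : ∀ a, w a ≤ 1)
    (hsum : ∑ a, w a / u a ≤ n * L) :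
    ((1 / (n : ℝ)) * ∑ a, (u a) ^ p) ^ (1 / p) ≥
      (|p| / (|p| + 1)) ^ (1 / |p|) * (n : ℝ) ^ (-(|p| / (|p| + 1))) *
        L ^ (-(1 / (|p| + 1))) * ((1 / (n : ℝ)) * ∑ a, (w a) ^ p) ^ (1 / p) := by
  obtain ⟨q, rfl⟩ : ∃ q, p = -q := ⟨-p, by ring⟩
  have hq : 0 < q := by linarith
  have hq1 : q ≤ 1 := by linarith
  rw [abs_neg, abs_of_pos hq]
  have hN : (0:ℝ) < n := by exact_mod_cast hn
  have : Nonempty (Fin n) := ⟨⟨0, hn⟩⟩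
  have hu0 : ∀ a, 0 < u a := fun a => lt_of_lt_of_le (by positivity) (hu a)
  set N : ℝ := (n : ℝ) with hNdef
  set t : ℝ := N ^ (q / (q + 1)) * L ^ (1 / (q + 1)) with ht_def
  have ht : 0 < t := by positivity
  have htq : t ^ q * t = N ^ q * L := by
    rw [← rpow_add_one ht.ne', ht_def, mul_rpow (by positivity) (by positivity),
      ← rpow_mul hN.le, ← rpow_mul hL.le, div_mul_cancel₀ _ (by positivity),
      div_mul_cancel₀ _ (by positivity), rpow_one]
  have hA : 0 < ∑ a, u a ^ (-q) :=
    Finset.sum_pos (fun a _ => rpow_pos_of_pos (hu0 a) _) Finset.univ_nonempty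
  have hB : 0 < ∑ a, w a ^ (-q) :=
    Finset.sum_pos (fun a _ => rpow_pos_of_pos (hw a) _) Finset.univ_nonempty
  have hBn : N ≤ ∑ a, w a ^ (-q) := by
    have : ∑ _a : Fin n, (1:ℝ) ≤ ∑ a, w a ^ (-q) :=
      Finset.sum_le_sum fun a _ =>
        one_le_rpow_of_pos_of_le_one_of_nonpos (hw a) (hw1 a) (by linarith)
    simpa using this
  have h1 : ∑ a, u a ^ (-q) ≤ t ^ q * ∑ a, w a ^ (-q) + N ^ q * (∑ a, w a / u a) / t := by
    rw [Finset.mul_sum, Finset.mul_sum, Finset.sum_div, ← Finset.sum_add_distrib]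
    exact Finset.sum_le_sum fun a _ => rpow_neg_split hq hN (hu a) (hw a) ht
  have h2 : N ^ q * (∑ a, w a / u a) / t ≤ N * t ^ q := by
    rw [div_le_iff₀ ht]
    calc N ^ q * (∑ a, w a / u a) ≤ N ^ q * (N * L) := by gcongr
      _ = N * (N ^ q * L) := by ring
      _ = N * t ^ q * t := by rw [← htq]; ring
  have htq0 : 0 < t ^ q := by positivity
  have h2q : 2 ≤ (q + 1) / q := by
    rw [le_div_iff₀ hq]; linarith
  have h3 : ∑ a, u a ^ (-q) ≤ ((q + 1) / q * t ^ q) * ∑ a, w a ^ (-q) := by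
    calc ∑ a, u a ^ (-q) ≤ 2 * (t ^ q * ∑ a, w a ^ (-q)) := by nlinarith
      _ ≤ (q + 1) / q * (t ^ q * ∑ a, w a ^ (-q)) := by gcongr
      _ = _ := by ring
  have h4 : 1 / N * ∑ a, u a ^ (-q) ≤ ((q + 1) / q * t ^ q) * (1 / N * ∑ a, w a ^ (-q)) := by
    calc 1 / N * ∑ a, u a ^ (-q) ≤ 1 / N * (((q + 1) / q * t ^ q) * ∑ a, w a ^ (-q)) := by gcongr
      _ = _ := by ring
  have h5 : (((q + 1) / q * t ^ q) * (1 / N * ∑ a, w a ^ (-q))) ^ (1 / -q) ≤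
      (1 / N * ∑ a, u a ^ (-q)) ^ (1 / -q) :=
    rpow_le_rpow_of_nonpos (by positivity) h4
      (div_nonpos_of_nonneg_of_nonpos zero_le_one (by linarith))
  have h6 : ((q + 1) / q * t ^ q) ^ (1 / -q) =
      (q / (q + 1)) ^ (1 / q) * N ^ (-(q / (q + 1))) * L ^ (-(1 / (q + 1))) := by
    have e : 1 / -q = -(1 / q) := by rw [div_neg]
    have e2 : q * -(1 / q) = -1 := by field_simp
    rw [e, mul_rpow (by positivity) htq0.le, ← rpow_mul ht.le, e2, rpow_neg_one, rpow_neg (by positivity),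
      ← inv_rpow (by positivity), inv_div, ht_def, mul_inv, rpow_neg hN.le, rpow_neg hL.le, mul_assoc]
  rw [mul_rpow (by positivity) (by positivity), h6] at h5
  exact h5

/-- Pointwise optimality of the greedy rule: the rate `∑ a, v a * x a / U a` of growth of
`∑ a, log (U a)` is at least that of any feasible `y`, even when each `U b` is replaced by a larger
final value `u b`. -/
lemma greedy_pointwise {n : ℕ} {v x U u y : Fin n → ℝ} (hv : ∀ a, 0 ≤ v a) (hx : ∀ a, 0 ≤ x a)
    (hxs : ∑ a, x a = 1) (hU : ∀ a, 0 < U a) (hUu : ∀ a, U a ≤ u a)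
    (hg : ∀ a b, 0 < x a → v a * U b ≥ v b * U a) (hy : ∀ a, 0 ≤ y a) (hys : ∑ a, y a ≤ 1) :
    ∑ b, v b * y b / u b ≤ ∑ a, v a * x a / U a := by
  have hlam : ∀ b, v b / U b ≤ ∑ a, v a * x a / U a := by
    intro b
    calc v b / U b = ∑ a, x a * (v b / U b) := by rw [← Finset.sum_mul, hxs, one_mul]
      _ ≤ ∑ a, v a * x a / U a := by
        refine Finset.sum_le_sum fun a _ => ?_
        rcases (hx a).eq_or_lt with h | h
        · simp [← h]
        · have : v b / U b ≤ v a / U a := by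
            rw [div_le_div_iff₀ (hU b) (hU a)]
            exact hg a b h
          calc x a * (v b / U b) ≤ x a * (v a / U a) := by gcongr
            _ = _ := by ring
  have hlam0 : 0 ≤ ∑ a, v a * x a / U a :=
    Finset.sum_nonneg fun a _ => div_nonneg (mul_nonneg (hv a) (hx a)) (hU a).le
  calc ∑ b, v b * y b / u b ≤ ∑ b, y b * ∑ a, v a * x a / U a := by
        refine Finset.sum_le_sum fun b _ => ?_
        have h1 : v b / u b ≤ v b / U b := div_le_div_of_nonneg_left (hv b) (hU b) (hUu b)
        calc v b * y b / u b = y b * (v b / u b) := by ring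
          _ ≤ y b * ∑ a, v a * x a / U a :=
            mul_le_mul_of_nonneg_left (h1.trans (hlam b)) (hy b)
    _ = (∑ b, y b) * ∑ a, v a * x a / U a := by rw [Finset.sum_mul]
    _ ≤ 1 * ∑ a, v a * x a / U a := by gcongr
    _ = _ := one_mul _

/-- Along a feasible allocation the accrued utility is integrable and at most the monopolist
utility. -/
lemma feasible_utility {n : ℕ} {T : ℝ} (hT : 0 < T) {v x : Fin n → ℝ → ℝ}
    (hv_nonneg : ∀ a, ∀ᵐ s ∂(volume.restrict (Set.Icc (0:ℝ) T)), 0 ≤ v a s)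
    (hv_int : ∀ a, IntegrableOn (v a) (Set.Icc (0:ℝ) T))
    (hv_unit : ∀ a, ∫ s in (0:ℝ)..T, v a s = 1)
    (hx_meas : ∀ a, Measurable (x a))
    (hx_feas : ∀ᵐ s ∂(volume.restrict (Set.Icc (0:ℝ) T)),
      (∀ a, 0 ≤ x a s) ∧ ∑ a, x a s ≤ 1) (a : Fin n) :
    IntervalIntegrable (fun s => v a s * x a s) volume 0 T ∧
    (∀ᵐ s ∂(volume.restrict (Set.Icc (0:ℝ) T)), 0 ≤ v a s * x a s) ∧
    ∫ s in (0:ℝ)..T, v a s * x a s ≤ 1 := by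
  have hx1 : ∀ᵐ s ∂(volume.restrict (Set.Icc (0:ℝ) T)), 0 ≤ x a s ∧ x a s ≤ 1 := by
    filter_upwards [hx_feas] with s hs
    exact ⟨hs.1 a, (Finset.single_le_sum (fun b _ => hs.1 b) (Finset.mem_univ a)).trans hs.2⟩
  have hint : IntegrableOn (fun s => v a s * x a s) (Set.Icc (0:ℝ) T) := by
    refine Integrable.mono (hv_int a)
      ((hv_int a).aestronglyMeasurable.mul (hx_meas a).aestronglyMeasurable) ?_
    filter_upwards [hx1] with s hs
    rw [norm_mul]
    refine mul_le_of_le_one_right (norm_nonneg _) ?_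
    rw [norm_eq_abs, abs_of_nonneg hs.1]
    exact hs.2
  have hii : ∀ {f : ℝ → ℝ}, IntegrableOn f (Set.Icc (0:ℝ) T) → IntervalIntegrable f volume 0 T :=
    fun h => (intervalIntegrable_iff_integrableOn_Icc_of_le hT.le).2 h
  refine ⟨hii hint, ?_, ?_⟩
  · filter_upwards [hx1, hv_nonneg a] with s h1 h2
    exact mul_nonneg h2 h1.1
  · rw [← hv_unit a]
    apply intervalIntegral.integral_mono_ae_restrict hT.le (hii hint) (hii (hv_int a))
    filter_upwards [hx1, hv_nonneg a] with s h1 h2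
    exact mul_le_of_le_one_right h2 h1.2

theorem stmt_7
    (n : ℕ) (hn : 1 ≤ n) (T : ℝ) (hT : 0 < T)
    (v : Fin n → ℝ → ℝ)
    (hv_meas : ∀ a, Measurable (v a))
    (hv_nonneg : ∀ a, ∀ᵐ s ∂(volume.restrict (Set.Icc (0:ℝ) T)), 0 ≤ v a s)
    (hv_int : ∀ a, IntegrableOn (v a) (Set.Icc (0:ℝ) T))
    (hv_unit : ∀ a, ∫ s in (0:ℝ)..T, v a s = 1)
    (x : Fin n → ℝ → ℝ)
    (hx_meas : ∀ a, Measurable (x a))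
    (hx_feas : ∀ᵐ s ∂(volume.restrict (Set.Icc (0:ℝ) T)),
      (∀ a, 0 ≤ x a s) ∧ ∑ a, x a s ≤ 1)
    (U : Fin n → ℝ → ℝ)
    (hU : ∀ a t, U a t = 1 / (n : ℝ) + ∫ s in (0:ℝ)..t, v a s * x a s)
    (hgreedy : ∀ᵐ s ∂(volume.restrict (Set.Icc (0:ℝ) T)),
      (∑ a, x a s = 1) ∧
      ∀ a b, 0 < x a s → v a s * U b s ≥ v b s * U a s)
    (p : ℝ) (hp_lb : -1 ≤ p) (hp : p < 0)
    (xstar : Fin n → ℝ → ℝ)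
    (hxstar_meas : ∀ a, Measurable (xstar a))
    (hxstar_feas : ∀ᵐ s ∂(volume.restrict (Set.Icc (0:ℝ) T)),
      (∀ a, 0 ≤ xstar a s) ∧ ∑ a, xstar a s ≤ 1)
    (Ustar : Fin n → ℝ)
    (hUstar : ∀ a, Ustar a = ∫ s in (0:ℝ)..T, v a s * xstar a s)
    (hUstar_pos : ∀ a, 0 < Ustar a)
    (W : ℝ) (hW : W = ((1 / (n : ℝ)) * ∑ a, (Ustar a) ^ p) ^ (1 / p)) :
    ((1 / (n : ℝ)) * ∑ a, (U a T) ^ p) ^ (1 / p) ≥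
      (|p| / (|p| + 1)) ^ (1 / |p|) * (n : ℝ) ^ (-(|p| / (|p| + 1))) *
        (Real.log ((n : ℝ) + 1)) ^ (-(1 / (|p| + 1))) * W := by
  have hN : (0:ℝ) < n := by exact_mod_cast hn
  have hc : (0:ℝ) < 1 / n := by positivity
  have hX := feasible_utility hT hv_nonneg hv_int hv_unit hx_meas hx_feas
  have hS := feasible_utility hT hv_nonneg hv_int hv_unit hxstar_meas hxstar_feas
  have hP := fun a => integral_div_primitive_le_log hT hc (hX a).1 (hX a).2.1 (hU a)
  have hT0 : (0:ℝ) ∈ Set.Icc 0 T := ⟨le_rfl, hT.le⟩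
  have hTT : T ∈ Set.Icc 0 T := ⟨hT.le, le_rfl⟩
  have hU0 : ∀ a, U a 0 = 1 / n := fun a => by simp [hU]
  have hge : ∀ a, ∀ s ∈ Set.Icc 0 T, 1 / (n:ℝ) ≤ U a s :=
    fun a s hs => hU0 a ▸ (hP a).1 hT0 hs hs.1
  have hL : 0 < log ((n:ℝ) + 1) := log_pos (by linarith)
  rw [hW]
  refine pmean_bound hn hL hp_lb hp (fun a => hge a T hTT) hUstar_pos
    (fun a => (hUstar a).trans_le (hS a).2.2) ?_
  have hlog : ∀ a, log (U a T) - log (1 / (n:ℝ)) ≤ log ((n:ℝ) + 1) := by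
    intro a
    have hpos : 0 < U a T := hc.trans_le (hge a T hTT)
    rw [← log_div hpos.ne' hc.ne']
    apply log_le_log (by positivity)
    rw [div_le_iff₀ hc, hU a T, add_mul, mul_one_div_cancel hN.ne']
    linarith [(hX a).2.2]
  calc ∑ a, Ustar a / U a T
      = ∫ s in (0:ℝ)..T, ∑ a, v a s * xstar a s / U a T := by
        rw [intervalIntegral.integral_finsetSum fun a _ => (hS a).1.div_const _]
        refine Finset.sum_congr rfl fun a _ => ?_
        rw [intervalIntegral.integral_div, hUstar a]
    _ ≤ ∫ s in (0:ℝ)..T, ∑ a, v a s * x a s / U a s := by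
        apply intervalIntegral.integral_mono_ae_restrict hT.le
        · simpa only [Finset.sum_fn] using
            IntervalIntegrable.sum Finset.univ fun a _ => (hS a).1.div_const (U a T)
        · simpa only [Finset.sum_fn] using
            IntervalIntegrable.sum Finset.univ fun a _ => (hP a).2.1
        · filter_upwards [ae_all_iff.2 hv_nonneg, hx_feas, hgreedy, hxstar_feas,
            ae_restrict_mem measurableSet_Icc] with s h1 h2 h3 h4 h5
          exact greedy_pointwise h1 h2.1 h3.1 (fun a => hc.trans_le (hge a s h5))
            (fun a => (hP a).1 h5 hTT h5.2) h3.2 h4.1 h4.2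
    _ = ∑ a, ∫ s in (0:ℝ)..T, v a s * x a s / U a s :=
        intervalIntegral.integral_finsetSum fun a _ => (hP a).2.1
    _ ≤ ∑ _a : Fin n, log ((n:ℝ) + 1) :=
        Finset.sum_le_sum fun a _ => (hP a).2.2.trans (hlog a)
    _ = n * log ((n:ℝ) + 1) := by simp
end

section
/- (Critical agents bound.) Let n ≥ 1, let p < 0, let U*_a > 0 for each a ∈ Fin n, and let W = ((1/n) ∑_a (U*_a)^p)^{1/p}. Let β > 0 and Φ > 0, let C ⊆ Fin n, and let R_a be reals with 0 ≤ R_a ≤ β·W for each a ∈ C. If (1/n) ∑_{a∈C} U*_a ≤ β · log(n+1) · W + (Φ/n) ∑_{a∈C} R_a, then |C| / n ≤ max{ (2β · log(n+1))^{|p|/(|p|+1)}, (2Φβ)^{|p|} }. -/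
/-!
Write `q = |p|`, `c = |C| / n` and `m` for the average of `Ustar` over `C`. Since `x ↦ x ^ p` is
convex for `p < 0`, Jensen's inequality on `C` (`card_mul_mean_rpow_le`) gives
`W ^ p ≥ c * m ^ p`, that is `m ≥ W * c ^ (1 / q)`. The left side of the hypothesis is `c * m`,
and its right side is at most `(β * log (n + 1) + Φ * β * c) * W`, so after cancelling `W`
`c * c ^ (1 / q) ≤ β * log (n + 1) + Φ * β * c`. The larger of the two terms on the right is at
least half of the left side, and the two cases give the two entries of the maximum.
-/

open Real

/-- Jensen's inequality for the convex function `x ↦ x ^ p`, `p < 0`, on a finite set. -/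
lemma card_mul_mean_rpow_le {ι : Type*} (s : Finset ι) (hs : s.Nonempty) (u : ι → ℝ)
    (hu : ∀ a, 0 < u a) (p : ℝ) (hp : p < 0) :
    (s.card : ℝ) * ((∑ a ∈ s, u a) / s.card) ^ p ≤ ∑ a ∈ s, u a ^ p := by
  have hk : (0 : ℝ) < s.card := by exact_mod_cast hs.card_pos
  have hS : 0 < ∑ a ∈ s, u a := Finset.sum_pos (fun a _ => hu a) hs
  set m := (∑ a ∈ s, u a) / s.card with hm
  have hmpos : 0 < m := div_pos hS hk
  -- The tangent line of `x ↦ x ^ p` at `m`, from `exp y ≥ y + 1` and `log x ≤ x - 1`.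
  have tangent : ∀ a ∈ s, m ^ p * (1 + p * (u a / m - 1)) ≤ u a ^ p := by
    intro a _
    have hx : 0 < u a / m := div_pos (hu a) hmpos
    have h1 : 1 + p * (u a / m - 1) ≤ (u a / m) ^ p := by
      rw [rpow_def_of_pos hx]
      have h2 := add_one_le_exp (log (u a / m) * p)
      have h3 := log_le_sub_one_of_pos hx
      nlinarith
    calc m ^ p * (1 + p * (u a / m - 1)) ≤ m ^ p * (u a / m) ^ p := by gcongr
      _ = u a ^ p := by
        rw [← mul_rpow hmpos.le hx.le, mul_div_cancel₀ _ hmpos.ne']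
  have h := Finset.sum_le_sum tangent
  have hcalc : ∑ a ∈ s, m ^ p * (1 + p * (u a / m - 1)) = s.card * m ^ p := by
    rw [← Finset.mul_sum, Finset.sum_add_distrib, ← Finset.mul_sum, Finset.sum_sub_distrib,
      ← Finset.sum_div]
    have : (∑ a ∈ s, u a) / m = s.card := by
      rw [hm]; field_simp
    rw [this]
    simp
    ring
  linarith

theorem stmt_8
    (n : ℕ) (hn : 1 ≤ n)
    (p : ℝ) (hp : p < 0)
    (Ustar : Fin n → ℝ) (hUstar_pos : ∀ a, 0 < Ustar a)
    (W : ℝ) (hW : W = ((1 / (n : ℝ)) * ∑ a, (Ustar a) ^ p) ^ (1 / p))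
    (β Φ : ℝ) (hβ : 0 < β) (hΦ : 0 < Φ)
    (C : Finset (Fin n))
    (R : Fin n → ℝ)
    (hR : ∀ a ∈ C, 0 ≤ R a ∧ R a ≤ β * W)
    (hsum : (1 / (n : ℝ)) * ∑ a ∈ C, Ustar a ≤
      β * Real.log ((n : ℝ) + 1) * W + (Φ / (n : ℝ)) * ∑ a ∈ C, R a) :
    (C.card : ℝ) / (n : ℝ) ≤
      max ((2 * β * Real.log ((n : ℝ) + 1)) ^ (|p| / (|p| + 1)))
          ((2 * Φ * β) ^ |p|) := by
  have hn0 : (0 : ℝ) < n := by exact_mod_cast hn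
  rcases C.eq_empty_or_nonempty with rfl | hC
  · apply le_max_of_le_right
    simp only [Finset.card_empty, Nat.cast_zero, zero_div]
    positivity
  have hk : (0 : ℝ) < C.card := by exact_mod_cast hC.card_pos
  have hS : 0 < ∑ a ∈ C, Ustar a := Finset.sum_pos (fun a _ => hUstar_pos a) hC
  have hJ := card_mul_mean_rpow_le C hC Ustar hUstar_pos p hp
  have hsub : ∑ a ∈ C, Ustar a ^ p ≤ ∑ a, Ustar a ^ p :=
    Finset.sum_le_sum_of_subset_of_nonneg (Finset.subset_univ C)
      (fun a _ _ => (rpow_pos_of_pos (hUstar_pos a) p).le)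
  have hRsum : ∑ a ∈ C, R a ≤ C.card * (β * W) := by
    have := Finset.sum_le_card_nsmul C R (β * W) (fun a ha => (hR a ha).2)
    simpa using this
  set m := (∑ a ∈ C, Ustar a) / C.card with hm
  set c := (C.card : ℝ) / n with hc
  set L := Real.log ((n : ℝ) + 1)
  have hmpos : 0 < m := div_pos hS hk
  have hcpos : 0 < c := div_pos hk hn0
  have hA : c * m ^ p ≤ (1 / (n : ℝ)) * ∑ a, Ustar a ^ p := by
    have : c * m ^ p = (1 / (n : ℝ)) * (C.card * m ^ p) := by rw [hc]; ring
    rw [this]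
    gcongr
    exact hJ.trans hsub
  have hcm : 0 < c * m ^ p := by positivity
  have hWpos : 0 < W := by
    rw [hW]; exact rpow_pos_of_pos (hcm.trans_le hA) _
  rw [abs_of_neg hp]
  obtain ⟨q, rfl⟩ : ∃ q, p = -q := ⟨-p, by ring⟩
  have hq : 0 < q := by linarith
  rw [neg_neg]
  set t := c ^ (1 / q) with ht
  have htpos : 0 < t := by positivity
  have hWm : W * t ≤ m := by
    have h1 : W ≤ (c * m ^ (-q)) ^ (1 / (-q)) := by
      rw [hW]
      exact rpow_le_rpow_of_nonpos hcm hA (by rw [div_neg]; simp; exact hq.le)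
    have h2 : (c * m ^ (-q)) ^ (1 / (-q)) = t⁻¹ * m := by
      rw [mul_rpow hcpos.le (by positivity), ← rpow_mul hmpos.le, mul_one_div_cancel (by linarith),
        rpow_one, div_neg, rpow_neg hcpos.le]
    rw [h2] at h1
    calc W * t ≤ t⁻¹ * m * t := by gcongr
      _ = m := by field_simp
  have hmain : c * t ≤ β * L + Φ * β * c := by
    have h1 : (1 / (n : ℝ)) * ∑ a ∈ C, Ustar a = c * m := by
      rw [hc, hm]; field_simp
    have h2 : (Φ / (n : ℝ)) * ∑ a ∈ C, R a ≤ Φ * β * c * W := by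
      calc (Φ / (n : ℝ)) * ∑ a ∈ C, R a ≤ (Φ / (n : ℝ)) * (C.card * (β * W)) := by gcongr
        _ = Φ * β * c * W := by rw [hc]; ring
    have h3 : c * (W * t) ≤ c * m := by gcongr
    refine le_of_mul_le_mul_right ?_ hWpos
    rw [h1] at hsum
    linarith
  rcases le_total (β * L) (Φ * β * c) with h | h
  · apply le_max_of_le_right
    have h1 : t ≤ 2 * Φ * β := le_of_mul_le_mul_left (by linarith) hcpos
    calc c = t ^ q := by
          rw [ht, ← rpow_mul hcpos.le, one_div_mul_cancel hq.ne', rpow_one]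
      _ ≤ _ := by gcongr
  · apply le_max_of_le_left
    have h1 : c * t ≤ 2 * β * L := by linarith
    calc c = (c * t) ^ (q / (q + 1)) := by
          have h2 : c * t = c ^ (1 + 1 / q) := by rw [rpow_add hcpos, rpow_one]
          have h3 : (1 + 1 / q) * (q / (q + 1)) = 1 := by field_simp
          rw [h2, ← rpow_mul hcpos.le, h3, rpow_one]
      _ ≤ _ := by gcongr
end

section
/- Let n ≥ 1, let p < 0, let U*_a > 0 for each a ∈ Fin n, and let W = ((1/n) ∑_a (U*_a)^p)^{1/p}. Set Φ = √(n · log(n+1)) and β* = (1/2) · n^{−1/2 − 1/(2|p|)} · (log(n+1))^{−1/2 + 1/(2|p|)}. Then (2β* · log(n+1))^{|p|/(|p|+1)} = (2Φβ*)^{|p|} = √(log(n+1)/n); consequently, for any C ⊆ Fin n and reals R_a with 0 ≤ R_a ≤ β*·W for a ∈ C satisfying (1/n) ∑_{a∈C} U*_a ≤ β* · log(n+1) · W + (Φ/n) ∑_{a∈C} R_a, one has |C| ≤ √(n · log(n+1)). -/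
/-!
Write `q = |p|`, `L = log (n + 1)` and `s = √(L / n)`. The choice of `β*` gives `2 β* L = s ^ (1 + 1/q)`
and `2 Φ β* = s ^ (1/q)`, from which both identities follow.

For the cardinality bound, let `C` be nonempty and `x = |C| / n`. Since `∑_{a ∈ C} U_a ^ p ≤ n W ^ p`,
comparing the arithmetic mean over `C` with the `p`-mean over `C` (`card_mul_mean_rpow_le`) shows that
the mean of `U` over `C` is at least `x ^ (1/q) W`. Inserting this and `R_a ≤ β* W` in the hypothesis
and dividing by `W` yields `x ^ (1/q) x ≤ (s ^ (1/q) s + s ^ (1/q) x) / 2`, which forces `x ≤ s`,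
that is `|C| ≤ n s = √(n L)`.
-/

open Real

/-- Bernoulli's inequality for negative exponents: the tangent line of `u ↦ u ^ p` at `1`. -/
lemma one_add_mul_sub_one_le_rpow {u p : ℝ} (hu : 0 < u) (hp : p < 0) :
    1 + p * (u - 1) ≤ u ^ p := by
  rw [Real.rpow_def_of_pos hu]
  have h1 := Real.add_one_le_exp (Real.log u * p)
  have h2 := Real.log_le_sub_one_of_pos hu
  nlinarith

/-- Jensen's inequality for `u ↦ u ^ p` with `p < 0`, obtained by summing the tangent-line bound
at the arithmetic mean `m`. -/
lemma card_mul_mean_rpow_le_s9 {ι : Type*} (C : Finset ι) (U : ι → ℝ) (hU : ∀ a, 0 < U a)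
    {p m : ℝ} (hp : p < 0) (hm : 0 < m) (hsum : ∑ a ∈ C, U a = C.card * m) :
    C.card * m ^ p ≤ ∑ a ∈ C, U a ^ p := by
  have h1 : ∀ a ∈ C, m ^ p * (1 + p * (U a / m - 1)) ≤ U a ^ p := by
    intro a _
    have h := one_add_mul_sub_one_le_rpow (div_pos (hU a) hm) hp
    rw [Real.div_rpow (hU a).le hm.le, le_div_iff₀ (Real.rpow_pos_of_pos hm p)] at h
    linarith
  refine le_trans (le_of_eq ?_) (Finset.sum_le_sum h1)
  rw [← Finset.mul_sum, Finset.sum_add_distrib, ← Finset.mul_sum, Finset.sum_sub_distrib,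
    ← Finset.sum_div, hsum]
  simp only [Finset.sum_const, nsmul_eq_mul, mul_one]
  field_simp
  ring

/-- The arithmetic mean `m` of `U` over a nonempty subset `C` of `Fin n` is bounded below in terms of
the `p`-mean `W` over all of `Fin n`, for `p < 0`. -/
lemma rpow_mul_pmean_le_mean {n : ℕ} (hn : 1 ≤ n) {p : ℝ} (hp : p < 0)
    (U : Fin n → ℝ) (hU : ∀ a, 0 < U a) {W : ℝ} (hWpos : 0 < W)
    (hW : W = ((1 / (n : ℝ)) * ∑ a, (U a) ^ p) ^ (1 / p))
    (C : Finset (Fin n)) (hC : 0 < (C.card : ℝ)) {m : ℝ} (hm : 0 < m)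
    (hsum : ∑ a ∈ C, U a = C.card * m) :
    ((C.card : ℝ) / n) ^ (1 / |p|) * W ≤ m := by
  have hN : (0 : ℝ) < n := by exact_mod_cast hn
  have hx : 0 < (C.card : ℝ) / n := div_pos hC hN
  have h1 := card_mul_mean_rpow_le_s9 C U hU hp hm hsum
  have h2 : ∑ a ∈ C, U a ^ p ≤ ∑ a, U a ^ p :=
    Finset.sum_le_sum_of_subset_of_nonneg (Finset.subset_univ C)
      fun a _ _ => (Real.rpow_pos_of_pos (hU a) p).le
  have hWp : W ^ p = (1 / (n : ℝ)) * ∑ a, U a ^ p := by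
    rw [hW, ← Real.rpow_mul, one_div_mul_cancel hp.ne, Real.rpow_one]
    exact mul_nonneg (by positivity)
      (Finset.sum_nonneg fun a _ => (Real.rpow_pos_of_pos (hU a) p).le)
  rw [← Real.rpow_le_rpow_iff_of_neg hm (by positivity) hp,
    Real.mul_rpow (by positivity) hWpos.le, ← Real.rpow_mul hx.le, hWp, abs_of_neg hp]
  have he : 1 / -p * p = -1 := by
    have := hp.ne
    field_simp
  rw [he, Real.rpow_neg_one, inv_div]
  have h3 : (n : ℝ) / C.card * (1 / n * ∑ a, U a ^ p) = (∑ a, U a ^ p) / C.card := by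
    field_simp
  rw [h3, le_div_iff₀ hC]
  linarith

/-- The threshold comparison: for `x > s` the left side exceeds both terms averaged on the right. -/
lemma le_of_rpow_mul_le {x s r : ℝ} (hs : 0 < s) (hr : 0 < r)
    (h : x ^ r * x ≤ (s ^ r * s + s ^ r * x) / 2) : x ≤ s := by
  by_contra! hlt
  have h1 : s ^ r < x ^ r := Real.rpow_lt_rpow hs.le hlt hr
  have h2 : 0 < s ^ r := Real.rpow_pos_of_pos hs r
  nlinarith [mul_lt_mul_of_pos_right h1 (hs.trans hlt), mul_lt_mul_of_pos_left hlt h2]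

theorem stmt_9
    (n : ℕ) (hn : 1 ≤ n)
    (p : ℝ) (hp : p < 0)
    (Ustar : Fin n → ℝ) (hUstar_pos : ∀ a, 0 < Ustar a)
    (W : ℝ) (hW : W = ((1 / (n : ℝ)) * ∑ a, (Ustar a) ^ p) ^ (1 / p))
    (Φ : ℝ) (hΦ : Φ = Real.sqrt ((n : ℝ) * Real.log ((n : ℝ) + 1)))
    (βstar : ℝ)
    (hβstar : βstar = (1 / 2) * (n : ℝ) ^ (-(1 / 2 : ℝ) - 1 / (2 * |p|)) *
      (Real.log ((n : ℝ) + 1)) ^ (-(1 / 2 : ℝ) + 1 / (2 * |p|))) :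
    (2 * βstar * Real.log ((n : ℝ) + 1)) ^ (|p| / (|p| + 1)) =
        Real.sqrt (Real.log ((n : ℝ) + 1) / (n : ℝ)) ∧
    (2 * Φ * βstar) ^ |p| = Real.sqrt (Real.log ((n : ℝ) + 1) / (n : ℝ)) ∧
    ∀ C : Finset (Fin n), ∀ R : Fin n → ℝ,
      (∀ a ∈ C, 0 ≤ R a ∧ R a ≤ βstar * W) →
      (1 / (n : ℝ)) * ∑ a ∈ C, Ustar a ≤
        βstar * Real.log ((n : ℝ) + 1) * W + (Φ / (n : ℝ)) * ∑ a ∈ C, R a →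
      (C.card : ℝ) ≤ Real.sqrt ((n : ℝ) * Real.log ((n : ℝ) + 1)) := by
  have hN : (0 : ℝ) < n := by exact_mod_cast hn
  have hL : 0 < Real.log ((n : ℝ) + 1) := Real.log_pos (by linarith)
  have hq : 0 < |p| := abs_pos.mpr hp.ne
  have hWpos : 0 < W := by
    rw [hW]
    have : Nonempty (Fin n) := ⟨⟨0, hn⟩⟩
    have : 0 < ∑ a, Ustar a ^ p :=
      Finset.sum_pos (fun a _ => Real.rpow_pos_of_pos (hUstar_pos a) p) Finset.univ_nonempty
    positivity
  generalize Real.log ((n : ℝ) + 1) = L at *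
  have hs : 0 < Real.sqrt (L / n) := Real.sqrt_pos.mpr (div_pos hL hN)
  have hsN : Real.sqrt (n * L) = n * Real.sqrt (L / n) := by
    rw [Real.sqrt_eq_iff_mul_self_eq (by positivity) (by positivity)]
    have := Real.mul_self_sqrt (div_pos hL hN).le
    rw [mul_mul_mul_comm, this]
    field_simp
  have hsr : Real.sqrt (L / n) ^ (1 / |p|) = L ^ (1 / (2 * |p|)) / (n : ℝ) ^ (1 / (2 * |p|)) := by
    rw [← Real.div_rpow hL.le hN.le, Real.sqrt_eq_rpow, ← Real.rpow_mul (div_pos hL hN).le]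
    congr 1
    field_simp
  have hβ : 2 * Φ * βstar = Real.sqrt (L / n) ^ (1 / |p|) := by
    rw [hsr, hΦ, hβstar, Real.rpow_sub hN, Real.rpow_add hL, Real.rpow_neg hN.le,
      Real.rpow_neg hL.le, ← Real.sqrt_eq_rpow, ← Real.sqrt_eq_rpow, Real.sqrt_mul hN.le]
    have h1 := Real.sqrt_pos.mpr hN
    have h2 := Real.sqrt_pos.mpr hL
    field_simp
  -- With `s = √(L / n)`, this identity turns `2 β* L` into `(2 Φ β*) s`.
  have hΦs : L = Φ * Real.sqrt (L / n) := by
    have := Real.mul_self_sqrt (div_pos hL hN).le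
    rw [hΦ, hsN, mul_assoc, this]
    field_simp
  have hβL : 2 * βstar * L = Real.sqrt (L / n) ^ (1 / |p|) * Real.sqrt (L / n) := by
    rw [← hβ]
    linear_combination 2 * βstar * hΦs
  refine ⟨?_, ?_, ?_⟩
  · rw [hβL, ← Real.rpow_add_one hs.ne', ← Real.rpow_mul hs.le]
    have : (1 / |p| + 1) * (|p| / (|p| + 1)) = 1 := by
      field_simp
      ring
    rw [this, Real.rpow_one]
  · rw [hβ, ← Real.rpow_mul hs.le, one_div_mul_cancel hq.ne', Real.rpow_one]
  · intro C R hR h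
    rw [hsN]
    rcases C.eq_empty_or_nonempty with rfl | hne
    · simp only [Finset.card_empty, Nat.cast_zero]
      positivity
    have hC : 0 < (C.card : ℝ) := by exact_mod_cast hne.card_pos
    have hΦ0 : 0 ≤ Φ := hΦ ▸ Real.sqrt_nonneg _
    have hsumR : ∑ a ∈ C, R a ≤ C.card * (βstar * W) := by
      simpa using Finset.sum_le_card_nsmul C R _ fun a ha => (hR a ha).2
    obtain ⟨m, hm⟩ : ∃ m, m = (∑ a ∈ C, Ustar a) / C.card := ⟨_, rfl⟩
    have hm0 : 0 < m := hm ▸ div_pos (Finset.sum_pos (fun a _ => hUstar_pos a) hne) hC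
    have hsum : ∑ a ∈ C, Ustar a = C.card * m := by
      rw [hm, mul_div_cancel₀ _ hC.ne']
    have hmean := rpow_mul_pmean_le_mean hn hp Ustar hUstar_pos hWpos hW C hC hm0 hsum
    obtain ⟨x, hx⟩ : ∃ x, x = (C.card : ℝ) / n := ⟨_, rfl⟩
    have hx0 : 0 < x := hx ▸ div_pos hC hN
    rw [← hx] at hmean
    have hcx : (C.card : ℝ) = n * x := by
      rw [hx, mul_div_cancel₀ _ hN.ne']
    have hlow : x * m = 1 / (n : ℝ) * ∑ a ∈ C, Ustar a := by
      rw [hsum, hx]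
      ring
    have hup : Φ / n * ∑ a ∈ C, R a ≤ Φ * x * (βstar * W) :=
      (mul_le_mul_of_nonneg_left hsumR (by positivity)).trans_eq (by rw [hx]; ring)
    have hkey : x ^ (1 / |p|) * x * W ≤ (βstar * L + Φ * βstar * x) * W := by
      have := mul_le_mul_of_nonneg_left hmean hx0.le
      linarith
    have hkey' := le_of_mul_le_mul_right hkey hWpos
    rw [hcx]
    refine mul_le_mul_of_nonneg_left
      (le_of_rpow_mul_le (r := 1 / |p|) hs (by positivity) ?_) hN.le
    rw [← hβL, ← hβ]
    linarith
end

section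
/- In the Mixed Greedy model with unit monopolist utilities, let n ≥ 2, let p ≤ −1 be a real, let β* = (1/2) · n^{−1/2 − 1/(2|p|)} · (log(n+1))^{−1/2 + 1/(2|p|)}, and let W ∈ (0, 1] be a real. Suppose the egalitarian copy x^E satisfies the regularized egalitarian greedy condition, and suppose that for every t ∈ [0,T] the number of agents a with U a t + R a t ≤ β*·W is at most √(n · log(n+1)). Then U a t + R a t ≥ β*·W for every agent a and every t ∈ [0,T]; in particular U a T ≥ β*·W for every agent a. -/
/-!
Write `F a = U a + R a` and `β = βstar * W`. Each `F a` is absolutely continuous on `[0,T]`, with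
a.e. derivative `v a * (xN a + xE a - 1/Φ)`, hence so is the truncated minimum
`h = min β (min_a F a)`. The theorem follows once `h` is shown to be nondecreasing, because
`F a 0 = 1/n + 1/Φ ≥ β` gives `h 0 = β`, and `R a T = 0`.

By the fundamental theorem of calculus for absolutely continuous functions it suffices that
`h' ≥ 0` at almost every time `s`. If `h s = β`, then `h` is maximal at `s` and `h' s = 0`.
Otherwise `h s = min_a F a s < β`. For every minimiser `a`, the function `F a - h` is nonnegative and
vanishes at `s`, so `h' s = (F a)' s`: all minimisers have the same derivative as `h`. The greedy rule
places the whole unit of the egalitarian copy on the minimisers, and there are at most `Φ` of them,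
so one of them receives `xE a s ≥ 1/Φ`, and its derivative is nonnegative.
-/

open MeasureTheory Real

/-- Absolute continuity is inherited by the pointwise minimum of two functions. -/
lemma absolutelyContinuousOnInterval_min {f g : ℝ → ℝ} {a b : ℝ}
    (hf : AbsolutelyContinuousOnInterval f a b) (hg : AbsolutelyContinuousOnInterval g a b) :
    AbsolutelyContinuousOnInterval (fun t => min (f t) (g t)) a b := by
  unfold AbsolutelyContinuousOnInterval at *
  refine squeeze_zero (fun t => Finset.sum_nonneg fun i _ => dist_nonneg) (fun t => ?_)
    (by simpa using Filter.Tendsto.add hf hg)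
  rw [← Finset.sum_add_distrib]
  refine Finset.sum_le_sum fun i _ => ?_
  simp only [Real.dist_eq]
  refine (abs_min_sub_min_le_max _ _ _ _).trans ?_
  exact max_le (le_add_of_nonneg_right (abs_nonneg _)) (le_add_of_nonneg_left (abs_nonneg _))

/-- The truncated minimum `min β (min_{i ∈ s} F i)` of finitely many absolutely continuous
functions, described by the properties that characterise it. -/
lemma exists_truncated_min {ι : Type*} (s : Finset ι) (F : ι → ℝ → ℝ) (β a b : ℝ)
    (hF : ∀ i, AbsolutelyContinuousOnInterval (F i) a b) :
    ∃ h : ℝ → ℝ, AbsolutelyContinuousOnInterval h a b ∧ (∀ t, h t ≤ β) ∧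
      (∀ i ∈ s, ∀ t, h t ≤ F i t) ∧ (∀ t, h t = β ∨ ∃ i ∈ s, h t = F i t) := by
  classical
  induction s using Finset.induction_on with
  | empty =>
    refine ⟨fun _ => β, ?_, by simp, by simp, by simp⟩
    simpa [AbsolutelyContinuousOnInterval] using tendsto_const_nhds
  | insert i s _ ih =>
    obtain ⟨h, hac, hβ, hle, heq⟩ := ih
    refine ⟨fun t => min (F i t) (h t), absolutelyContinuousOnInterval_min (hF i) hac,
      fun t => (min_le_right _ _).trans (hβ t), ?_, ?_⟩
    · intro j hj t
      rcases Finset.mem_insert.1 hj with rfl | hj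
      · exact min_le_left _ _
      · exact (min_le_right _ _).trans (hle j hj t)
    · intro t
      rcases min_choice (F i t) (h t) with hm | hm
      · exact Or.inr ⟨i, Finset.mem_insert_self _ _, hm⟩
      · rcases heq t with h1 | ⟨j, hj, h1⟩
        · exact Or.inl (hm.trans h1)
        · exact Or.inr ⟨j, Finset.mem_insert_of_mem hj, hm.trans h1⟩

lemma le_of_ae_deriv_nonneg {h : ℝ → ℝ} {T : ℝ}
    (hac : AbsolutelyContinuousOnInterval h 0 T)
    (hd : ∀ᵐ s, s ∈ Set.Icc 0 T → 0 ≤ deriv h s) {t : ℝ} (ht : t ∈ Set.Icc 0 T) :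
    h 0 ≤ h t := by
  have hT : (0:ℝ) ≤ T := ht.1.trans ht.2
  have hac' : AbsolutelyContinuousOnInterval h 0 t := by
    refine hac.mono ?_
    rw [Set.uIcc_of_le ht.1, Set.uIcc_of_le hT]
    exact Set.Icc_subset_Icc_right ht.2
  have h1 := hac'.integral_deriv_eq_sub
  have h2 : 0 ≤ ∫ s in (0:ℝ)..t, deriv h s := by
    refine intervalIntegral.integral_nonneg_of_ae_restrict ht.1 ?_
    filter_upwards [ae_restrict_of_ae hd, ae_restrict_mem measurableSet_Icc] with s hs hst
    exact hs ⟨hst.1, hst.2.trans ht.2⟩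
  linarith

/-- A function touching `f` from below at `s` has the same derivative there. -/
lemma deriv_eq_of_le_of_eq {h f : ℝ → ℝ} {s f' : ℝ} (hle : ∀ t, h t ≤ f t) (heq : h s = f s)
    (hf : HasDerivAt f f' s) (hh : DifferentiableAt ℝ h s) : deriv h s = f' := by
  have hmin : IsLocalMin (fun t => f t - h t) s :=
    Filter.Eventually.of_forall fun t => by simpa [heq] using hle t
  have := hmin.hasDerivAt_eq_zero (hf.sub hh.hasDerivAt)
  linarith

/-- The target level does not exceed the initial regularizer `1/Φ`, since
`βstar = (1/2) (n L)^(-1/2) (L/n)^q` with `L = log (n+1) ≤ n` and `q = 1/(2|p|) ≥ 0`. -/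
lemma target_le {n L q : ℝ} (hL : 0 < L) (hLn : L ≤ n) (hq : 0 ≤ q) :
    1 / 2 * n ^ (-(1 / 2 : ℝ) - q) * L ^ (-(1 / 2 : ℝ) + q) ≤ 1 / √(n * L) := by
  have hn : 0 < n := hL.trans_le hLn
  have h1 : 1 / √(n * L) = n ^ (-(1 / 2 : ℝ)) * L ^ (-(1 / 2 : ℝ)) := by
    rw [Real.sqrt_eq_rpow, ← Real.mul_rpow hn.le hL.le, Real.rpow_neg (by positivity), one_div]
  have h2 : L ^ q / n ^ q ≤ 1 :=
    div_le_one_of_le₀ (Real.rpow_le_rpow hL.le hLn hq) (by positivity)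
  rw [h1, Real.rpow_sub hn, Real.rpow_add hL]
  have h3 : 0 < n ^ (-(1 / 2 : ℝ)) * L ^ (-(1 / 2 : ℝ)) := by positivity
  calc 1 / 2 * (n ^ (-(1 / 2 : ℝ)) / n ^ q) * (L ^ (-(1 / 2 : ℝ)) * L ^ q)
      = (n ^ (-(1 / 2 : ℝ)) * L ^ (-(1 / 2 : ℝ))) * (1 / 2 * (L ^ q / n ^ q)) := by ring
    _ ≤ (n ^ (-(1 / 2 : ℝ)) * L ^ (-(1 / 2 : ℝ))) * 1 := by gcongr; linarith
    _ = _ := mul_one _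

/-- Pigeonhole: a unit mass supported on at most `Φ` agents gives some agent of the support at
least `1/Φ`. -/
lemma exists_large_share {ι : Type*} [Fintype ι] {x : ι → ℝ} {Φ : ℝ} (hΦ : 0 < Φ)
    (hx : ∀ a, 0 ≤ x a) (hsum : ∑ a, x a = 1) (A : Set ι) (hA : ∀ a, 0 < x a → a ∈ A)
    (hcard : (A.ncard : ℝ) ≤ Φ) : ∃ a, 0 < x a ∧ 1 / Φ ≤ x a := by
  classical
  by_contra! hcon
  have hS : ∑ a ∈ A.toFinset, x a = 1 := by
    rw [← hsum]
    refine Finset.sum_subset (Finset.subset_univ _) fun a _ ha => ?_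
    by_contra hne
    exact ha (Set.mem_toFinset.2 (hA a (lt_of_le_of_ne (hx a) (Ne.symm hne))))
  have hlt : ∀ a, x a < 1 / Φ := fun a => by
    rcases (hx a).eq_or_lt with h0 | h0
    · rw [← h0]; positivity
    · exact hcon a h0
  have hne : A.toFinset.Nonempty := by
    by_contra hemp
    rw [Finset.not_nonempty_iff_eq_empty.1 hemp] at hS
    simp at hS
  have h1 := Finset.sum_lt_sum_of_nonempty hne (fun a _ => hlt a)
  rw [hS, Finset.sum_const, nsmul_eq_mul, ← Set.ncard_eq_toFinset_card' A] at h1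
  have h2 : (A.ncard : ℝ) * (1 / Φ) ≤ Φ * (1 / Φ) := by gcongr
  rw [mul_one_div_cancel hΦ.ne'] at h2
  linarith

theorem stmt_10
    (n : ℕ) (hn : 2 ≤ n) (T : ℝ) (hT : 0 < T)
    (v : Fin n → ℝ → ℝ)
    (hv_meas : ∀ a, Measurable (v a))
    (hv_nonneg : ∀ a, ∀ᵐ s ∂(volume.restrict (Set.Icc (0:ℝ) T)), 0 ≤ v a s)
    (hv_int : ∀ a, IntegrableOn (v a) (Set.Icc (0:ℝ) T))
    (hv_unit : ∀ a, ∫ s in (0:ℝ)..T, v a s = 1)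
    (xN xE : Fin n → ℝ → ℝ)
    (hxN_meas : ∀ a, Measurable (xN a)) (hxE_meas : ∀ a, Measurable (xE a))
    (hx_feas : ∀ᵐ s ∂(volume.restrict (Set.Icc (0:ℝ) T)),
      (∀ a, 0 ≤ xN a s) ∧ (∀ a, 0 ≤ xE a s) ∧
      (∑ a, xN a s = 1) ∧ (∑ a, xE a s = 1))
    (U : Fin n → ℝ → ℝ)
    (hU : ∀ a t, U a t =
      1 / (n : ℝ) + ∫ s in (0:ℝ)..t, v a s * (xN a s + xE a s))
    (Φ : ℝ) (hΦ : Φ = Real.sqrt ((n : ℝ) * Real.log ((n : ℝ) + 1)))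
    (R : Fin n → ℝ → ℝ)
    (hR : ∀ a t, R a t = (1 / Φ) * (1 - ∫ s in (0:ℝ)..t, v a s))
    (p : ℝ) (hp : p ≤ -1)
    (βstar : ℝ)
    (hβstar : βstar = (1 / 2) * (n : ℝ) ^ (-(1 / 2 : ℝ) - 1 / (2 * |p|)) *
      (Real.log ((n : ℝ) + 1)) ^ (-(1 / 2 : ℝ) + 1 / (2 * |p|)))
    (W : ℝ) (hW0 : 0 < W) (hW1 : W ≤ 1)
    (hegal : ∀ᵐ s ∂(volume.restrict (Set.Icc (0:ℝ) T)),
      ∀ a, 0 < xE a s → ∀ b, U a s + R a s ≤ U b s + R b s)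
    (hcount : ∀ t ∈ Set.Icc (0:ℝ) T,
      ({a : Fin n | U a t + R a t ≤ βstar * W}.ncard : ℝ) ≤
        Real.sqrt ((n : ℝ) * Real.log ((n : ℝ) + 1))) :
    (∀ a, ∀ t ∈ Set.Icc (0:ℝ) T, βstar * W ≤ U a t + R a t) ∧
    (∀ a, βstar * W ≤ U a T) := by
  have hn0 : (0:ℝ) < n := by exact_mod_cast (by omega : 0 < n)
  have hL : 0 < Real.log ((n:ℝ) + 1) := Real.log_pos (by linarith)
  have hLn : Real.log ((n:ℝ) + 1) ≤ n := by
    have := Real.log_le_sub_one_of_pos (show (0:ℝ) < n + 1 by linarith)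
    linarith
  have hΦ0 : 0 < Φ := by rw [hΦ]; positivity
  have hβΦ : βstar ≤ 1 / Φ := by
    rw [hβstar, hΦ]
    exact target_le hL hLn (by positivity)
  have hβ0 : 0 < βstar := by rw [hβstar]; positivity
  have hβW : βstar * W ≤ 1 / Φ := (mul_le_of_le_one_right hβ0.le hW1).trans hβΦ
  have hvi : ∀ a, IntervalIntegrable (v a) volume 0 T := fun a =>
    (intervalIntegrable_iff_integrableOn_Icc_of_le hT.le).2 (hv_int a)
  have hgi : ∀ a, IntervalIntegrable (fun s => v a s * (xN a s + xE a s)) volume 0 T := by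
    intro a
    refine (intervalIntegrable_iff_integrableOn_Icc_of_le hT.le).2 ?_
    refine Integrable.mul_bdd (c := 2) (hv_int a)
      ((hxN_meas a).add (hxE_meas a)).aestronglyMeasurable ?_
    filter_upwards [hx_feas] with s hs
    obtain ⟨hN, hE, hN1, hE1⟩ := hs
    have h1 := Finset.single_le_sum (fun b _ => hN b) (Finset.mem_univ a)
    have h2 := Finset.single_le_sum (fun b _ => hE b) (Finset.mem_univ a)
    rw [Real.norm_eq_abs, abs_of_nonneg (add_nonneg (hN a) (hE a))]
    linarith
  have h0mem : (0:ℝ) ∈ Set.uIcc 0 T := Set.left_mem_uIcc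
  set F : Fin n → ℝ → ℝ := fun a t => U a t + R a t with hF
  have hFeq : ∀ a, F a = fun t => (1 / (n:ℝ) + ∫ s in (0:ℝ)..t, v a s * (xN a s + xE a s)) +
      (1 / Φ) * (1 - ∫ s in (0:ℝ)..t, v a s) := by
    intro a; funext t; simp only [hF, hU, hR]
  have hconst : ∀ c : ℝ, AbsolutelyContinuousOnInterval (fun _ : ℝ => c) 0 T := fun c => by
    simpa [AbsolutelyContinuousOnInterval] using tendsto_const_nhds
  have hFac : ∀ a, AbsolutelyContinuousOnInterval (F a) 0 T := by
    intro a
    rw [hFeq]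
    exact ((hconst _).fun_add
      ((hgi a).absolutelyContinuousOnInterval_intervalIntegral h0mem)).fun_add
      (((hconst 1).fun_sub
        ((hvi a).absolutelyContinuousOnInterval_intervalIntegral h0mem)).const_mul _)
  have hFderiv : ∀ᵐ s, s ∈ Set.Icc 0 T → ∀ a,
      HasDerivAt (F a) (v a s * (xN a s + xE a s - 1 / Φ)) s := by
    filter_upwards [ae_all_iff.2 fun a => (hgi a).ae_hasDerivAt_integral,
      ae_all_iff.2 fun a => (hvi a).ae_hasDerivAt_integral] with s h1 h2 hs a
    rw [← Set.uIcc_of_le hT.le] at hs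
    rw [hFeq]
    have h := ((h1 a hs 0 h0mem).const_add (1 / (n:ℝ))).add
      (((h2 a hs 0 h0mem).const_sub 1).const_mul (1 / Φ))
    exact h.congr_deriv (by ring)
  obtain ⟨h, hac, hhβ, hhle, hheq⟩ :=
    exists_truncated_min Finset.univ F (βstar * W) 0 T hFac
  have hd : ∀ᵐ s, s ∈ Set.Icc 0 T → 0 ≤ deriv h s := by
    filter_upwards [hac.ae_differentiableAt, hFderiv,
      (ae_restrict_iff' measurableSet_Icc).1 hegal, (ae_restrict_iff' measurableSet_Icc).1 hx_feas,
      (ae_restrict_iff' measurableSet_Icc).1 (ae_all_iff.2 hv_nonneg)]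
      with s hdiff hder hgreedy hfeas hvs hs
    have hdiff := hdiff (by rwa [Set.uIcc_of_le hT.le])
    obtain ⟨hN, hE, -, hE1⟩ := hfeas hs
    rcases hheq s with hcap | ⟨m, -, hm⟩
    · exact (deriv_eq_of_le_of_eq hhβ hcap (hasDerivAt_const s _) hdiff).ge
    · -- Agents receiving part of the egalitarian copy are minimisers, so they lie below the target.
      have hmin : ∀ a, 0 < xE a s → h s = F a s := fun a ha =>
        le_antisymm (hhle a (Finset.mem_univ a) s) (hm ▸ hgreedy hs a ha m)
      obtain ⟨a, ha, hshare⟩ := exists_large_share hΦ0 hE hE1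
        {a : Fin n | U a s + R a s ≤ βstar * W}
        (fun a ha => (hmin a ha).symm.trans_le (hhβ s)) (by rw [hΦ]; exact hcount s hs)
      rw [deriv_eq_of_le_of_eq (hhle a (Finset.mem_univ a)) (hmin a ha) (hder hs a) hdiff]
      exact mul_nonneg (hvs hs a) (by linarith [hN a])
  have hF0 : ∀ a, βstar * W ≤ F a 0 := by
    intro a
    have : 0 < 1 / (n:ℝ) := by positivity
    simp only [hFeq, intervalIntegral.integral_same]
    linarith
  have hh0 : βstar * W ≤ h 0 := by
    rcases hheq 0 with h1 | ⟨a, -, h1⟩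
    · exact h1.ge
    · exact h1 ▸ hF0 a
  have main : ∀ a, ∀ t ∈ Set.Icc (0:ℝ) T, βstar * W ≤ F a t := fun a t ht =>
    (hh0.trans (le_of_ae_deriv_nonneg hac hd ht)).trans (hhle a (Finset.mem_univ a) t)
  refine ⟨main, fun a => ?_⟩
  have hRT : R a T = 0 := by rw [hR, hv_unit]; ring
  have := main a T ⟨hT.le, le_rfl⟩
  simpa only [hF, hRT, add_zero] using this
end

section
/- There is an absolute constant c > 0 such that the following holds. In the Mixed Greedy model with unit monopolist utilities, let n ≥ 2 and let p ≤ −1 be a real. Suppose the Nashian copy x^N satisfies the Nashian Greedy condition with respect to the total utilities U, and the egalitarian copy x^E satisfies the regularized egalitarian greedy condition. Then for every feasible allocation x* (measurable, x*_a s ≥ 0, ∑_a x*_a s ≤ 1 for a.e. s) with U*_a = ∫_0^T v a s · x*_a s ds > 0 for every agent a: ((1/n) ∑_a (U a T)^p)^{1/p} ≥ c · ((1/n) ∑_a (U*_a)^p)^{1/p} / √(n · log(n+1)). -/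
/-!
Write `Φ = √(n log (n+1))`, `w a` for the utility of agent `a` in the reference allocation and
`V a t = ∫_0^t v a`.

*Nashian copy.* The Nashian rule maximizes `v / U`, so `∑ log U` grows at rate at least
`∑ v x* / U`. As `U` goes from `1/n` to at most `1/n + 2`, this gives at every time `t`
`∑_a (∫_0^t v a x* a) / U a t ≤ n log (2n+1) ≤ 2 Φ²`
(`nash_pointwise`, `sum_ratio_le_sum_log`).

*Egalitarian copy.* Choose `μ` with `∑ w a ^ p = (Φ/2) μ ^ p` and put `θ = μ / (6Φ)`. An agent with
`U a t + R a t < θ` and `w a ≥ μ` satisfies `1 - V a t ≤ μ/6`, so it has already been offered at least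
`5μ/6` of its reference utility, while `U a t < θ`. The Nashian bound limits the number of such
agents to `2Φ/5`, and at most `Φ/2` agents have `w a < μ`; thus fewer than `Φ` agents are below `θ` at
any time (`card_low_lt`). Hence while the minimum of `U + R` is below `θ`, some minimizer receives a
share at least `1/Φ` (`exists_large_share`), which compensates the decay of its regularizer, and
the minimum cannot decrease (`regularized_min_ge`). At time `T` the regularizer is zero, so
`U a T ≥ θ` for all `a`.

*Conclusion.* The bounds `U a T ≥ θ` and `∑ w a / U a T ≤ 2 Φ²` together give
`∑ U a T ^ p ≤ (12 Φ) ^ (-p) ∑ w a ^ p` (`pmean_ge`), which is the claim with `c = 1/12`.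
-/

open MeasureTheory Real

/-! ### Calculus along monotone functions -/

/-- Half of the fundamental theorem of calculus that survives for merely monotone functions: a
lower bound on the a.e. derivative integrates to a lower bound on the increment. It replaces the
absolute continuity of `log U` and of the minimum of the regularized utilities. -/
lemma integral_le_of_le_deriv {f g : ℝ → ℝ} {t : ℝ} (ht : 0 ≤ t)
    (hf : MonotoneOn f (Set.Icc 0 t)) (hg : IntervalIntegrable g volume 0 t)
    (h : ∀ᵐ s, s ∈ Set.Ioo 0 t → g s ≤ deriv f s) :
    ∫ s in (0:ℝ)..t, g s ≤ f t - f 0 := by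
  have hf' : MonotoneOn f (Set.uIcc 0 t) := by rwa [Set.uIcc_of_le ht]
  have h1 := hf'.intervalIntegral_deriv_mem_uIcc
  have h0 : f 0 ≤ f t := hf ⟨le_rfl, ht⟩ ⟨ht, le_rfl⟩ ht
  rw [Set.uIcc_of_le (by linarith)] at h1
  refine le_trans ?_ h1.2
  refine intervalIntegral.integral_mono_ae_restrict ht hg hf'.intervalIntegrable_deriv ?_
  rw [← restrict_Ioo_eq_restrict_Icc]
  exact (ae_restrict_iff' measurableSet_Ioo).2 h

lemma monotoneOn_integral {y : ℝ → ℝ} {T : ℝ} (hy : IntervalIntegrable y volume 0 T)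
    (h0 : ∀ᵐ s, s ∈ Set.Ioo 0 T → 0 ≤ y s) :
    MonotoneOn (fun t => ∫ s in (0:ℝ)..t, y s) (Set.Icc 0 T) := by
  intro a ha b hb hab
  have hT : (0:ℝ) ≤ T := ha.1.trans ha.2
  have hi : ∀ c d, c ∈ Set.Icc 0 T → d ∈ Set.Icc 0 T → IntervalIntegrable y volume c d := by
    intro c d hc hd
    refine hy.mono_set ?_
    rw [Set.uIcc_of_le hT]
    exact Set.uIcc_subset_Icc hc hd
  have h1 := intervalIntegral.integral_add_adjacent_intervals
    (hi 0 a ⟨le_rfl, hT⟩ ha) (hi a b ha hb)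
  have h2 : 0 ≤ ∫ s in a..b, y s := by
    refine intervalIntegral.integral_nonneg_of_ae_restrict hab ?_
    rw [← restrict_Ioo_eq_restrict_Icc]
    refine (ae_restrict_iff' measurableSet_Ioo).2 ?_
    filter_upwards [h0] with s hs hs'
    exact hs ⟨ha.1.trans_lt hs'.1, hs'.2.trans_le hb.2⟩
  simp only
  linarith

lemma ae_hasDerivAt_integral_Ioo {y : ℝ → ℝ} {T : ℝ} (hy : IntervalIntegrable y volume 0 T) :
    ∀ᵐ s, s ∈ Set.Ioo 0 T → HasDerivAt (fun t => ∫ r in (0:ℝ)..t, y r) (y s) s := by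
  filter_upwards [hy.ae_hasDerivAt_integral] with s hs hs'
  have hT : (0:ℝ) ≤ T := hs'.1.le.trans hs'.2.le
  rw [Set.uIcc_of_le hT] at hs
  exact hs ⟨hs'.1.le, hs'.2.le⟩ 0 ⟨le_rfl, hT⟩

/-! ### The two integral arguments -/

/-- Potential argument for the Nashian copy. If the reference gains `z` never beat the gains `y`
in terms of `∑ (gain) / U`, then `∑ log U` grows at least as fast as `∑ (∫ z) / U`; the utilities
being nondecreasing, the denominators may be frozen at the final time `t`. -/
lemma sum_ratio_le_sum_log {n : ℕ} {t κ : ℝ} (ht : 0 ≤ t) (hκ : 0 < κ)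
    {y z U : Fin n → ℝ → ℝ}
    (hy : ∀ a, IntervalIntegrable (y a) volume 0 t)
    (hz : ∀ a, IntervalIntegrable (z a) volume 0 t)
    (hy0 : ∀ a, ∀ᵐ s, s ∈ Set.Ioo 0 t → 0 ≤ y a s)
    (hz0 : ∀ a, ∀ᵐ s, s ∈ Set.Ioo 0 t → 0 ≤ z a s)
    (hU : ∀ a s, U a s = κ + ∫ r in (0:ℝ)..s, y a r)
    (hyz : ∀ᵐ s, s ∈ Set.Ioo 0 t → ∑ a, z a s / U a s ≤ ∑ a, y a s / U a s) :
    ∑ a, (∫ s in (0:ℝ)..t, z a s) / U a t ≤ ∑ a, (log (U a t) - log κ) := by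
  have hmono : ∀ a, MonotoneOn (U a) (Set.Icc 0 t) := by
    intro a r hr s hs hrs
    rw [hU, hU]
    have := monotoneOn_integral (hy a) (hy0 a) hr hs hrs
    simp only at this
    linarith
  have hU0 : ∀ a, U a 0 = κ := by intro a; rw [hU]; simp
  have hpos : ∀ a, ∀ s ∈ Set.Icc 0 t, 0 < U a s := by
    intro a s hs
    have := hmono a ⟨le_rfl, ht⟩ hs hs.1
    rw [hU0] at this
    linarith
  have hlog : MonotoneOn (fun s => ∑ a, log (U a s)) (Set.Icc 0 t) := by
    intro r hr s hs hrs
    refine Finset.sum_le_sum fun a _ => ?_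
    exact log_le_log (hpos a r hr) (hmono a hr hs hrs)
  have hint : ∀ a ∈ Finset.univ, IntervalIntegrable (fun s => z a s / U a t) volume 0 t :=
    fun a _ => (hz a).div_const _
  have key := integral_le_of_le_deriv ht hlog
    (g := fun s => ∑ a, z a s / U a t) (by
      have := IntervalIntegrable.sum Finset.univ hint
      simpa [Finset.sum_fn] using this) ?_
  · rw [intervalIntegral.integral_finsetSum hint] at key
    simp only [intervalIntegral.integral_div, hU0] at key
    rw [Finset.sum_sub_distrib]
    exact key
  · filter_upwards [hyz, ae_all_iff.2 hz0, ae_all_iff.2 fun a => ae_hasDerivAt_integral_Ioo (hy a)]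
      with s h1 h2 h3 hs
    have hsI : s ∈ Set.Icc 0 t := ⟨hs.1.le, hs.2.le⟩
    have hd : HasDerivAt (fun s => ∑ a, log (U a s)) (∑ a, y a s / U a s) s := by
      refine HasDerivAt.fun_sum fun a _ => ?_
      refine HasDerivAt.log ?_ (hpos a s hsI).ne'
      have : U a = fun t => κ + ∫ r in (0:ℝ)..t, y a r := funext (hU a)
      rw [this]
      exact (h3 a hs).const_add κ
    rw [hd.deriv]
    refine le_trans (Finset.sum_le_sum fun a _ => ?_) (h1 hs)
    exact div_le_div_of_nonneg_left (h2 a hs) (hpos a s hsI) (hmono a hsI ⟨ht, le_rfl⟩ hs.2.le)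

/-- A barrier argument: if, whenever some regularized utility `W` is below `θ`, a minimizing agent
has nondecreasing `W`, then no `W` ends below `θ`. The function `F = min θ (min_a W a)` has
nonnegative derivative a.e., because a minimizer touches `F` from above and so has the same
derivative. To integrate this, the decrease of `F` is compensated by
`G = (1/Φ) ∑ ∫ v`, which makes `F + G` monotone. -/
lemma regularized_min_ge {n : ℕ} {T κ θ Φ : ℝ} (hT : 0 ≤ T) (hn : 0 < n) (hΦ : 0 < Φ)
    {v y W : Fin n → ℝ → ℝ}
    (hv : ∀ a, IntervalIntegrable (v a) volume 0 T)
    (hy : ∀ a, IntervalIntegrable (y a) volume 0 T)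
    (hv0 : ∀ a, ∀ᵐ s, s ∈ Set.Ioo 0 T → 0 ≤ v a s)
    (hy0 : ∀ a, ∀ᵐ s, s ∈ Set.Ioo 0 T → 0 ≤ y a s)
    (hW : ∀ a s, W a s = κ + (∫ r in (0:ℝ)..s, y a r) + 1 / Φ * (1 - ∫ r in (0:ℝ)..s, v a r))
    (hstart : θ ≤ κ + 1 / Φ)
    (hmin : ∀ᵐ s, s ∈ Set.Ioo 0 T →
      (∀ b, θ ≤ W b s) ∨ ∃ a, (∀ b, W a s ≤ W b s) ∧ W a s ≤ θ ∧ 1 / Φ * v a s ≤ y a s) :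
    ∀ a, θ ≤ W a T := by
  have : Nonempty (Fin n) := ⟨⟨0, hn⟩⟩
  set G : ℝ → ℝ := fun s => ∑ a, 1 / Φ * ∫ r in (0:ℝ)..s, v a r with hG
  set F : ℝ → ℝ := fun s => min θ (Finset.univ.inf' Finset.univ_nonempty fun a => W a s) with hF
  have hFle : ∀ a s, F s ≤ W a s := fun a s =>
    (min_le_right _ _).trans (Finset.inf'_le (fun a => W a s) (Finset.mem_univ a))
  have hFθ : ∀ s, F s ≤ θ := fun s => min_le_left _ _
  have hleF : ∀ s x, x ≤ θ → (∀ a, x ≤ W a s) → x ≤ F s := fun s x h1 h2 =>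
    le_min h1 (Finset.le_inf' _ _ fun a _ => h2 a)
  have hVm := fun a => monotoneOn_integral (hv a) (hv0 a)
  have hYm := fun a => monotoneOn_integral (hy a) (hy0 a)
  have hΦ' : 0 < 1 / Φ := by positivity
  have hGm : MonotoneOn G (Set.Icc 0 T) := by
    intro r hr s hs hrs
    exact Finset.sum_le_sum fun a _ => mul_le_mul_of_nonneg_left (hVm a hr hs hrs) hΦ'.le
  have hmono : MonotoneOn (fun s => F s + G s) (Set.Icc 0 T) := by
    intro r hr s hs hrs
    have h1 : F r + G r - G s ≤ F s := by
      refine hleF _ _ ?_ fun a => ?_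
      · linarith [hFθ r, hGm hr hs hrs]
      · have h2 : 1 / Φ * (∫ q in (0:ℝ)..s, v a q) - 1 / Φ * (∫ q in (0:ℝ)..r, v a q) ≤ G s - G r := by
          rw [hG]
          simp only
          rw [← Finset.sum_sub_distrib]
          exact Finset.single_le_sum (f := fun a => 1 / Φ * (∫ q in (0:ℝ)..s, v a q) -
              1 / Φ * (∫ q in (0:ℝ)..r, v a q)) (fun b _ => sub_nonneg.2
              (mul_le_mul_of_nonneg_left (hVm b hr hs hrs) hΦ'.le)) (Finset.mem_univ a)
        have h3 := hYm a hr hs hrs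
        have h4 := hFle a r
        simp only at h3
        rw [hW] at h4 ⊢
        linarith
    simp only
    linarith
  have hint : ∀ a ∈ Finset.univ, IntervalIntegrable (fun s => 1 / Φ * v a s) volume 0 T :=
    fun a _ => (hv a).const_mul _
  have key := integral_le_of_le_deriv hT hmono (g := fun s => ∑ a, 1 / Φ * v a s) (by
      have := IntervalIntegrable.sum Finset.univ hint
      simpa [Finset.sum_fn] using this) ?_
  · rw [intervalIntegral.integral_finsetSum hint] at key
    simp only [intervalIntegral.integral_const_mul] at key
    have hG0 : G 0 = 0 := by simp [hG]
    have hF0 : θ ≤ F 0 := hleF _ _ le_rfl fun a => by rw [hW]; simpa using hstart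
    intro a
    have := hFle a T
    have hGT : G T = ∑ a, 1 / Φ * ∫ r in (0:ℝ)..T, v a r := rfl
    linarith
  · filter_upwards [hmin, hmono.ae_differentiableWithinAt_of_mem,
      ae_all_iff.2 fun a => ae_hasDerivAt_integral_Ioo (hy a),
      ae_all_iff.2 fun a => ae_hasDerivAt_integral_Ioo (hv a)] with s h1 h2 h3 h4 hs
    have hd : DifferentiableAt ℝ (fun s => F s + G s) s :=
      (h2 ⟨hs.1.le, hs.2.le⟩).differentiableAt (Icc_mem_nhds hs.1 hs.2)
    have hGd : HasDerivAt G (∑ a, 1 / Φ * v a s) s :=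
      HasDerivAt.fun_sum fun a _ => (h4 a hs).const_mul _
    have hFd : HasDerivAt F (deriv (fun s => F s + G s) s - ∑ a, 1 / Φ * v a s) s := by
      have := hd.hasDerivAt.sub hGd
      exact this.congr_of_eventuallyEq (Filter.Eventually.of_forall fun r => by simp)
    suffices h : 0 ≤ deriv (fun s => F s + G s) s - ∑ a, 1 / Φ * v a s by linarith
    rcases h1 hs with h | ⟨a, ha, haθ, hay⟩
    · have hFs : F s = θ := le_antisymm (hFθ s) (hleF _ _ le_rfl h)
      have hmax : IsLocalMax F s := Filter.Eventually.of_forall fun r => by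
        rw [hFs]; exact hFθ r
      exact (hmax.hasDerivAt_eq_zero hFd).ge
    · have hFs : F s = W a s := le_antisymm (hFle a s) (hleF _ _ haθ ha)
      have hWd : HasDerivAt (W a) (y a s - 1 / Φ * v a s) s := by
        have e : W a = fun s => κ + (∫ r in (0:ℝ)..s, y a r) +
            1 / Φ * (1 - ∫ r in (0:ℝ)..s, v a r) := funext (hW a)
        rw [e]
        have := ((h3 a hs).const_add κ).add (((h4 a hs).const_sub 1).const_mul (1 / Φ))
        exact this.congr_deriv (by ring)
      have hloc : IsLocalMin (fun r => W a r - F r) s := Filter.Eventually.of_forall fun r => by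
        simp only [hFs, sub_self]
        exact sub_nonneg.2 (hFle a r)
      have := hloc.hasDerivAt_eq_zero (hWd.sub hFd)
      linarith

/-! ### Pointwise and counting estimates -/

/-- The Nashian rule spends the item on the agents maximizing `v / U`, so it beats every feasible
reference allocation in terms of `∑ v x / U`. -/
lemma nash_pointwise {n : ℕ} {v xN xE u xs : Fin n → ℝ} (hv : ∀ a, 0 ≤ v a) (hu : ∀ a, 0 < u a)
    (hN : ∀ a, 0 ≤ xN a) (hE : ∀ a, 0 ≤ xE a) (hN1 : ∑ a, xN a = 1)
    (hnash : ∀ a b, 0 < xN a → v a * u b ≥ v b * u a)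
    (hs : ∀ a, 0 ≤ xs a) (hs1 : ∑ a, xs a ≤ 1) :
    ∑ a, v a * xs a / u a ≤ ∑ a, v a * (xN a + xE a) / u a := by
  set D := ∑ a, v a / u a * xN a with hD
  have hb : ∀ b, v b / u b ≤ D := by
    intro b
    calc v b / u b = ∑ a, v b / u b * xN a := by rw [← Finset.mul_sum, hN1, mul_one]
      _ ≤ D := by
        refine Finset.sum_le_sum fun a _ => ?_
        rcases (hN a).eq_or_lt with h | h
        · simp [← h]
        · refine mul_le_mul_of_nonneg_right ?_ h.le
          rw [div_le_div_iff₀ (hu b) (hu a)]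
          exact hnash a b h
  have hD0 : 0 ≤ D := Finset.sum_nonneg fun a _ =>
    mul_nonneg (div_nonneg (hv a) (hu a).le) (hN a)
  calc ∑ a, v a * xs a / u a = ∑ a, v a / u a * xs a :=
        Finset.sum_congr rfl fun a _ => by ring
    _ ≤ ∑ a, D * xs a := Finset.sum_le_sum fun a _ => mul_le_mul_of_nonneg_right (hb a) (hs a)
    _ = D * ∑ a, xs a := by rw [Finset.mul_sum]
    _ ≤ D * 1 := mul_le_mul_of_nonneg_left hs1 hD0
    _ = D := mul_one D
    _ ≤ _ := by
      refine Finset.sum_le_sum fun a _ => ?_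
      have : 0 ≤ v a / u a * xE a := mul_nonneg (div_nonneg (hv a) (hu a).le) (hE a)
      have e : v a * (xN a + xE a) / u a = v a / u a * xN a + v a / u a * xE a := by ring
      linarith

/-- If fewer than `Φ` agents are below level `θ`, the egalitarian copy, being shared among them,
gives some minimizer a share of at least `1 / Φ`, which offsets the decay rate of the regularizer. -/
lemma exists_large_share_s11 {n : ℕ} {θ Φ : ℝ} (hΦ : 0 < Φ) {xE W : Fin n → ℝ}
    (hE : ∀ a, 0 ≤ xE a) (hE1 : ∑ a, xE a = 1)
    (hegal : ∀ a, 0 < xE a → ∀ b, W a ≤ W b)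
    (hcard : ((Finset.univ.filter fun b => W b < θ).card : ℝ) < Φ) :
    (∀ b, θ ≤ W b) ∨ ∃ a, (∀ b, W a ≤ W b) ∧ W a ≤ θ ∧ 1 / Φ ≤ xE a := by
  by_cases h : ∀ b, θ ≤ W b
  · exact Or.inl h
  right
  push Not at h
  obtain ⟨b₀, hb₀⟩ := h
  have hlow : ∀ a, 0 < xE a → W a < θ := fun a ha => (hegal a ha b₀).trans_lt hb₀
  by_contra! hcon
  have hsmall : ∀ a, xE a ≤ 1 / Φ := by
    intro a
    rcases (hE a).eq_or_lt with h | h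
    · rw [← h]; positivity
    · exact (hcon a (hegal a h) (hlow a h).le).le
  have hsum : ∑ a ∈ Finset.univ.filter (fun b => W b < θ), xE a = ∑ a, xE a := by
    refine Finset.sum_subset (Finset.filter_subset _ _) fun a _ ha => ?_
    by_contra hne
    exact ha (by simpa using hlow a (lt_of_le_of_ne (hE a) (Ne.symm hne)))
  have hle := Finset.sum_le_card_nsmul (Finset.univ.filter fun b => W b < θ) xE (1 / Φ)
    fun a _ => hsmall a
  rw [hsum, hE1, nsmul_eq_mul, mul_one_div, le_div_iff₀ hΦ] at hle
  linarith

/-- Fewer than `Φ` agents can have regularized utility below `μ / (6Φ)`. At most `Φ / 2` of them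
have target `w ≤ μ` (Markov's inequality for `w ^ p`). Any other one has a small regularizer, hence
has already seen most of its target (`w' ≥ 5μ/6`), so `w' / u ≥ 5Φ`; the bound on `∑ w' / u` leaves
room for at most `2Φ / 5` of these. -/
lemma card_low_lt {n : ℕ} {Φ μ p : ℝ} (hΦ : 0 < Φ) (hμ : 0 < μ) (hp : p ≤ -1)
    {u r w w' : Fin n → ℝ} (hu : ∀ a, 0 < u a) (hr : ∀ a, 0 ≤ r a) (hw : ∀ a, 0 < w a)
    (hw' : ∀ a, 0 ≤ w' a) (hww' : ∀ a, w a - Φ * r a ≤ w' a)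
    (hnash : ∑ a, w' a / u a ≤ 2 * Φ ^ 2) (hH : ∑ a, w a ^ p = Φ / 2 * μ ^ p) :
    ((Finset.univ.filter fun b => u b + r b < μ / (6 * Φ)).card : ℝ) < Φ := by
  have hμp : 0 < μ ^ p := rpow_pos_of_pos hμ p
  have hone : ∀ b ∈ Finset.univ.filter (fun b => u b + r b < μ / (6 * Φ)),
      (1:ℝ) ≤ w b ^ p / μ ^ p + w' b / u b / (5 * Φ) := by
    intro b hb
    simp only [Finset.mem_filter, Finset.mem_univ, true_and] at hb
    have h1 : 0 ≤ w b ^ p / μ ^ p := div_nonneg (rpow_pos_of_pos (hw b) p).le hμp.le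
    have h2 : 0 ≤ w' b / u b / (5 * Φ) := div_nonneg (div_nonneg (hw' b) (hu b).le) (by positivity)
    rcases le_total (w b) μ with h | h
    · have : 1 ≤ w b ^ p / μ ^ p := by
        rw [one_le_div hμp]
        exact rpow_le_rpow_of_nonpos (hw b) h (by linarith)
      linarith
    · have hb1 : (u b + r b) * (6 * Φ) < μ := by rwa [lt_div_iff₀ (by positivity)] at hb
      have : 1 ≤ w' b / u b / (5 * Φ) := by
        rw [div_div, one_le_div (mul_pos (hu b) (by positivity))]
        have := hww' b
        have h3 : 0 ≤ Φ * r b := mul_nonneg hΦ.le (hr b)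
        have h4 : 0 ≤ Φ * u b := mul_nonneg hΦ.le (hu b).le
        nlinarith
      linarith
  have hsum := Finset.card_nsmul_le_sum _ _ _ hone
  rw [nsmul_eq_mul, mul_one] at hsum
  have hsub : ∑ b ∈ Finset.univ.filter (fun b => u b + r b < μ / (6 * Φ)),
      (w b ^ p / μ ^ p + w' b / u b / (5 * Φ)) ≤ ∑ b, (w b ^ p / μ ^ p + w' b / u b / (5 * Φ)) := by
    refine Finset.sum_le_sum_of_subset_of_nonneg (Finset.filter_subset _ _) fun b _ _ => ?_
    exact add_nonneg (div_nonneg (rpow_pos_of_pos (hw b) p).le hμp.le)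
      (div_nonneg (div_nonneg (hw' b) (hu b).le) (by positivity))
  replace hsub := hsum.trans hsub
  rw [Finset.sum_add_distrib, ← Finset.sum_div, ← Finset.sum_div, hH] at hsub
  have e1 : Φ / 2 * μ ^ p / μ ^ p = Φ / 2 := by field_simp
  have e2 : (∑ b, w' b / u b) / (5 * Φ) ≤ 2 / 5 * Φ := by
    rw [div_le_iff₀ (by positivity)]
    nlinarith
  linarith

/-- Passage to `p`-means. Agents with `w ≤ μ` have `u ≥ w / (6Φ)`; for the others
`u ^ p ≤ θ ^ (p+1) / u` with `θ = μ / (6Φ)`, and `∑ w / u ≤ 2Φ²` controls the sum. The condition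
`p ≤ -1` makes `x ^ (p+1)` nonincreasing. -/
lemma pmean_ge {n : ℕ} (hn : 0 < n) {Φ μ p : ℝ} (hΦ : 0 < Φ) (hμ : 0 < μ) (hp : p ≤ -1)
    {u w : Fin n → ℝ} (hw : ∀ a, 0 < w a) (hu : ∀ a, μ / (6 * Φ) ≤ u a)
    (hnash : ∑ a, w a / u a ≤ 2 * Φ ^ 2) (hH : ∑ a, w a ^ p = Φ / 2 * μ ^ p) :
    1 / 12 * ((1 / (n : ℝ)) * ∑ a, w a ^ p) ^ (1 / p) / Φ ≤
      ((1 / (n : ℝ)) * ∑ a, u a ^ p) ^ (1 / p) := by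
  have : Nonempty (Fin n) := ⟨⟨0, hn⟩⟩
  set θ := μ / (6 * Φ) with hθ
  have hθ0 : 0 < θ := by positivity
  have hu0 : ∀ a, 0 < u a := fun a => hθ0.trans_le (hu a)
  have hp0 : p < 0 := by linarith
  have hθp : θ ^ p = (6 * Φ) ^ (-p) * μ ^ p := by
    rw [hθ, div_rpow hμ.le (by positivity), rpow_neg (by positivity)]
    field_simp
  have hterm : ∀ a, u a ^ p ≤ (6 * Φ) ^ (-p) * w a ^ p + θ ^ (p + 1) / μ * (w a / u a) := by
    intro a
    have h1 : 0 ≤ (6 * Φ) ^ (-p) * w a ^ p := mul_nonneg (rpow_nonneg (by positivity) _)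
      (rpow_pos_of_pos (hw a) p).le
    have h2 : 0 ≤ θ ^ (p + 1) / μ * (w a / u a) := mul_nonneg
      (div_nonneg (rpow_nonneg hθ0.le _) hμ.le) (div_nonneg (hw a).le (hu0 a).le)
    rcases le_total (w a) μ with h | h
    · have : u a ^ p ≤ (w a / (6 * Φ)) ^ p := by
        refine rpow_le_rpow_of_nonpos (div_pos (hw a) (by positivity)) ?_ hp0.le
        refine le_trans ?_ (hu a)
        exact div_le_div_of_nonneg_right h (by positivity)
      rw [div_rpow (hw a).le (by positivity), div_eq_mul_inv, ← rpow_neg (by positivity),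
        mul_comm] at this
      linarith
    · have e : u a ^ p = u a ^ (p + 1) * (1 / u a) := by
        rw [rpow_add_one (hu0 a).ne']
        field_simp [(hu0 a).ne']
      have h3 : u a ^ (p + 1) ≤ θ ^ (p + 1) :=
        rpow_le_rpow_of_nonpos hθ0 (hu a) (by linarith)
      have h4 : 1 / u a ≤ w a / μ / u a :=
        div_le_div_of_nonneg_right ((one_le_div hμ).2 h) (hu0 a).le
      have : u a ^ p ≤ θ ^ (p + 1) * (w a / μ / u a) := by
        rw [e]
        exact mul_le_mul h3 h4 (one_div_nonneg.2 (hu0 a).le) (rpow_nonneg hθ0.le _)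
      have e2 : θ ^ (p + 1) * (w a / μ / u a) = θ ^ (p + 1) / μ * (w a / u a) := by ring
      linarith
  have hHpos : 0 < ∑ a, w a ^ p :=
    Finset.sum_pos (fun a _ => rpow_pos_of_pos (hw a) p) Finset.univ_nonempty
  have hupos : 0 < ∑ a, u a ^ p :=
    Finset.sum_pos (fun a _ => rpow_pos_of_pos (hu0 a) p) Finset.univ_nonempty
  have hsum : ∑ a, u a ^ p ≤ (12 * Φ) ^ (-p) * ∑ a, w a ^ p := by
    have h6 : 0 < (6 * Φ) ^ (-p) := rpow_pos_of_pos (by positivity) _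
    have h1 : ∑ a, u a ^ p ≤ (6 * Φ) ^ (-p) * ∑ a, w a ^ p
        + θ ^ (p + 1) / μ * ∑ a, w a / u a := by
      rw [Finset.mul_sum, Finset.mul_sum, ← Finset.sum_add_distrib]
      exact Finset.sum_le_sum fun a _ => hterm a
    have h2 : θ ^ (p + 1) / μ * ∑ a, w a / u a ≤ θ ^ (p + 1) / μ * (2 * Φ ^ 2) :=
      mul_le_mul_of_nonneg_left hnash (div_nonneg (rpow_nonneg hθ0.le _) hμ.le)
    have h3 : θ ^ (p + 1) / μ * (2 * Φ ^ 2) = 2 / 3 * ((6 * Φ) ^ (-p) * ∑ a, w a ^ p) := by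
      rw [rpow_add_one hθ0.ne', hθp, hH, hθ]
      field_simp
      norm_num
    have h4 : 2 * (6 * Φ) ^ (-p) ≤ (12 * Φ) ^ (-p) := by
      have e : (12 * Φ) = 2 * (6 * Φ) := by ring
      rw [e, mul_rpow (x := 2) (y := 6 * Φ) (by norm_num) (by positivity)]
      refine mul_le_mul_of_nonneg_right ?_ h6.le
      calc (2:ℝ) = 2 ^ (1:ℝ) := by simp
        _ ≤ 2 ^ (-p) := rpow_le_rpow_of_exponent_le (by norm_num) (by linarith)
    have h5 := mul_le_mul_of_nonneg_right h4 hHpos.le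
    have h7 : 0 < (6 * Φ) ^ (-p) * ∑ a, w a ^ p := mul_pos h6 hHpos
    linarith
  have hn' : (0:ℝ) < 1 / n := by positivity
  have hfin := rpow_le_rpow_of_nonpos (mul_pos hn' hupos)
    (mul_le_mul_of_nonneg_left hsum hn'.le) (one_div_neg.2 hp0).le
  refine le_trans (le_of_eq ?_) hfin
  rw [mul_left_comm, mul_rpow (rpow_nonneg (by positivity) _) (mul_pos hn' hHpos).le,
    ← rpow_mul (by positivity), show -p * (1 / p) = -1 by field_simp [hp0.ne], rpow_neg_one]
  field_simp

/-! ### Bounds on utilities and the theorem -/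

lemma intervalIntegrable_mul_of_bdd {v x : ℝ → ℝ} {T C : ℝ} (hT : 0 ≤ T)
    (hv : IntervalIntegrable v volume 0 T) (hx : Measurable x)
    (hb : ∀ᵐ s, s ∈ Set.Icc 0 T → 0 ≤ x s ∧ x s ≤ C) :
    IntervalIntegrable (fun s => v s * x s) volume 0 T := by
  rw [intervalIntegrable_iff_integrableOn_Icc_of_le hT] at hv ⊢
  refine Integrable.mul_bdd (c := C) hv hx.aestronglyMeasurable ?_
  refine (ae_restrict_iff' measurableSet_Icc).2 ?_
  filter_upwards [hb] with s hs hs'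
  rw [Real.norm_eq_abs, abs_of_nonneg (hs hs').1]
  exact (hs hs').2

lemma integral_mul_le {v x : ℝ → ℝ} {T C r t : ℝ} (hr : 0 ≤ r) (hrt : r ≤ t) (ht : t ≤ T)
    (hv : IntervalIntegrable v volume 0 T)
    (hv0 : ∀ᵐ s, s ∈ Set.Icc 0 T → 0 ≤ v s) (hx : Measurable x)
    (hb : ∀ᵐ s, s ∈ Set.Icc 0 T → 0 ≤ x s ∧ x s ≤ C) :
    ∫ s in r..t, v s * x s ≤ C * ∫ s in r..t, v s := by
  have hT : 0 ≤ T := hr.trans (hrt.trans ht)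
  have hsub : Set.uIcc r t ⊆ Set.uIcc 0 T := by
    rw [Set.uIcc_of_le hT, Set.uIcc_of_le hrt]
    exact Set.Icc_subset_Icc hr ht
  rw [← intervalIntegral.integral_const_mul]
  refine intervalIntegral.integral_mono_ae_restrict hrt
    ((intervalIntegrable_mul_of_bdd hT hv hx hb).mono_set hsub)
    ((hv.mono_set hsub).const_mul C) ?_
  refine (ae_restrict_iff' measurableSet_Icc).2 ?_
  filter_upwards [hv0, hb] with s h1 h2 hs
  have hs' : s ∈ Set.Icc 0 T := ⟨hr.trans hs.1, hs.2.trans ht⟩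
  have := mul_le_mul_of_nonneg_left (h2 hs').2 (h1 hs')
  linarith

lemma log_le_two_log {n : ℕ} (hn : 2 ≤ n) {x : ℝ} (hx : 0 < x) (hx' : x ≤ 1 / (n:ℝ) + 2) :
    log x - log (1 / (n:ℝ)) ≤ 2 * log ((n:ℝ) + 1) := by
  have hn0 : (0:ℝ) < n := by positivity
  rw [← log_div hx.ne' (by positivity), show 2 * log ((n:ℝ) + 1) = log (((n:ℝ) + 1) ^ 2) by
    rw [log_pow]; norm_num]
  refine log_le_log (by positivity) ?_
  have : x / (1 / (n:ℝ)) = x * n := by field_simp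
  rw [this]
  calc x * n ≤ (1 / (n:ℝ) + 2) * n := mul_le_mul_of_nonneg_right hx' hn0.le
    _ = 1 + 2 * n := by field_simp
    _ ≤ _ := by nlinarith

theorem stmt_11 :
    ∃ c : ℝ, 0 < c ∧
    ∀ (n : ℕ), 2 ≤ n → ∀ (T : ℝ), 0 < T →
    ∀ (v : Fin n → ℝ → ℝ),
      (∀ a, Measurable (v a)) →
      (∀ a, ∀ᵐ s ∂(volume.restrict (Set.Icc (0:ℝ) T)), 0 ≤ v a s) →
      (∀ a, IntegrableOn (v a) (Set.Icc (0:ℝ) T)) →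
      (∀ a, ∫ s in (0:ℝ)..T, v a s = 1) →
    ∀ (p : ℝ), p ≤ -1 →
    ∀ (xN xE : Fin n → ℝ → ℝ),
      (∀ a, Measurable (xN a)) → (∀ a, Measurable (xE a)) →
      (∀ᵐ s ∂(volume.restrict (Set.Icc (0:ℝ) T)),
        (∀ a, 0 ≤ xN a s) ∧ (∀ a, 0 ≤ xE a s) ∧
        (∑ a, xN a s = 1) ∧ (∑ a, xE a s = 1)) →
    ∀ (U : Fin n → ℝ → ℝ),
      (∀ a t, U a t =
        1 / (n : ℝ) + ∫ s in (0:ℝ)..t, v a s * (xN a s + xE a s)) →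
    ∀ (R : Fin n → ℝ → ℝ),
      (∀ a t, R a t = (1 / Real.sqrt ((n : ℝ) * Real.log ((n : ℝ) + 1))) *
        (1 - ∫ s in (0:ℝ)..t, v a s)) →
      (∀ᵐ s ∂(volume.restrict (Set.Icc (0:ℝ) T)),
        ∀ a b, 0 < xN a s → v a s * U b s ≥ v b s * U a s) →
      (∀ᵐ s ∂(volume.restrict (Set.Icc (0:ℝ) T)),
        ∀ a, 0 < xE a s → ∀ b, U a s + R a s ≤ U b s + R b s) →
    ∀ (xstar : Fin n → ℝ → ℝ),
      (∀ a, Measurable (xstar a)) →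
      (∀ᵐ s ∂(volume.restrict (Set.Icc (0:ℝ) T)),
        (∀ a, 0 ≤ xstar a s) ∧ ∑ a, xstar a s ≤ 1) →
    ∀ (Ustar : Fin n → ℝ),
      (∀ a, Ustar a = ∫ s in (0:ℝ)..T, v a s * xstar a s) →
      (∀ a, 0 < Ustar a) →
    ((1 / (n : ℝ)) * ∑ a, (U a T) ^ p) ^ (1 / p) ≥
      c * ((1 / (n : ℝ)) * ∑ a, (Ustar a) ^ p) ^ (1 / p) /
        Real.sqrt ((n : ℝ) * Real.log ((n : ℝ) + 1)) := by
  refine ⟨1 / 12, by norm_num, ?_⟩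
  intro n hn T hT v _ hv0 hvint hv1 p hp xN xE hxNm hxEm hx U hU R hR hnash hegal xs hxsm hxs
    w hw hwpos
  have hnpos : 0 < n := by omega
  have hn0 : (0:ℝ) < n := by exact_mod_cast hnpos
  have : Nonempty (Fin n) := ⟨⟨0, hnpos⟩⟩
  set Φ := √((n:ℝ) * log ((n:ℝ) + 1)) with hΦdef
  have hlogpos : 0 < log ((n:ℝ) + 1) := log_pos (by linarith)
  have hΦ : 0 < Φ := sqrt_pos.2 (mul_pos hn0 hlogpos)
  have hΦ2 : Φ ^ 2 = n * log ((n:ℝ) + 1) := sq_sqrt (mul_pos hn0 hlogpos).le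
  have hΦn : Φ ≤ n := by
    refine sqrt_le_iff.2 ⟨hn0.le, ?_⟩
    have := log_le_sub_one_of_pos (show (0:ℝ) < n + 1 by linarith)
    nlinarith
  simp only [ae_restrict_iff' measurableSet_Icc] at hv0 hx hnash hegal hxs
  have hv : ∀ a, IntervalIntegrable (v a) volume 0 T := fun a =>
    (intervalIntegrable_iff_integrableOn_Icc_of_le hT.le).2 (hvint a)
  have hle1 : ∀ (f : Fin n → ℝ), (∀ a, 0 ≤ f a) → ∑ a, f a ≤ 1 → ∀ a, f a ≤ 1 :=
    fun f h0 h1 a => (Finset.single_le_sum (fun b _ => h0 b) (Finset.mem_univ a)).trans h1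
  have hxb : ∀ a, ∀ᵐ s, s ∈ Set.Icc 0 T → 0 ≤ xN a s + xE a s ∧ xN a s + xE a s ≤ 2 := by
    intro a
    filter_upwards [hx] with s hs hs'
    obtain ⟨h1, h2, h3, h4⟩ := hs hs'
    have := hle1 _ h1 h3.le a
    have := hle1 _ h2 h4.le a
    exact ⟨add_nonneg (h1 a) (h2 a), by linarith⟩
  have hxsb : ∀ a, ∀ᵐ s, s ∈ Set.Icc 0 T → 0 ≤ xs a s ∧ xs a s ≤ 1 := by
    intro a
    filter_upwards [hxs] with s hs hs'
    exact ⟨(hs hs').1 a, hle1 _ (hs hs').1 (hs hs').2 a⟩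
  have hy : ∀ a, IntervalIntegrable (fun s => v a s * (xN a s + xE a s)) volume 0 T := fun a =>
    intervalIntegrable_mul_of_bdd hT.le (hv a) ((hxNm a).add (hxEm a)) (hxb a)
  have hz : ∀ a, IntervalIntegrable (fun s => v a s * xs a s) volume 0 T := fun a =>
    intervalIntegrable_mul_of_bdd hT.le (hv a) (hxsm a) (hxsb a)
  have hy0 : ∀ a, ∀ᵐ s, s ∈ Set.Ioo 0 T → 0 ≤ v a s * (xN a s + xE a s) := by
    intro a
    filter_upwards [hv0 a, hxb a] with s h1 h2 hs
    have hs' := Set.Ioo_subset_Icc_self hs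
    exact mul_nonneg (h1 hs') (h2 hs').1
  have hz0 : ∀ a, ∀ᵐ s, s ∈ Set.Ioo 0 T → 0 ≤ v a s * xs a s := by
    intro a
    filter_upwards [hv0 a, hxsb a] with s h1 h2 hs
    have hs' := Set.Ioo_subset_Icc_self hs
    exact mul_nonneg (h1 hs') (h2 hs').1
  have hv0' : ∀ a, ∀ᵐ s, s ∈ Set.Ioo 0 T → 0 ≤ v a s := by
    intro a
    filter_upwards [hv0 a] with s h1 hs
    exact h1 (Set.Ioo_subset_Icc_self hs)
  have hVle : ∀ a, ∀ t ∈ Set.Icc 0 T, ∫ s in (0:ℝ)..t, v a s ≤ 1 := by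
    intro a t ht
    rw [← hv1 a]
    exact monotoneOn_integral (hv a) (hv0' a) ht ⟨hT.le, le_rfl⟩ ht.2
  have hUpos : ∀ a, ∀ t ∈ Set.Icc 0 T, 0 < U a t := by
    intro a t ht
    have := monotoneOn_integral (hy a) (hy0 a) ⟨le_rfl, hT.le⟩ ht ht.1
    simp only [intervalIntegral.integral_same] at this
    rw [hU]
    have : 0 < 1 / (n:ℝ) := by positivity
    linarith
  have hUle : ∀ a, ∀ t ∈ Set.Icc 0 T, U a t ≤ 1 / (n:ℝ) + 2 := by
    intro a t ht
    have h1 := integral_mul_le le_rfl ht.1 ht.2 (hv a) (hv0 a) ((hxNm a).add (hxEm a)) (hxb a)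
    have h2 := hVle a t ht
    rw [hU]
    simp only [Pi.add_apply] at h1
    linarith
  have hRnn : ∀ a, ∀ t ∈ Set.Icc 0 T, 0 ≤ R a t := by
    intro a t ht
    rw [hR]
    exact mul_nonneg (by positivity) (sub_nonneg.2 (hVle a t ht))
  have hNash : ∀ t ∈ Set.Icc 0 T,
      ∑ a, (∫ s in (0:ℝ)..t, v a s * xs a s) / U a t ≤ 2 * Φ ^ 2 := by
    intro t ht
    have hsub : Set.uIcc 0 t ⊆ Set.uIcc 0 T := by
      rw [Set.uIcc_of_le hT.le, Set.uIcc_of_le ht.1]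
      exact Set.Icc_subset_Icc le_rfl ht.2
    have hIoo : Set.Ioo 0 t ⊆ Set.Ioo 0 T := Set.Ioo_subset_Ioo le_rfl ht.2
    have h := sum_ratio_le_sum_log ht.1 (show 0 < 1 / (n:ℝ) by positivity)
      (fun a => (hy a).mono_set hsub) (fun a => (hz a).mono_set hsub)
      (fun a => (hy0 a).mono fun s hs hs' => hs (hIoo hs'))
      (fun a => (hz0 a).mono fun s hs hs' => hs (hIoo hs')) hU (by
        filter_upwards [ae_all_iff.2 hv0, hx, hnash, hxs] with s h1 h2 h3 h4 hs
        have hs' := Set.Ioo_subset_Icc_self (hIoo hs)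
        obtain ⟨a1, a2, a3, a4⟩ := h2 hs'
        exact nash_pointwise (fun a => h1 a hs') (fun a => hUpos a s hs') a1 a2 a3
          (h3 hs') (h4 hs').1 (h4 hs').2)
    -- `U` stays between `1/n` and `1/n + 2`, so each logarithm grows by at most `2 log (n + 1)`.
    refine h.trans ?_
    calc ∑ a, (log (U a t) - log (1 / (n:ℝ))) ≤ ∑ _a : Fin n, 2 * log ((n:ℝ) + 1) :=
          Finset.sum_le_sum fun a _ => log_le_two_log hn (hUpos a t ht) (hUle a t ht)
      _ = 2 * Φ ^ 2 := by
        rw [hΦ2, Finset.sum_const, Finset.card_univ, Fintype.card_fin, nsmul_eq_mul]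
        ring
  have hwle : ∀ a, w a ≤ 1 := by
    intro a
    have := integral_mul_le le_rfl hT.le le_rfl (hv a) (hv0 a) (hxsm a) (hxsb a)
    rw [hv1 a] at this
    rw [hw a]
    linarith
  have hww' : ∀ a, ∀ t ∈ Set.Icc 0 T,
      w a - Φ * R a t ≤ ∫ s in (0:ℝ)..t, v a s * xs a s := by
    intro a t ht
    have hsub : Set.uIcc 0 t ⊆ Set.uIcc 0 T := by
      rw [Set.uIcc_of_le hT.le, Set.uIcc_of_le ht.1]
      exact Set.Icc_subset_Icc le_rfl ht.2
    have hsub' : Set.uIcc t T ⊆ Set.uIcc 0 T := by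
      rw [Set.uIcc_of_le hT.le, Set.uIcc_of_le ht.2]
      exact Set.Icc_subset_Icc ht.1 le_rfl
    have h1 := intervalIntegral.integral_add_adjacent_intervals
      ((hz a).mono_set hsub) ((hz a).mono_set hsub')
    have h2 := intervalIntegral.integral_add_adjacent_intervals
      ((hv a).mono_set hsub) ((hv a).mono_set hsub')
    have h3 := integral_mul_le ht.1 ht.2 le_rfl (hv a) (hv0 a) (hxsm a) (hxsb a)
    have h4 : Φ * R a t = 1 - ∫ s in (0:ℝ)..t, v a s := by
      rw [hR]
      field_simp
    rw [hv1 a] at h2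
    rw [h4, hw a]
    linarith
  -- `μ` is the level at which Markov's inequality leaves at most `Φ / 2` agents with `w a < μ`.
  have hHpos : 0 < ∑ a, w a ^ p :=
    Finset.sum_pos (fun a _ => rpow_pos_of_pos (hwpos a) p) Finset.univ_nonempty
  have hp0 : p < 0 := by linarith
  set μ := (2 * (∑ a, w a ^ p) / Φ) ^ (1 / p) with hμdef
  have hμ : 0 < μ := rpow_pos_of_pos (by positivity) _
  have hH : ∑ a, w a ^ p = Φ / 2 * μ ^ p := by
    rw [hμdef, ← rpow_mul (by positivity), one_div_mul_cancel hp0.ne, rpow_one]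
    field_simp
  have hμ1 : μ ≤ 1 := by
    refine rpow_le_one_of_one_le_of_nonpos ?_ (one_div_neg.2 hp0).le
    rw [one_le_div hΦ]
    have h1 : ∑ _a : Fin n, (1:ℝ) ≤ ∑ a, w a ^ p := Finset.sum_le_sum fun a _ =>
      one_le_rpow_of_pos_of_le_one_of_nonpos (hwpos a) (hwle a) hp0.le
    simp only [Finset.sum_const, Finset.card_univ, Fintype.card_fin, nsmul_eq_mul, mul_one] at h1
    linarith
  have hcard : ∀ t ∈ Set.Icc 0 T,
      ((Finset.univ.filter fun b => U b t + R b t < μ / (6 * Φ)).card : ℝ) < Φ := by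
    intro t ht
    refine card_low_lt hΦ hμ hp (fun a => hUpos a t ht) (fun a => hRnn a t ht) hwpos
      (fun a => ?_) (fun a => hww' a t ht) (hNash t ht) hH
    have := monotoneOn_integral (hz a) (hz0 a) ⟨le_rfl, hT.le⟩ ht ht.1
    simpa using this
  have hfinal : ∀ a, μ / (6 * Φ) ≤ U a T + R a T := by
    refine regularized_min_ge (W := fun a t => U a t + R a t) hT.le hnpos hΦ hv hy hv0' hy0
      (κ := 1 / (n:ℝ)) (fun a s => by rw [hU, hR]) ?_ ?_
    · have h1 : μ / (6 * Φ) ≤ 1 / Φ := by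
        rw [div_le_div_iff₀ (by positivity) hΦ]
        nlinarith
      have : 0 < 1 / (n:ℝ) := by positivity
      linarith
    · filter_upwards [ae_all_iff.2 hv0, hx, hegal] with s h1 h2 h3 hs
      have hs' := Set.Ioo_subset_Icc_self hs
      obtain ⟨a1, a2, a3, a4⟩ := h2 hs'
      rcases exists_large_share_s11 hΦ a2 a4 (h3 hs') (hcard s hs') with h | ⟨a, b1, b2, b3⟩
      · exact Or.inl h
      · refine Or.inr ⟨a, b1, b2, ?_⟩
        rw [mul_comm]
        exact mul_le_mul_of_nonneg_left (by linarith [a1 a]) (h1 a hs')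
  refine pmean_ge hnpos hΦ hμ hp hwpos (fun a => ?_) ?_ hH
  -- The regularizer vanishes at time `T`.
  · have h := hfinal a
    rw [hR a T, hv1 a] at h
    simpa using h
  · have h := hNash T ⟨hT.le, le_rfl⟩
    simpa only [hw] using h
end
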